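/- (Hadamard quotient theorem.) Let (a_n) and (b_n) be sequences of complex numbers such that the formal power series Σ_{n≥0} a_n x^n and Σ_{n≥0} b_n x^n each represent rational functions. Suppose that b_n ≠ 0 for all n ≥ 0 and that for every n the quotient a_n / b_n is a (rational) integer. Then the formal power series Σ_{n≥0} (a_n / b_n) x^n also represents a rational function; equivalently, the integer sequence (a_n / b_n) is a linear recurrence sequence. -/

import Mathlib

/-- A formal power series `∑ sₙ xⁿ` over `ℂ` represents a rational function if there
are polynomials `P, Q` with `Q` of nonzero constant term such that
`Q(x) · ∑ sₙ xⁿ = P(x)` as formal power series. -/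
def RepresentsRational (s : ℕ → ℂ) : Prop :=
  ∃ P Q : Polynomial ℂ, Q.coeff 0 ≠ 0 ∧
    (Q : PowerSeries ℂ) * PowerSeries.mk s = (P : PowerSeries ℂ)

namespace HadamardQuotient

open Polynomial Filter

/-! ### Linear recurrences and the shift operator -/

section Recurrence

/-- The shift operator on sequences. -/
def shift (R M : Type*) [CommRing R] [AddCommGroup M] [Module R M] : Module.End R (ℕ → M) :=
  LinearMap.funLeft R M Nat.succ

section Module

variable {R M : Type*} [CommRing R] [AddCommGroup M] [Module R M]

lemma shift_apply (s : ℕ → M) (n : ℕ) : shift R M s n = s (n + 1) := rfl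

lemma shift_pow_apply (i : ℕ) (s : ℕ → M) (n : ℕ) : (shift R M ^ i) s n = s (n + i) := by
  induction i generalizing n with
  | zero => simp
  | succ i ih =>
    rw [pow_succ', Module.End.mul_apply, shift_apply, ih]
    congr 1; ring

lemma aeval_shift_apply (g : R[X]) (s : ℕ → M) (n : ℕ) :
    aeval (shift R M) g s n = g.sum fun i r => r • s (n + i) := by
  rw [aeval_eq_sum_range' (Nat.lt_succ_self _), sum_over_range _ (by simp)]
  simp [LinearMap.sum_apply, Finset.sum_apply, shift_pow_apply]

lemma aeval_shift_apply_range {g : R[X]} {N : ℕ} (hN : g.natDegree ≤ N) (s : ℕ → M) (n : ℕ) :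
    aeval (shift R M) g s n = ∑ i ∈ Finset.range (N + 1), g.coeff i • s (n + i) := by
  rw [aeval_shift_apply, sum_over_range' _ (by simp) _ (Nat.lt_succ_of_le hN)]

lemma aeval_shift_eventually_zero (g : R[X]) {s : ℕ → M} (hs : ∀ᶠ n in atTop, s n = 0) :
    ∀ᶠ n in atTop, aeval (shift R M) g s n = 0 := by
  obtain ⟨n₀, h⟩ := eventually_atTop.1 hs
  refine eventually_atTop.2 ⟨n₀, fun n hn => ?_⟩
  rw [aeval_shift_apply, Polynomial.sum]
  exact Finset.sum_eq_zero fun i _ => by rw [h _ (by omega), smul_zero]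

lemma aeval_shift_eventually_zero_of_dvd {g h : R[X]} (hgh : g ∣ h) {s : ℕ → M}
    (hs : ∀ᶠ n in atTop, aeval (shift R M) g s n = 0) :
    ∀ᶠ n in atTop, aeval (shift R M) h s n = 0 := by
  obtain ⟨k, rfl⟩ := hgh
  rw [mul_comm, map_mul]
  exact aeval_shift_eventually_zero k hs

end Module

/-- A sequence is recurrent if some nonzero polynomial in the shift operator eventually kills it. -/
def IsRecurrent {F : Type*} [Field F] (s : ℕ → F) : Prop :=
  ∃ g : F[X], g ≠ 0 ∧ ∀ᶠ n in atTop, aeval (shift F F) g s n = 0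

section Field

variable {F : Type*} [Field F]

lemma IsRecurrent.congr {s t : ℕ → F} (hs : IsRecurrent s) (h : ∀ᶠ n in atTop, s n = t n) :
    IsRecurrent t := by
  obtain ⟨g, hg, hs⟩ := hs
  refine ⟨g, hg, ?_⟩
  have := aeval_shift_eventually_zero g (s := t - s) (h.mono fun n hn => by simp [hn])
  filter_upwards [hs, this] with n h1 h2
  rw [map_sub, Pi.sub_apply, h1, sub_zero] at h2
  exact h2

lemma IsRecurrent.add {s t : ℕ → F} (hs : IsRecurrent s) (ht : IsRecurrent t) :
    IsRecurrent (s + t) := by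
  obtain ⟨g, hg, hs⟩ := hs
  obtain ⟨h, hh, ht⟩ := ht
  refine ⟨g * h, mul_ne_zero hg hh, ?_⟩
  filter_upwards [aeval_shift_eventually_zero_of_dvd (dvd_mul_right g h) hs,
    aeval_shift_eventually_zero_of_dvd (dvd_mul_left h g) ht] with n h1 h2
  rw [map_add, Pi.add_apply, h1, h2, add_zero]

lemma isRecurrent_zero : IsRecurrent (0 : ℕ → F) :=
  ⟨1, one_ne_zero, by simp⟩

lemma IsRecurrent.sum {ι : Type*} (t : Finset ι) (f : ι → ℕ → F)
    (h : ∀ i ∈ t, IsRecurrent (f i)) : IsRecurrent (∑ i ∈ t, f i) := by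
  classical
  induction t using Finset.induction_on with
  | empty => simpa using isRecurrent_zero
  | insert i t hi ih =>
    rw [Finset.sum_insert hi]
    exact (h i (by simp)).add (ih fun j hj => h j (by simp [hj]))

/-- If `s` becomes recurrent after a nonzero polynomial in the shift, it is recurrent. -/
lemma IsRecurrent.of_aeval {s : ℕ → F} {g : F[X]} (hg : g ≠ 0)
    (h : IsRecurrent (aeval (shift F F) g s)) : IsRecurrent s := by
  obtain ⟨k, hk, h⟩ := h
  exact ⟨k * g, mul_ne_zero hk hg, by rwa [map_mul]⟩

lemma leadingCoeff_comp_X_add_one (P : F[X]) :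
    (P.comp (X + C 1)).leadingCoeff = P.leadingCoeff := by
  rw [leadingCoeff_comp (by rw [natDegree_X_add_C]; exact one_ne_zero),
    (monic_X_add_C (1 : F)).leadingCoeff, one_pow, mul_one]

lemma natDegree_comp_X_add_one (P : F[X]) : (P.comp (X + C 1)).natDegree = P.natDegree := by
  rw [natDegree_comp, natDegree_X_add_C, mul_one]

lemma natDegree_comp_X_add_one_sub_lt {P : F[X]} (h0 : P.natDegree ≠ 0) :
    (P.comp (X + C 1) - P).natDegree < P.natDegree := by
  have hP : P ≠ 0 := by rintro rfl; simp at h0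
  have h2 : P.comp (X + C 1) ≠ 0 := by
    rw [← leadingCoeff_ne_zero, leadingCoeff_comp_X_add_one]; exact leadingCoeff_ne_zero.2 hP
  have h3 := degree_sub_lt_left (by
    rw [degree_eq_natDegree h2, degree_eq_natDegree hP, natDegree_comp_X_add_one]) h2
    (leadingCoeff_comp_X_add_one P)
  by_cases h4 : P.comp (X + C 1) - P = 0
  · rw [h4]; simpa using Nat.pos_of_ne_zero h0
  · exact (natDegree_lt_natDegree h4 h3).trans_eq (natDegree_comp_X_add_one P)

lemma isRecurrent_eval_mul_pow (P : F[X]) (β : F) :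
    IsRecurrent (fun n : ℕ => P.eval (n : F) * β ^ n) := by
  induction hd : P.natDegree using Nat.strong_induction_on generalizing P with
  | _ d ih =>
    subst hd
    apply IsRecurrent.of_aeval (X_sub_C_ne_zero β)
    have key : aeval (shift F F) (X - C β) (fun n : ℕ => P.eval (n : F) * β ^ n)
        = fun n : ℕ => (C β * (P.comp (X + C 1) - P)).eval (n : F) * β ^ n := by
      funext n
      simp only [map_sub, aeval_X, aeval_C, LinearMap.sub_apply, Pi.sub_apply, shift_apply,
        Module.algebraMap_end_apply, Pi.smul_apply, smul_eq_mul, eval_mul, eval_C, eval_sub,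
        eval_comp, eval_add, eval_X, Nat.cast_add, Nat.cast_one, pow_succ]
      ring
    rw [key]
    by_cases h0 : P.natDegree = 0
    · obtain ⟨c, rfl⟩ := natDegree_eq_zero.1 h0
      have : (fun n : ℕ => (C β * ((C c).comp (X + C 1) - C c)).eval (n : F) * β ^ n) = 0 := by
        funext n; simp
      rw [this]
      exact isRecurrent_zero
    · refine ih _ ?_ _ rfl
      refine lt_of_le_of_lt (natDegree_C_mul_le _ _) ?_
      exact natDegree_comp_X_add_one_sub_lt h0

lemma aeval_shift_expand {D : ℕ} (g : F[X]) (s : ℕ → F) (u v : ℕ) :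
    aeval (shift F F) (expand F D g) s (u + D * v)
      = aeval (shift F F) g (fun v => s (u + D * v)) v := by
  rw [expand_aeval]
  induction g using Polynomial.induction_on' with
  | add p q hp hq => simp [hp, hq]
  | monomial i r =>
    simp only [aeval_monomial, ← pow_mul, Module.End.mul_apply, Module.algebraMap_end_apply,
      Pi.smul_apply, shift_pow_apply]
    congr 2; ring

/-- A sequence whose restrictions to all residue classes are recurrent is recurrent. -/
lemma IsRecurrent.of_residue_classes {D : ℕ} (hD : 0 < D) {s : ℕ → F}
    (h : ∀ u < D, IsRecurrent (fun v => s (u + D * v))) : IsRecurrent s := by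
  choose! g hg hs using h
  refine ⟨expand F D (∏ u ∈ Finset.range D, g u), (expand_ne_zero hD).2 ?_, ?_⟩
  · exact Finset.prod_ne_zero_iff.2 fun u hu => hg u (Finset.mem_range.1 hu)
  · have key : ∀ u : Fin D, ∀ᶠ v in atTop,
        aeval (shift F F) (expand F D (∏ u ∈ Finset.range D, g u)) s (u + D * v) = 0 := by
      intro u
      simp_rw [aeval_shift_expand]
      exact aeval_shift_eventually_zero_of_dvd
        (Finset.dvd_prod_of_mem g (Finset.mem_range.2 u.2)) (hs u u.2)
    have key' := eventually_all.2 key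
    have ht : Tendsto (fun n => n / D) atTop atTop := Nat.tendsto_div_const_atTop hD.ne'
    filter_upwards [ht.eventually key'] with n hn
    have := hn ⟨n % D, Nat.mod_lt _ hD⟩
    simpa only [Nat.mod_add_div] using this

end Field

section Rational

/-- Coefficients of `g.reflect N * ∑ sₙ xⁿ` beyond degree `N` are values of `g(shift) s`. -/
lemma coeff_reflect_mul_mk {g : ℂ[X]} {N : ℕ} (hN : g.natDegree ≤ N) (s : ℕ → ℂ) (n : ℕ) :
    PowerSeries.coeff (n + N) ((g.reflect N : ℂ[X]) * PowerSeries.mk s : PowerSeries ℂ)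
      = aeval (shift ℂ ℂ) g s n := by
  rw [aeval_shift_apply_range hN, PowerSeries.coeff_mul,
    Finset.Nat.sum_antidiagonal_eq_sum_range_succ_mk,
    ← Finset.sum_range_reflect (fun i => g.coeff i • s (n + i))]
  have hsub : Finset.range (N + 1) ⊆ Finset.range (n + N).succ := by
    intro x; simp only [Finset.mem_range]; omega
  rw [← Finset.sum_subset hsub]
  · refine Finset.sum_congr rfl fun i hi => ?_
    rw [Finset.mem_range] at hi
    rw [coeff_coe, coeff_reflect, revAt_le (by omega), PowerSeries.coeff_mk, smul_eq_mul]
    congr 2; omega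
  · intro i _ hi
    simp only [Finset.mem_range, not_lt] at hi
    rw [coeff_coe, coeff_reflect, revAt_eq_self_of_lt (by omega),
      coeff_eq_zero_of_natDegree_lt (by omega), zero_mul]

lemma IsRecurrent.representsRational {s : ℕ → ℂ} (hs : IsRecurrent s) :
    RepresentsRational s := by
  obtain ⟨g, hg, hs⟩ := hs
  obtain ⟨n₀, hs⟩ := eventually_atTop.1 hs
  refine ⟨PowerSeries.trunc (n₀ + g.natDegree)
    ((g.reflect g.natDegree : ℂ[X]) * PowerSeries.mk s), g.reflect g.natDegree, ?_, ?_⟩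
  · rw [coeff_reflect, revAt_le (Nat.zero_le _), Nat.sub_zero]
    exact leadingCoeff_ne_zero.2 hg
  · ext n
    rw [coeff_coe, PowerSeries.coeff_trunc]
    split_ifs with h
    · rfl
    · obtain ⟨m, rfl⟩ := Nat.exists_eq_add_of_le (not_lt.1 h)
      rw [show n₀ + g.natDegree + m = (n₀ + m) + g.natDegree by ring,
        coeff_reflect_mul_mk le_rfl, hs _ (by omega)]

/-- The coefficients of a rational function are eventually killed by a polynomial in the shift
with nonzero constant and leading coefficients. -/
lemma _root_.RepresentsRational.exists_monic {s : ℕ → ℂ} (hs : RepresentsRational s) :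
    ∃ χ : ℂ[X], χ.Monic ∧ χ.coeff 0 ≠ 0 ∧ ∀ᶠ n in atTop, aeval (shift ℂ ℂ) χ s n = 0 := by
  obtain ⟨P, Q, hQ, h⟩ := hs
  set N := Q.natDegree
  set g := Q.reflect N with hgdef
  have hgN : g.natDegree ≤ N := natDegree_reflect_le.trans (by simp [N])
  have hQ0 : Q ≠ 0 := by rintro rfl; simp at hQ
  have hg0 : g.coeff 0 ≠ 0 := by
    rw [hgdef, coeff_reflect, revAt_le (Nat.zero_le _), Nat.sub_zero]
    exact leadingCoeff_ne_zero.2 hQ0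
  have hgne : g ≠ 0 := by intro h; rw [h] at hg0; simp at hg0
  refine ⟨g * C g.leadingCoeff⁻¹, monic_mul_leadingCoeff_inv hgne, ?_, ?_⟩
  · rw [coeff_mul_C]
    exact mul_ne_zero hg0 (inv_ne_zero (leadingCoeff_ne_zero.2 hgne))
  · refine aeval_shift_eventually_zero_of_dvd (dvd_mul_right g _) ?_
    refine eventually_atTop.2 ⟨P.natDegree + 1, fun n hn => ?_⟩
    have hr : g.reflect N = Q := by rw [hgdef, reflect_reflect]
    rw [← coeff_reflect_mul_mk hgN, hr, h, coeff_coe]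
    exact coeff_eq_zero_of_natDegree_lt (by omega)

end Rational

end Recurrence

/-! ### Specialization of recurrences to the rational numbers -/

section Specialization

lemma aeval_shift_map {R S : Type*} [CommRing R] [CommRing S] [Algebra R S] (g : R[X])
    (s : ℕ → S) (n : ℕ) :
    aeval (shift S S) (g.map (algebraMap R S)) s n = aeval (shift R S) g s n := by
  rw [aeval_shift_apply_range (natDegree_map_le), aeval_shift_apply_range le_rfl]
  simp [Algebra.smul_def]

lemma aeval_shift_comp {R M N : Type*} [CommRing R] [AddCommGroup M] [Module R M]
    [AddCommGroup N] [Module R N] (ℓ : M →ₗ[R] N) (g : R[X]) (s : ℕ → M) (n : ℕ) :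
    aeval (shift R N) g (fun n => ℓ (s n)) n = ℓ (aeval (shift R M) g s n) := by
  rw [aeval_shift_apply_range le_rfl, aeval_shift_apply_range le_rfl, map_sum]
  simp

/-- A monic polynomial over a finite extension of `ℚ` divides a rational polynomial. -/
lemma exists_rational_multiple {L : Type*} [Field L] [Algebra ℚ L] [Module.Finite ℚ L]
    {f : L[X]} (hf : f.Monic) (hf0 : f.coeff 0 ≠ 0) :
    ∃ g : ℚ[X], g.coeff 0 ≠ 0 ∧ f ∣ g.map (algebraMap ℚ L) := by
  have := hf.finite_adjoinRoot
  have : Module.Finite ℚ (AdjoinRoot f) := Module.Finite.trans L _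
  have hroot : IsIntegral ℚ (AdjoinRoot.root f) := Algebra.IsIntegral.isIntegral _
  set g := minpoly ℚ (AdjoinRoot.root f)
  have hg : g ≠ 0 := minpoly.ne_zero hroot
  have hdvd : f ∣ g.map (algebraMap ℚ L) := by
    rw [← AdjoinRoot.mk_eq_zero, ← AdjoinRoot.aeval_eq, aeval_map_algebraMap]
    exact minpoly.aeval _ _
  obtain ⟨q, hq, hXq⟩ := exists_eq_pow_rootMultiplicity_mul_and_not_dvd g hg 0
  rw [C_0, sub_zero] at hq hXq
  refine ⟨q, fun h => hXq (X_dvd_iff.2 h), ?_⟩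
  rw [hq, Polynomial.map_mul, Polynomial.map_pow, map_X] at hdvd
  refine (IsCoprime.pow_right ?_).dvd_of_dvd_mul_left hdvd
  exact ((irreducible_X.coprime_iff_not_dvd).2 fun h => hf0 (X_dvd_iff.1 h)).symm

lemma aeval_shift_mem {R : Type*} [CommRing R] {I J : Ideal R} {w : R[X]}
    (hw : ∀ i, w.coeff i ∈ I) {s : ℕ → R} (hs : ∀ n, s n ∈ J) (n : ℕ) :
    aeval (shift R R) w s n ∈ I * J := by
  rw [aeval_shift_apply_range le_rfl]
  exact Ideal.sum_mem _ fun i _ => Ideal.mul_mem_mul (hw i) (hs _)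

lemma aeval_shift_pow_mem {R : Type*} [CommRing R] [Algebra ℚ R] {m : Ideal R} {χ h : R[X]}
    {χ₀ : ℚ[X]} (hw : ∀ i, (χ₀.map (algebraMap ℚ R) - h * χ).coeff i ∈ m) {s : ℕ → R}
    (hs : aeval (shift R R) χ s = 0) (t n : ℕ) : aeval (shift ℚ R) (χ₀ ^ t) s n ∈ m ^ t := by
  rw [← aeval_shift_map]
  suffices h : aeval (shift R R) χ (aeval (shift R R) ((χ₀ ^ t).map (algebraMap ℚ R)) s) = 0 ∧
    ∀ n, aeval (shift R R) ((χ₀ ^ t).map (algebraMap ℚ R)) s n ∈ m ^ t from h.2 n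
  induction t with
  | zero => simp [hs]
  | succ t ih =>
    obtain ⟨ih1, ih2⟩ := ih
    constructor
    · rw [← Module.End.mul_apply, ← map_mul, mul_comm, map_mul, Module.End.mul_apply, hs, map_zero]
    · intro n
      have e : aeval (shift R R) ((χ₀ ^ (t + 1)).map (algebraMap ℚ R)) s
          = aeval (shift R R) (χ₀.map (algebraMap ℚ R) - h * χ)
            (aeval (shift R R) ((χ₀ ^ t).map (algebraMap ℚ R)) s) := by
        rw [map_sub, LinearMap.sub_apply, map_mul, Module.End.mul_apply _ (aeval _ χ), ih1,
          map_zero, sub_zero, pow_succ', Polynomial.map_mul, map_mul, Module.End.mul_apply]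
      rw [e, pow_succ']
      exact aeval_shift_mem hw ih2 n

/-- A quotient of recurrence sequences over a finitely generated domain can be specialized to
rational recurrence sequences, with control on the roots and on one denominator. -/
lemma exists_rational_specialization_of_finiteType {R : Type*} [CommRing R] [IsDomain R]
    [Algebra ℚ R] [Algebra.FiniteType ℚ R] {χ : R[X]} (hχ : χ.Monic)
    (hχ0 : IsUnit (χ.coeff 0)) {a b : ℕ → R} {c : ℕ → ℤ}
    (ha : aeval (shift R R) χ a = 0) (hb : aeval (shift R R) χ b = 0)
    (hab : ∀ n, a n = c n * b n) (hb0 : ∀ n, b n ≠ 0) :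
    ∃ χ₀ : ℚ[X], χ₀.coeff 0 ≠ 0 ∧ ∀ n, ∃ (t : ℕ) (a' b' : ℕ → ℚ),
      (∀ k, a' k = c k * b' k) ∧ b' n ≠ 0 ∧
      aeval (shift ℚ ℚ) (χ₀ ^ t) a' = 0 ∧ aeval (shift ℚ ℚ) (χ₀ ^ t) b' = 0 := by
  obtain ⟨m, hm⟩ := Ideal.exists_maximal R
  let _ : Field (R ⧸ m) := Ideal.Quotient.field m
  have : IsNoetherianRing R := Algebra.FiniteType.isNoetherianRing ℚ R
  have : Module.Finite ℚ (R ⧸ m) := finite_of_finite_type_of_isJacobsonRing ℚ (R ⧸ m)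
  obtain ⟨χ₀, hχ₀, hdvd⟩ := exists_rational_multiple (L := R ⧸ m)
    (hχ.map (Ideal.Quotient.mk m)) (by rw [coeff_map]; exact (hχ0.map _).ne_zero)
  obtain ⟨h', hh'⟩ := hdvd
  obtain ⟨h, rfl⟩ := map_surjective _ Ideal.Quotient.mk_surjective h'
  have hw : ∀ i, (χ₀.map (algebraMap ℚ R) - h * χ).coeff i ∈ m := by
    intro i
    rw [← Ideal.Quotient.eq_zero_iff_mem, ← coeff_map, Polynomial.map_sub, Polynomial.map_mul,
      mul_comm (h.map _), ← hh', Polynomial.map_map]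
    have : (Ideal.Quotient.mk m).comp (algebraMap ℚ R) = algebraMap ℚ (R ⧸ m) :=
      Subsingleton.elim _ _
    rw [this, sub_self, coeff_zero]
  refine ⟨χ₀, hχ₀, fun n => ?_⟩
  have hn : ∃ t, b n ∉ m ^ t := by
    by_contra! hcon
    have : b n ∈ ⨅ i, m ^ i := Ideal.mem_iInf.2 hcon
    rw [Ideal.iInf_pow_eq_bot_of_isDomain m hm.ne_top] at this
    exact hb0 n this
  obtain ⟨t, ht⟩ := hn
  have hℓ : ∃ ℓ : Module.Dual ℚ (R ⧸ m ^ t), ℓ (Ideal.Quotient.mk _ (b n)) ≠ 0 := by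
    by_contra! hcon
    rw [Module.forall_dual_apply_eq_zero_iff, Ideal.Quotient.eq_zero_iff_mem] at hcon
    exact ht hcon
  obtain ⟨ℓ, hℓ⟩ := hℓ
  let ℓ' : R →ₗ[ℚ] ℚ := ℓ ∘ₗ (Ideal.Quotient.mkₐ ℚ (m ^ t)).toLinearMap
  have hzero : ∀ s : ℕ → R, aeval (shift R R) χ s = 0 →
      aeval (shift ℚ ℚ) (χ₀ ^ t) (fun n => ℓ' (s n)) = 0 := by
    intro s hs
    funext n
    rw [aeval_shift_comp]
    have := aeval_shift_pow_mem hw hs t n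
    change ℓ (Ideal.Quotient.mk _ _) = 0
    rw [Ideal.Quotient.eq_zero_iff_mem.2 this, map_zero]
  refine ⟨t, fun n => ℓ' (a n), fun n => ℓ' (b n), fun k => ?_, hℓ, hzero a ha, hzero b hb⟩
  change ℓ' (a k) = c k * ℓ' (b k)
  rw [hab, ← zsmul_eq_mul, ← zsmul_eq_mul, map_zsmul]

lemma exists_rational_specialization {χ : ℂ[X]} (hχ : χ.Monic) (hχ0 : χ.coeff 0 ≠ 0)
    {a b : ℕ → ℂ} {c : ℕ → ℤ} (ha : aeval (shift ℂ ℂ) χ a = 0)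
    (hb : aeval (shift ℂ ℂ) χ b = 0) (hab : ∀ n, a n = c n * b n) (hb0 : ∀ n, b n ≠ 0) :
    ∃ χ₀ : ℚ[X], χ₀.coeff 0 ≠ 0 ∧ ∀ n, ∃ (t : ℕ) (a' b' : ℕ → ℚ),
      (∀ k, a' k = c k * b' k) ∧ b' n ≠ 0 ∧
      aeval (shift ℚ ℚ) (χ₀ ^ t) a' = 0 ∧ aeval (shift ℚ ℚ) (χ₀ ^ t) b' = 0 := by
  classical
  set N := χ.natDegree
  let S : Finset ℂ := (Finset.range (N + 1)).image χ.coeff ∪ {(χ.coeff 0)⁻¹} ∪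
    (Finset.range N).image a ∪ (Finset.range N).image b
  let R := Algebra.adjoin ℚ (S : Set ℂ)
  have hS : ∀ x ∈ S, x ∈ R := fun x hx => Algebra.subset_adjoin hx
  have : Algebra.FiniteType ℚ R := Algebra.FiniteType.adjoin_of_finite S.finite_toSet
  have hχR : ∀ i, χ.coeff i ∈ R := by
    intro i
    by_cases hi : i ≤ N
    · refine hS _ ?_
      simp only [S, Finset.mem_union]
      exact Or.inl (Or.inl (Or.inl (Finset.mem_image_of_mem _ (Finset.mem_range.2 (by omega)))))
    · rw [coeff_eq_zero_of_natDegree_lt (by omega)]; exact zero_mem _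
  have hrec : ∀ s : ℕ → ℂ, aeval (shift ℂ ℂ) χ s = 0 → (∀ n < N, s n ∈ R) → ∀ n, s n ∈ R := by
    intro s hs h n
    induction n using Nat.strong_induction_on with
    | _ n ih =>
      rcases lt_or_ge n N with hn | hn
      · exact h n hn
      · obtain ⟨k, rfl⟩ := Nat.exists_eq_add_of_le hn
        have := congrFun hs k
        rw [aeval_shift_apply_range le_rfl, Finset.sum_range_succ, hχ.coeff_natDegree, one_smul,
          add_comm k, Pi.zero_apply] at this
        rw [eq_neg_of_add_eq_zero_right this]
        refine neg_mem (sum_mem fun i hi => ?_)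
        rw [Finset.mem_range] at hi
        exact mul_mem (hχR i) (ih _ (by omega))
  have haR := hrec a ha fun n hn => hS _ (by
    simp only [S, Finset.mem_union]
    exact Or.inl (Or.inr (Finset.mem_image_of_mem _ (Finset.mem_range.2 hn))))
  have hbR := hrec b hb fun n hn => hS _ (by
    simp only [S, Finset.mem_union]
    exact Or.inr (Finset.mem_image_of_mem _ (Finset.mem_range.2 hn)))
  obtain ⟨χ', hχ', -, hmonic⟩ := lifts_and_natDegree_eq_and_monic (f := algebraMap R ℂ)
    ((lifts_iff_coeff_lifts χ).2 fun n => ⟨⟨_, hχR n⟩, rfl⟩) hχ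
  have hinj : Function.Injective (algebraMap R ℂ) := Subtype.val_injective
  have hunit : IsUnit (χ'.coeff 0) := by
    have h1 : algebraMap R ℂ (χ'.coeff 0) = χ.coeff 0 := by rw [← coeff_map, hχ']
    refine IsUnit.of_mul_eq_one ⟨(χ.coeff 0)⁻¹, hS _ (by simp [S])⟩ (hinj ?_)
    rw [map_mul, h1, map_one]
    exact mul_inv_cancel₀ hχ0
  have hzero : ∀ s : ℕ → ℂ, aeval (shift ℂ ℂ) χ s = 0 → ∀ h : ∀ n, s n ∈ R,
      aeval (shift R R) χ' (fun n => (⟨s n, h n⟩ : R)) = 0 := by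
    intro s hs h
    funext n
    refine hinj ?_
    have := aeval_shift_comp (Algebra.linearMap R ℂ) χ' (fun n => (⟨s n, h n⟩ : R)) n
    rw [Algebra.linearMap_apply] at this
    rw [← this, ← aeval_shift_map, hχ', Pi.zero_apply, map_zero]
    exact congrFun hs n
  exact exists_rational_specialization_of_finiteType hmonic hunit (hzero a ha haR)
    (hzero b hb hbR) (fun n => hinj (by simpa using hab n))
    fun n h => hb0 n (by simpa using congrArg (algebraMap R ℂ) h)

end Specialization

/-! ### Exponential polynomials -/

section ExponentialPolynomial

variable {F : Type*} [Field F]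

lemma exists_polynomial_of_fwdDiff_iter_eq_zero [CharZero F] {h : ℕ → F} {m : ℕ}
    (hm : (fwdDiff 1)^[m] h = 0) : ∃ P : F[X], ∀ n : ℕ, h n = P.eval (n : F) := by
  refine ⟨∑ k ∈ Finset.range m, C ((fwdDiff 1)^[k] h 0 / (k.factorial : F)) * descPochhammer F k,
    fun n => ?_⟩
  have key := shift_eq_sum_fwdDiff_iter (1 : ℕ) h n 0
  have hz : ∀ k ≥ m, (fwdDiff 1)^[k] h 0 = 0 := by
    intro k hk
    obtain ⟨j, rfl⟩ := Nat.exists_eq_add_of_le' hk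
    rw [Function.iterate_add_apply, hm]
    have : (fwdDiff 1)^[j] (0 : ℕ → F) = 0 := by
      induction j with
      | zero => rfl
      | succ j ih =>
        rw [Function.iterate_succ_apply']
        rw [ih (by omega)]
        funext x
        simp [fwdDiff]
    rw [this]; rfl
  have hterm : ∀ k, eval (n : F) (C ((fwdDiff 1)^[k] h 0 / (k.factorial : F)) * descPochhammer F k)
      = n.choose k • (fwdDiff 1)^[k] h 0 := by
    intro k
    rw [eval_mul, eval_C, descPochhammer_eval_eq_descFactorial,
      Nat.descFactorial_eq_factorial_mul_choose,
      nsmul_eq_mul]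
    have : (k.factorial : F) ≠ 0 := Nat.cast_ne_zero.2 k.factorial_ne_zero
    push_cast
    field_simp
  rw [eval_finsetSum, Finset.sum_congr rfl fun k _ => hterm k]
  simp only [smul_eq_mul, mul_one, zero_add] at key
  rw [key]
  have h1 : ∑ k ∈ Finset.range (n + 1), n.choose k • (fwdDiff 1)^[k] h 0
      = ∑ k ∈ Finset.range (max (n + 1) m), n.choose k • (fwdDiff 1)^[k] h 0 := by
    refine Finset.sum_subset (by simp) fun k _ hk => ?_
    rw [Nat.choose_eq_zero_of_lt (by simpa using hk), zero_smul]
  have h2 : ∑ k ∈ Finset.range m, n.choose k • (fwdDiff 1)^[k] h 0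
      = ∑ k ∈ Finset.range (max (n + 1) m), n.choose k • (fwdDiff 1)^[k] h 0 := by
    refine Finset.sum_subset (by simp) fun k _ hk => ?_
    rw [hz k (by simpa using hk), smul_zero]
  rw [h1, h2]

lemma exists_eval_mul_pow_of_aeval_shift [CharZero F] {β : F} (hβ : β ≠ 0) {m : ℕ} {f : ℕ → F}
    (hf : aeval (shift F F) ((X - C β) ^ m) f = 0) :
    ∃ P : F[X], ∀ n : ℕ, f n = P.eval (n : F) * β ^ n := by
  have key : ∀ (k : ℕ) (n : ℕ), aeval (shift F F) ((X - C β) ^ k) f n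
      = β ^ (n + k) * (fwdDiff 1)^[k] (fun n => f n / β ^ n) n := by
    intro k
    induction k with
    | zero => intro n; simp; field_simp
    | succ k ih =>
      intro n
      rw [pow_succ', map_mul, Module.End.mul_apply, Function.iterate_succ_apply']
      simp only [map_sub, aeval_X, aeval_C, LinearMap.sub_apply, Pi.sub_apply, shift_apply,
        Module.algebraMap_end_apply, Pi.smul_apply, smul_eq_mul, fwdDiff, ih]
      ring
  have h0 : (fwdDiff 1)^[m] (fun n => f n / β ^ n) = 0 := by
    funext n
    have := key m n
    rw [hf, Pi.zero_apply] at this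
    simpa [hβ] using this.symm
  obtain ⟨P, hP⟩ := exists_polynomial_of_fwdDiff_iter_eq_zero h0
  exact ⟨P, fun n => by rw [← hP]; field_simp⟩

/-- A sequence killed by a split polynomial in the shift is an exponential polynomial. -/
lemma exists_sum_eval_mul_pow_of_aeval_shift [CharZero F] (s : Finset F) (hs : (0 : F) ∉ s)
    (m : ℕ) {f : ℕ → F} (hf : aeval (shift F F) (∏ β ∈ s, (X - C β) ^ m) f = 0) :
    ∃ P : F → F[X], ∀ n : ℕ, f n = ∑ β ∈ s, (P β).eval (n : F) * β ^ n := by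
  classical
  induction s using Finset.induction_on generalizing f with
  | empty =>
    refine ⟨0, fun n => ?_⟩
    simp only [Finset.prod_empty, map_one, Module.End.one_apply] at hf
    simp [hf]
  | insert β s hβ ih =>
    rw [Finset.prod_insert hβ] at hf
    have hcop : IsCoprime ((X - C β) ^ m) (∏ γ ∈ s, (X - C γ) ^ m) := by
      refine IsCoprime.prod_right fun γ hγ => (IsCoprime.pow ?_)
      exact isCoprime_X_sub_C_of_isUnit_sub (sub_ne_zero.2 (by rintro rfl; exact hβ hγ)).isUnit
    have hmem : f ∈ LinearMap.ker (aeval (shift F F) ((X - C β) ^ m)) ⊔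
        LinearMap.ker (aeval (shift F F) (∏ γ ∈ s, (X - C γ) ^ m)) := by
      rw [sup_ker_aeval_eq_ker_aeval_mul_of_coprime _ hcop]; exact hf
    obtain ⟨f₁, h₁, f₂, h₂, rfl⟩ := Submodule.mem_sup.1 hmem
    obtain ⟨P₁, hP₁⟩ := exists_eval_mul_pow_of_aeval_shift
      (fun h => hs (by simp [h])) (LinearMap.mem_ker.1 h₁)
    obtain ⟨P₂, hP₂⟩ := ih (fun h => hs (by simp [h])) (LinearMap.mem_ker.1 h₂)
    refine ⟨Function.update P₂ β P₁, fun n => ?_⟩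
    rw [Finset.sum_insert hβ, Function.update_self, Pi.add_apply, hP₁, hP₂]
    congr 1
    refine Finset.sum_congr rfl fun γ hγ => ?_
    rw [Function.update_of_ne (by rintro rfl; exact hβ hγ)]

/-- Zero estimate: an exponential polynomial with `∑ m β` coefficients vanishing at that many
consecutive integers is trivial. -/
lemma eq_zero_of_sum_eval_mul_pow_eq_zero [CharZero F] (s : Finset F) (hs : (0 : F) ∉ s)
    (m : F → ℕ) (P : F → F[X]) (hP : ∀ β ∈ s, (P β).degree < m β) (n₀ : ℕ)
    (h : ∀ i < ∑ β ∈ s, m β, ∑ β ∈ s, (P β).eval ((n₀ + i : ℕ) : F) * β ^ (n₀ + i) = 0) :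
    ∀ β ∈ s, P β = 0 := by
  classical
  induction hL : ∑ β ∈ s, m β generalizing m P with
  | zero =>
    intro β hβ
    have := hP β hβ
    rw [Finset.sum_eq_zero_iff.1 hL β hβ] at this
    simpa using this
  | succ L ih =>
    obtain ⟨β, hβ, hmβ⟩ : ∃ β ∈ s, m β ≠ 0 := by
      by_contra! hcon
      rw [Finset.sum_eq_zero hcon] at hL
      omega
    have hβ0 : β ≠ 0 := fun h => hs (h ▸ hβ)
    obtain ⟨k, hk⟩ := Nat.exists_eq_succ_of_ne_zero hmβ
    let P' : F → F[X] := fun γ => C γ * (P γ).comp (X + C 1) - C β * P γ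
    have hP'β : P' β = C β * ((P β).comp (X + C 1) - P β) := by simp only [P']; ring
    have hcomp : ∀ γ ∈ s, ((P γ).comp (X + C 1)).degree < m γ := by
      intro γ hγ
      by_cases h0 : P γ = 0
      · rw [h0, zero_comp]; simp
      · have : (P γ).comp (X + C 1) ≠ 0 := by
          rw [← leadingCoeff_ne_zero, leadingCoeff_comp_X_add_one]
          exact leadingCoeff_ne_zero.2 h0
        rw [degree_eq_natDegree this, natDegree_comp_X_add_one, ← degree_eq_natDegree h0]
        exact hP γ hγ
    have hsum : ∑ γ ∈ s, Function.update m β k γ = L := by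
      rw [Finset.sum_update_of_mem hβ]
      rw [← Finset.add_sum_erase s m hβ, hk, Finset.erase_eq] at hL
      omega
    have hdeg : ∀ γ ∈ s, (P' γ).degree < Function.update m β k γ := by
      intro γ hγ
      by_cases hγβ : γ = β
      · subst hγβ
        rw [Function.update_self, hP'β]
        by_cases h0 : (P γ).natDegree = 0
        · obtain ⟨c, hc⟩ := natDegree_eq_zero.1 h0
          rw [← hc]; simp
        · refine lt_of_le_of_lt (degree_le_natDegree) ?_
          have h1 := (natDegree_C_mul_le γ ((P γ).comp (X + C 1) - P γ)).trans_lt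
            (natDegree_comp_X_add_one_sub_lt h0)
          have h2 := (natDegree_lt_iff_degree_lt (by rintro h; simp [h] at h0)).2 (hP γ hγ)
          exact_mod_cast (by omega : _ < k)
      · rw [Function.update_of_ne hγβ]
        refine lt_of_le_of_lt (degree_sub_le _ _) (max_lt ?_ ?_)
        · exact (degree_C_mul fun h => hs (h ▸ hγ)).trans_lt (hcomp γ hγ)
        · exact (degree_C_mul hβ0).trans_lt (hP γ hγ)
    have hvan := ih (Function.update m β k) P' hdeg (fun i hi => by
      rw [hsum] at hi
      have h1 := h i (by omega)
      have h2 := h (i + 1) (by omega)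
      have e : ∑ γ ∈ s, (P' γ).eval ((n₀ + i : ℕ) : F) * γ ^ (n₀ + i)
        = ∑ γ ∈ s, (P γ).eval ((n₀ + (i + 1) : ℕ) : F) * γ ^ (n₀ + (i + 1))
          - β * ∑ γ ∈ s, (P γ).eval ((n₀ + i : ℕ) : F) * γ ^ (n₀ + i) := by
        rw [Finset.mul_sum, ← Finset.sum_sub_distrib]
        refine Finset.sum_congr rfl fun γ _ => ?_
        simp only [P', eval_sub, eval_mul, eval_C, eval_comp, eval_add, eval_X]
        push_cast
        rw [add_assoc]
        ring
      rw [e, h1, h2]; ring) hsum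
    have hother : ∀ γ ∈ s, γ ≠ β → P γ = 0 := by
      intro γ hγ hne
      by_contra h0
      have := congrArg (fun Q => coeff Q (P γ).natDegree) (hvan γ hγ)
      simp only [P', coeff_sub, coeff_C_mul, coeff_zero] at this
      have h1 : ((P γ).comp (X + C 1)).coeff (P γ).natDegree = (P γ).leadingCoeff := by
        rw [← leadingCoeff_comp_X_add_one, leadingCoeff, natDegree_comp_X_add_one]
      rw [h1, coeff_natDegree, ← sub_mul] at this
      rcases mul_eq_zero.1 this with h2 | h2
      · exact hne (sub_eq_zero.1 h2)
      · exact h0 (leadingCoeff_eq_zero.1 h2)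
    intro γ hγ
    by_cases hne : γ = β
    swap
    · exact hother γ hγ hne
    subst hne
    have h0 : (P γ).comp (X + C 1) - P γ = 0 := by
      have := hvan γ hγ
      rw [hP'β] at this
      simpa [hβ0] using this
    have heval : ∀ n : ℕ, (P γ).eval (n : F) = (P γ).eval 0 := by
      intro n
      induction n with
      | zero => simp
      | succ n ihn =>
        have := congrArg (eval (n : F)) h0
        simp only [eval_sub, eval_comp, eval_add, eval_X, eval_C, eval_zero] at this
        rw [Nat.cast_succ, sub_eq_zero.1 this, ihn]
    have hconst : P γ = C ((P γ).eval 0) := by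
      refine eq_of_infinite_eval_eq _ _ ((Set.infinite_range_of_injective
        (Nat.cast_injective (R := F))).mono ?_)
      rintro _ ⟨n, rfl⟩
      simp [heval n]
    have h1 := h 0 (by omega)
    rw [Finset.sum_eq_single γ (fun δ hδ hne => by rw [hother δ hδ hne]; simp)
      (fun h => absurd hγ h), heval] at h1
    rcases mul_eq_zero.1 h1 with h2 | h2
    · rw [hconst, h2, C_0]
    · exact absurd h2 (pow_ne_zero _ hβ0)

end ExponentialPolynomial

/-! ### The ring of exponential polynomials -/

section ExpPolyRing

variable {F : Type*} [Field F]

lemma eq_zero_of_sum_eval_mul_pow_eq_zero' [CharZero F] {ι : Type*} (s : Finset ι) (β : ι → F)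
    (hβ : ∀ i ∈ s, β i ≠ 0) (hinj : Set.InjOn β s) (m : ℕ) (P : ι → F[X])
    (hP : ∀ i ∈ s, (P i).degree < m) (n₀ : ℕ)
    (h : ∀ j < s.card * m, ∑ i ∈ s, (P i).eval ((n₀ + j : ℕ) : F) * β i ^ (n₀ + j) = 0) :
    ∀ i ∈ s, P i = 0 := by
  classical
  rcases s.eq_empty_or_nonempty with rfl | ⟨i₀, hi₀⟩
  · simp
  have : Nonempty ι := ⟨i₀⟩
  have hleft : ∀ i ∈ s, Function.invFunOn β s (β i) = i := fun i hi => hinj.leftInvOn_invFunOn hi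
  have := eq_zero_of_sum_eval_mul_pow_eq_zero (s.image β)
    (by simpa using hβ) (fun _ => m) (fun b => P (Function.invFunOn β s b)) (by
      intro b hb
      obtain ⟨i, hi, rfl⟩ := Finset.mem_image.1 hb
      simpa only [hleft i hi] using hP i hi) n₀ (by
      intro j hj
      rw [Finset.sum_const, Finset.card_image_of_injOn hinj, smul_eq_mul] at hj
      rw [Finset.sum_image hinj, ← h j hj]
      exact Finset.sum_congr rfl fun i hi => by rw [hleft i hi])
  intro i hi
  simpa only [hleft i hi] using this (β i) (Finset.mem_image_of_mem _ hi)

variable {ι : Type*}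

/-- Evaluation of `∑ P_μ(X) x^μ` at `X = n`, `x_i = γ_i ^ n`. -/
noncomputable def evalAt (γ : ι → F) (n : ℕ) : MvPolynomial ι F[X] →+* F :=
  MvPolynomial.eval₂Hom (evalRingHom (n : F)) (fun i => γ i ^ n)

lemma evalAt_C (γ : ι → F) (n : ℕ) (P : F[X]) :
    evalAt γ n (MvPolynomial.C P) = P.eval (n : F) := by
  simp [evalAt]

lemma evalAt_X (γ : ι → F) (n : ℕ) (i : ι) : evalAt γ n (MvPolynomial.X i) = γ i ^ n := by
  simp [evalAt]

/-- The endomorphism of the ring of exponential polynomials induced by `n ↦ n + j`. -/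
noncomputable def translate (γ : ι → F) (j : ℤ) : MvPolynomial ι F[X] →+* MvPolynomial ι F[X] :=
  MvPolynomial.eval₂Hom (MvPolynomial.C.comp (compRingHom (X + C (j : F))))
    (fun i => MvPolynomial.C (C (γ i ^ j)) * MvPolynomial.X i)

lemma translate_C (γ : ι → F) (j : ℤ) (P : F[X]) :
    translate γ j (MvPolynomial.C P) = MvPolynomial.C (P.comp (X + C (j : F))) := by
  simp [translate]

lemma translate_X (γ : ι → F) (j : ℤ) (i : ι) :
    translate γ j (MvPolynomial.X i) = MvPolynomial.C (C (γ i ^ j)) * MvPolynomial.X i := by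
  simp [translate]

lemma evalAt_translate {γ : ι → F} (hγ : ∀ i, γ i ≠ 0) (j : ℤ) (n m : ℕ) (h : (m : ℤ) = n + j)
    (f : MvPolynomial ι F[X]) : evalAt γ n (translate γ j f) = evalAt γ m f := by
  induction f using MvPolynomial.induction_on with
  | C P =>
    have : (m : F) = n + j := by exact_mod_cast congrArg (Int.cast (R := F)) h
    rw [translate_C, evalAt_C, evalAt_C, eval_comp, this]; simp
  | add p q hp hq => simp [hp, hq]
  | mul_X p i hp =>
    rw [map_mul, map_mul, map_mul, hp, translate_X, map_mul, evalAt_C, evalAt_X, evalAt_X, eval_C]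
    congr 1
    rw [← zpow_natCast, ← zpow_natCast, ← zpow_add₀ (hγ i), h, add_comm]

lemma translate_translate {γ : ι → F} (hγ : ∀ i, γ i ≠ 0) (j k : ℤ) (f : MvPolynomial ι F[X]) :
    translate γ j (translate γ k f) = translate γ (j + k) f := by
  induction f using MvPolynomial.induction_on with
  | C P =>
    simp only [translate_C, comp_assoc]
    congr 2
    simp only [add_comp, X_comp, C_comp, Int.cast_add, C_add]
    ring
  | add p q hp hq => simp [hp, hq]
  | mul_X p i hp =>
    rw [map_mul, map_mul, map_mul, hp]
    simp only [translate_X, map_mul, translate_C, C_comp]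
    rw [zpow_add₀ (hγ i), C_mul, map_mul]
    ring

lemma translate_zero (γ : ι → F) (f : MvPolynomial ι F[X]) : translate γ 0 f = f := by
  induction f using MvPolynomial.induction_on with
  | C P => simp [translate_C]
  | add p q hp hq => simp [hp, hq]
  | mul_X p i hp => rw [map_mul, hp, translate_X]; simp

/-- Translation as an automorphism. -/
noncomputable def translateEquiv {γ : ι → F} (hγ : ∀ i, γ i ≠ 0) (j : ℤ) :
    MvPolynomial ι F[X] ≃+* MvPolynomial ι F[X] :=
  { translate γ j with
    invFun := translate γ (-j)
    left_inv := fun f => by simp [translate_translate hγ, translate_zero]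
    right_inv := fun f => by simp [translate_translate hγ, translate_zero] }

lemma translateEquiv_apply {γ : ι → F} (hγ : ∀ i, γ i ≠ 0) (j : ℤ) (f : MvPolynomial ι F[X]) :
    translateEquiv hγ j f = translate γ j f := rfl

variable [Fintype ι]

/-- Multiplicative independence of nonzero elements of a field. -/
def MulIndep (γ : ι → F) : Prop :=
  (∀ i, γ i ≠ 0) ∧ ∀ e : ι → ℤ, ∏ i, γ i ^ e i = 1 → e = 0

/-- The value of the monomial `x^μ` at `x = γ`. -/
def monom (γ : ι → F) (μ : ι →₀ ℕ) : F := ∏ i, γ i ^ μ i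

lemma monom_ne_zero {γ : ι → F} (hγ : ∀ i, γ i ≠ 0) (μ : ι →₀ ℕ) : monom γ μ ≠ 0 :=
  Finset.prod_ne_zero_iff.2 fun i _ => pow_ne_zero _ (hγ i)

lemma MulIndep.monom_zpow_inj {γ : ι → F} (hγ : MulIndep γ) {μ ν : ι →₀ ℕ} {q : ℤ} (hq : q ≠ 0)
    (h : monom γ μ ^ q = monom γ ν ^ q) : μ = ν := by
  have h1 : ∏ i, γ i ^ ((μ i - ν i : ℤ) * q) = 1 := by
    have : ∀ i, γ i ^ ((μ i - ν i : ℤ) * q) = (γ i ^ μ i) ^ q / (γ i ^ ν i) ^ q := by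
      intro i
      rw [zpow_mul, zpow_sub₀ (hγ.1 i), zpow_natCast, zpow_natCast, div_zpow]
    rw [Finset.prod_congr rfl fun i _ => this i, Finset.prod_div_distrib, Finset.prod_zpow,
      Finset.prod_zpow]
    exact (div_eq_one_iff_eq (zpow_ne_zero _ (monom_ne_zero hγ.1 ν))).2 h
  ext i
  have := congrFun (hγ.2 _ h1) i
  simp only [Pi.zero_apply, mul_eq_zero, hq, or_false] at this
  omega

lemma evalAt_eq_sum (γ : ι → F) (n : ℕ) (f : MvPolynomial ι F[X]) :
    evalAt γ n f = ∑ μ ∈ f.support, (f.coeff μ).eval (n : F) * monom γ μ ^ n := by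
  rw [evalAt, MvPolynomial.coe_eval₂Hom, MvPolynomial.eval₂_eq']
  refine Finset.sum_congr rfl fun μ _ => ?_
  rw [monom, ← Finset.prod_pow]
  simp only [coe_evalRingHom, ← pow_mul, mul_comm]

/-- An element of the ring of exponential polynomials is determined by its values along an
arithmetic progression, quantitatively. -/
lemma eq_zero_of_evalAt_eq_zero [CharZero F] {γ : ι → F} (hγ : MulIndep γ)
    (f : MvPolynomial ι F[X]) (s : Finset (ι →₀ ℕ)) (hs : f.support ⊆ s) (m : ℕ)
    (hm : ∀ μ, (f.coeff μ).degree < m) (r : ℕ) {q : ℕ} (hq : q ≠ 0)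
    (h : ∀ z < s.card * m, evalAt γ (r + q * z) f = 0) : f = 0 := by
  have hvals : ∀ z, evalAt γ (r + q * z) f = ∑ μ ∈ f.support,
      (C (monom γ μ ^ r) * (f.coeff μ).comp (C (q : F) * X + C (r : F))).eval (z : F)
        * (monom γ μ ^ q) ^ z := by
    intro z
    rw [evalAt_eq_sum]
    refine Finset.sum_congr rfl fun μ _ => ?_
    simp only [eval_mul, eval_C, eval_comp, eval_add, eval_X]
    push_cast
    rw [add_comm (r : F)]
    ring
  have hq0 : (q : F) ≠ 0 := Nat.cast_ne_zero.2 hq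
  have hnd : (C (q : F) * X + C (r : F)).natDegree = 1 := natDegree_linear hq0
  have hcomp : ∀ P : F[X], P.comp (C (q : F) * X + C (r : F)) = 0 → P = 0 := by
    intro P hP
    rcases comp_eq_zero_iff.1 hP with h | ⟨-, h⟩
    · exact h
    · rw [h, natDegree_C] at hnd; omega
  have key := eq_zero_of_sum_eval_mul_pow_eq_zero' f.support (fun μ => monom γ μ ^ q)
    (fun μ _ => pow_ne_zero _ (monom_ne_zero hγ.1 μ))
    (fun μ _ ν _ h => hγ.monom_zpow_inj (q := q) (by exact_mod_cast hq) (by simpa using h)) m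
    (fun μ => C (monom γ μ ^ r) * (f.coeff μ).comp (C (q : F) * X + C (r : F))) (by
      intro μ _
      rw [degree_C_mul (pow_ne_zero _ (monom_ne_zero hγ.1 μ))]
      by_cases h0 : f.coeff μ = 0
      · rw [h0, zero_comp, degree_zero]; exact WithBot.bot_lt_coe m
      · rw [degree_eq_natDegree (fun h => h0 (hcomp _ h)), natDegree_comp, hnd, mul_one,
          ← degree_eq_natDegree h0]
        exact hm μ) 0 (by
      intro j hj
      have := h j (lt_of_lt_of_le hj (Nat.mul_le_mul_right _ (Finset.card_le_card hs)))
      rw [hvals] at this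
      simpa using this)
  ext1 μ
  rw [MvPolynomial.coeff_zero]
  by_contra h0
  have h1 := key μ (MvPolynomial.mem_support_iff.2 h0)
  rcases mul_eq_zero.1 h1 with h2 | h2
  · exact pow_ne_zero r (monom_ne_zero hγ.1 μ) (C_eq_zero.1 h2)
  · exact h0 (hcomp _ h2)

lemma exists_evalAt_ne_zero [CharZero F] {γ : ι → F} (hγ : MulIndep γ)
    {f : MvPolynomial ι F[X]} (hf : f ≠ 0) (r : ℕ) {q : ℕ} (hq : q ≠ 0) :
    ∃ z, evalAt γ (r + q * z) f ≠ 0 := by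
  by_contra! hcon
  refine hf (eq_zero_of_evalAt_eq_zero hγ f f.support subset_rfl
    (f.support.sup (fun μ => (f.coeff μ).natDegree) + 1) (fun μ => ?_) r hq fun z _ => hcon z)
  by_cases h0 : f.coeff μ = 0
  · rw [h0, degree_zero]; exact WithBot.bot_lt_coe _
  · rw [degree_eq_natDegree h0]
    have := Finset.le_sup (f := fun μ => (f.coeff μ).natDegree) (MvPolynomial.mem_support_iff.2 h0)
    exact_mod_cast Nat.lt_succ_of_le this

lemma coeff_translate (γ : ι → F) (j : ℤ) (f : MvPolynomial ι F[X]) (μ : ι →₀ ℕ) :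
    (translate γ j f).coeff μ = C (monom γ μ ^ j) * (f.coeff μ).comp (X + C (j : F)) := by
  classical
  induction f using MvPolynomial.induction_on' with
  | monomial ν P =>
    have : translate γ j (MvPolynomial.monomial ν P)
        = MvPolynomial.monomial ν (C (monom γ ν ^ j) * P.comp (X + C (j : F))) := by
      rw [translate, MvPolynomial.coe_eval₂Hom, MvPolynomial.eval₂_monomial,
        MvPolynomial.monomial_eq (s := ν), Finsupp.prod_fintype _ _ (by simp),
        Finsupp.prod_fintype _ _ (by simp)]
      simp only [mul_pow, Finset.prod_mul_distrib, RingHom.comp_apply, coe_compRingHom_apply,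
        ← map_pow, ← map_prod, map_mul]
      rw [← mul_assoc, mul_comm (MvPolynomial.C _) (MvPolynomial.C _)]
      congr 4
      rw [monom, ← Finset.prod_zpow]
      refine Finset.prod_congr rfl fun i _ => ?_
      rw [← zpow_natCast, ← zpow_natCast, ← zpow_mul, ← zpow_mul, mul_comm]
    rw [this, MvPolynomial.coeff_monomial, MvPolynomial.coeff_monomial]
    split_ifs with h
    · rw [h]
    · simp
  | add p q hp hq => simp [hp, hq, mul_add]

end ExpPolyRing

/-! ### Linear relations between translates of a fraction of exponential polynomials -/

section Translates

variable {F : Type*} [Field F] {ι : Type*}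

/-- `f` is a constant of the polynomial ring over `F[X]` or associated to a variable. -/
def IsElementary (f : MvPolynomial ι F[X]) : Prop :=
  (∃ h : F[X], f = MvPolynomial.C h) ∨ ∃ i, Associated f (MvPolynomial.X i)

lemma exists_C_of_dvd_C {f : MvPolynomial ι F[X]} {P : F[X]} (hP : P ≠ 0)
    (h : f ∣ MvPolynomial.C P) : ∃ Q, f = MvPolynomial.C Q := by
  obtain ⟨b, -, hb⟩ := (MvPolynomial.dvd_C_iff_exists hP).1 h
  exact ⟨b, hb⟩

lemma isElementary_of_dvd_monomial {π : MvPolynomial ι F[X]} (hπ : Prime π) {μ : ι →₀ ℕ}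
    {P : F[X]} (hP : P ≠ 0) (h : π ∣ MvPolynomial.monomial μ P) : IsElementary π := by
  rw [MvPolynomial.monomial_eq, Finsupp.prod] at h
  rcases hπ.dvd_or_dvd h with h | h
  · exact Or.inl (exists_C_of_dvd_C hP h)
  · obtain ⟨i, -, hi⟩ := hπ.exists_mem_finset_dvd h
    exact Or.inr ⟨i, hπ.associated_of_dvd MvPolynomial.X_prime (hπ.dvd_of_dvd_pow hi)⟩

lemma translate_ne_zero {γ : ι → F} (hγ : ∀ i, γ i ≠ 0) (j : ℤ) {f : MvPolynomial ι F[X]}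
    (hf : f ≠ 0) : translate γ j f ≠ 0 :=
  (map_ne_zero_iff (translateEquiv hγ j) (translateEquiv hγ j).injective).2 hf

lemma translate_prime {γ : ι → F} (hγ : ∀ i, γ i ≠ 0) (j : ℤ) {f : MvPolynomial ι F[X]}
    (hf : Prime f) : Prime (translate γ j f) :=
  (MulEquiv.prime_iff (translateEquiv hγ j).toMulEquiv).2 hf

lemma translate_dvd_iff {γ : ι → F} (hγ : ∀ i, γ i ≠ 0) (j k : ℤ) {f g : MvPolynomial ι F[X]} :
    translate γ (j + k) f ∣ translate γ j g ↔ translate γ k f ∣ g := by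
  rw [← translate_translate hγ]
  exact map_dvd_iff (translateEquiv hγ j)

lemma translate_dvd_iff_sub {γ : ι → F} (hγ : ∀ i, γ i ≠ 0) (j k : ℤ)
    {f g : MvPolynomial ι F[X]} :
    translate γ k f ∣ translate γ j g ↔ translate γ (k - j) f ∣ g := by
  rw [← translate_dvd_iff hγ j (k - j), add_sub_cancel]

/-- A polynomial all of whose prime factors are elementary is a monomial. -/
lemma exists_monomial_of_isElementary {B : MvPolynomial ι F[X]} (hB : B ≠ 0)
    (h : ∀ π, Prime π → π ∣ B → IsElementary π) :
    ∃ (μ : ι →₀ ℕ) (H : F[X]), B = MvPolynomial.monomial μ H := by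
  induction B using UniqueFactorizationMonoid.induction_on_prime with
  | h₁ => exact absurd rfl hB
  | h₂ x hx =>
    obtain ⟨r, -, hx⟩ := MvPolynomial.isUnit_iff_eq_C_of_isReduced.1 hx
    exact ⟨0, _, hx⟩
  | h₃ a p ha hp ih =>
    obtain ⟨μ, H, rfl⟩ := ih ha fun π hπ hd => h π hπ (hd.mul_left p)
    rcases h p hp (dvd_mul_right p _) with ⟨Q, rfl⟩ | ⟨i, hi⟩
    · exact ⟨μ, Q * H, by rw [MvPolynomial.C_mul_monomial]⟩
    · obtain ⟨u, hu⟩ := hi.symm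
      obtain ⟨r, -, hx⟩ := MvPolynomial.isUnit_iff_eq_C_of_isReduced.1 u.isUnit
      refine ⟨Finsupp.single i 1 + μ, r * H, ?_⟩
      rw [← hu, hx, MvPolynomial.X, mul_comm (MvPolynomial.monomial _ _), mul_assoc,
        MvPolynomial.monomial_mul, MvPolynomial.C_mul_monomial, one_mul]

variable [Fintype ι]

lemma eq_zero_of_associated_translate [CharZero F] {γ : ι → F} (hγ : MulIndep γ)
    {π : MvPolynomial ι F[X]} (hπ : Prime π) (hel : ¬ IsElementary π) {j : ℤ}
    (h : Associated (translate γ j π) π) : j = 0 := by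
  by_contra hj
  obtain ⟨u, hu⟩ := h
  obtain ⟨w, hr, hur⟩ := (MvPolynomial.isUnit_iff_eq_C_of_isReduced).1 u.isUnit
  obtain ⟨r, -, hr⟩ := Polynomial.isUnit_iff.1 hr
  rw [← hr] at hur
  have hlc : ∀ μ ∈ π.support, monom γ μ ^ j * r = 1 := by
    intro μ hμ
    have h0 : (π.coeff μ).leadingCoeff ≠ 0 :=
      leadingCoeff_ne_zero.2 (MvPolynomial.mem_support_iff.1 hμ)
    have := congrArg (fun f => (f.coeff μ).leadingCoeff) hu
    simp only [hur, mul_comm _ (MvPolynomial.C _), MvPolynomial.coeff_C_mul,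
      coeff_translate, leadingCoeff_mul,
      leadingCoeff_C] at this
    rw [leadingCoeff_comp (by rw [natDegree_X_add_C]; exact one_ne_zero),
      (monic_X_add_C (j : F)).leadingCoeff, one_pow, mul_one] at this
    refine mul_right_cancel₀ h0 ?_
    rw [one_mul]
    calc _ = _ := by ring
      _ = _ := this
  obtain ⟨μ, hμ⟩ := MvPolynomial.support_nonempty.2 hπ.ne_zero
  have hsup : ∀ ν ∈ π.support, ν = μ := by
    intro ν hν
    have hr0 : r ≠ 0 := by rintro rfl; simpa using hlc μ hμ
    exact hγ.monom_zpow_inj hj (mul_right_cancel₀ hr0 ((hlc ν hν).trans (hlc μ hμ).symm))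
  refine hel (isElementary_of_dvd_monomial hπ (μ := μ) (P := π.coeff μ)
    (MvPolynomial.mem_support_iff.1 hμ) (dvd_of_eq ?_))
  classical
  ext1 ν
  rw [MvPolynomial.coeff_monomial]
  split_ifs with h
  · rw [h]
  · by_contra hν
    exact h (hsup ν (MvPolynomial.mem_support_iff.2 hν)).symm

lemma finite_translate_dvd [CharZero F] {γ : ι → F} (hγ : MulIndep γ)
    {π : MvPolynomial ι F[X]} (hπ : Prime π) (hel : ¬ IsElementary π)
    {B : MvPolynomial ι F[X]} (hB : B ≠ 0) : {j : ℤ | translate γ j π ∣ B}.Finite := by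
  classical
  have hex : ∀ j ∈ {j : ℤ | translate γ j π ∣ B}, ∃ q ∈ UniqueFactorizationMonoid.factors B,
      Associated (translate γ j π) q := fun j hj =>
    UniqueFactorizationMonoid.exists_mem_factors_of_dvd hB
      (translate_prime hγ.1 j hπ).irreducible hj
  choose! q hq hass using hex
  refine Set.Finite.of_finite_image (f := q)
    ((UniqueFactorizationMonoid.factors B).toFinset.finite_toSet.subset ?_) ?_
  · rintro _ ⟨j, hj, rfl⟩
    simpa using hq j hj
  · intro j hj k hk hjk
    have h1 : Associated (translate γ j π) (translate γ k π) := by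
      have h2 := hass j hj
      rw [hjk] at h2
      exact h2.trans (hass k hk).symm
    have h3 := h1.map (translateEquiv hγ.1 (-k))
    rw [translateEquiv_apply, translateEquiv_apply, translate_translate hγ.1,
      translate_translate hγ.1, neg_add_cancel, translate_zero] at h3
    have := eq_zero_of_associated_translate hγ hπ hel h3
    omega

/-- If the translates of a reduced fraction `A / B` satisfy a nontrivial linear relation over
`F[X]`, all prime factors of `B` are elementary. -/
lemma isElementary_of_relation [CharZero F] {γ : ι → F} (hγ : MulIndep γ)
    {A B : MvPolynomial ι F[X]} (hAB : IsRelPrime A B) (hB : B ≠ 0) {N : ℕ} {q : ℕ → F[X]}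
    (hq : ∃ j < N, q j ≠ 0)
    (h : ∑ j ∈ Finset.range N, MvPolynomial.C (q j) * translate γ j A *
      ∏ k ∈ (Finset.range N).erase j, translate γ k B = 0)
    {π : MvPolynomial ι F[X]} (hπ : Prime π) (hπB : π ∣ B) : IsElementary π := by
  classical
  by_contra hel
  obtain ⟨j₁, hj₁, hmax⟩ : ∃ j₁, (j₁ < N ∧ q j₁ ≠ 0) ∧ ∀ j < N, j₁ < j → q j = 0 := by
    obtain ⟨j₁, hj₁, hm⟩ := ((Finset.range N).filter (fun j => q j ≠ 0)).exists_max_image id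
      (by obtain ⟨j, hj⟩ := hq; exact ⟨j, by simpa using hj⟩)
    refine ⟨j₁, by simpa using hj₁, fun j hj hlt => ?_⟩
    by_contra h0
    exact absurd (hm j (by simp [hj, h0])) (not_le.2 hlt)
  have htrunc : ∑ j ∈ Finset.range (j₁ + 1), MvPolynomial.C (q j) * translate γ j A *
      ∏ k ∈ (Finset.range (j₁ + 1)).erase j, translate γ k B = 0 := by
    have hne : ∏ k ∈ Finset.Ico (j₁ + 1) N, translate γ k B ≠ 0 :=
      Finset.prod_ne_zero_iff.2 fun k _ => translate_ne_zero hγ.1 k hB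
    refine (mul_eq_zero.1 (?_ : _ * ∏ k ∈ Finset.Ico (j₁ + 1) N, translate γ k B = 0)).resolve_right
      hne
    rw [← h, Finset.sum_mul]
    have hsub : Finset.range (j₁ + 1) ⊆ Finset.range N := by
      intro x; simp only [Finset.mem_range]; omega
    rw [← Finset.sum_subset hsub fun j hj hj' => by
      rw [hmax j (by simpa using hj) (by simpa using hj')]; simp]
    refine Finset.sum_congr rfl fun j hj => ?_
    rw [mul_assoc]
    congr 1
    rw [← Finset.prod_union]
    · refine Finset.prod_congr ?_ fun _ _ => rfl
      ext k
      simp only [Finset.mem_union, Finset.mem_erase, Finset.mem_range, Finset.mem_Ico] at hj ⊢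
      omega
    · rw [Finset.disjoint_left]
      intro k
      simp only [Finset.mem_erase, Finset.mem_range, Finset.mem_Ico]
      omega
  obtain ⟨k₁, hk₁, hkmax⟩ := Set.exists_max_image _ id (finite_translate_dvd hγ hπ hel hB)
    ⟨0, by simpa [translate_zero] using hπB⟩
  set ϖ := translate γ (j₁ + k₁) π with hϖ
  have hϖp : Prime ϖ := translate_prime hγ.1 _ hπ
  have hdvd : ϖ ∣ translate γ j₁ B := (translate_dvd_iff hγ.1 j₁ k₁).2 hk₁
  have hndvd : ∀ k : ℕ, k < j₁ → ¬ ϖ ∣ translate γ k B := by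
    intro k hk hd
    rw [hϖ, translate_dvd_iff_sub hγ.1] at hd
    have := hkmax _ hd
    simp only [id] at this
    omega
  have hmain : ϖ ∣ MvPolynomial.C (q j₁) * translate γ j₁ A *
      ∏ k ∈ (Finset.range (j₁ + 1)).erase j₁, translate γ k B := by
    rw [Finset.sum_range_succ] at htrunc
    rw [← dvd_add_right (Finset.dvd_sum ?_), htrunc]
    · exact dvd_zero _
    intro j hj
    refine Dvd.dvd.mul_left ?_ _
    refine hdvd.trans (Finset.dvd_prod_of_mem (fun k : ℕ => translate γ k B) ?_)
    simp only [Finset.mem_range, Finset.mem_erase] at hj ⊢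
    omega
  rcases hϖp.dvd_or_dvd hmain with h1 | h1
  · rcases hϖp.dvd_or_dvd h1 with h2 | h2
    · obtain ⟨Q, hQ⟩ := exists_C_of_dvd_C hj₁.2 h2
      refine hel (Or.inl ⟨Q.comp (X + C ((-(j₁ + k₁) : ℤ) : F)), ?_⟩)
      rw [← translate_C γ, ← hQ, hϖ, translate_translate hγ.1, neg_add_cancel, translate_zero]
    · have h3 := (translate_dvd_iff hγ.1 j₁ k₁).1 h2
      exact (translate_prime hγ.1 k₁ hπ).not_isUnit (hAB h3 hk₁)
  · obtain ⟨k, hk, hd⟩ := hϖp.exists_mem_finset_dvd h1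
    refine hndvd k ?_ hd
    simp only [Finset.mem_range, Finset.mem_erase] at hk
    omega

end Translates

/-! ### Extrapolation: vanishing of differential-type operators -/

section Extrapolation

open fwdDiff

/-- The value at `n` of the integer-valued polynomial with coordinates `q` in the binomial
basis. -/
def binomEval {s : ℕ} (q : Fin s → ℤ) (n : ℕ) : ℤ := ∑ l, q l * (n.choose l : ℤ)

/-- A `p`-adic interpolation property of an integer sequence `c`: modulo a number of linear
conditions proportional to `T`, the products of `c` with polynomials of degree `< s` have iterated
differences of step `p - 1` divisible by high powers of `p`. -/
def HasDivisibleDifferences (p : ℕ) (c : ℕ → ℤ) : Prop :=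
  ∃ e d : ℕ, ∀ s T : ℕ, ∃ (α : Type) (_ : Fintype α) (Φ : (Fin s → ℤ) → α),
    Fintype.card α ≤ p ^ (T * d) ∧ ∀ q q', Φ q = Φ q' → ∀ n K : ℕ,
      (p : ℤ) ^ min (K / 2) T ∣
        p ^ (s + e) * (Δ_[p - 1])^[K] (fun n => binomEval (q - q') n * c n) n

/-- The value at `i` of the difference operator with coefficients `q` applied to `c`. -/
def diffOp {N s : ℕ} (c : ℕ → ℤ) (q : Fin N → Fin s → ℤ) (i : ℕ) : ℤ :=
  ∑ j : Fin N, binomEval (q j) (i + j) * c (i + j)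

lemma diffOp_sub {N s : ℕ} (c : ℕ → ℤ) (q q' : Fin N → Fin s → ℤ) (i : ℕ) :
    diffOp c (q - q') i = diffOp c q i - diffOp c q' i := by
  simp only [diffOp, binomEval, Pi.sub_apply, sub_mul, Finset.sum_sub_distrib]

lemma abs_diffOp_le {N s : ℕ} {c : ℕ → ℤ} {C : ℕ} (hc : ∀ n, |c n| ≤ (C : ℤ) ^ (n + 1))
    (hC : 1 ≤ C) {q : Fin N → Fin s → ℤ} {H : ℤ} (hq : ∀ j l, |q j l| ≤ H) (i : ℕ) :
    |diffOp c q i| ≤ N * (s * (H * (2 * C) ^ (i + N + 1))) := by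
  have hC' : (1 : ℤ) ≤ C := by exact_mod_cast hC
  calc |diffOp c q i| ≤ ∑ j : Fin N, |binomEval (q j) (i + j) * c (i + j)| :=
        Finset.abs_sum_le_sum_abs _ _
    _ ≤ ∑ j : Fin N, (s * (H * (2 * C) ^ (i + N + 1)) : ℤ) := ?_
    _ = _ := by simp
  refine Finset.sum_le_sum fun j _ => ?_
  rw [binomEval, Finset.sum_mul]
  calc |∑ l, q j l * ((i + j : ℕ).choose l : ℤ) * c (i + j)|
      ≤ ∑ l, |q j l * ((i + j : ℕ).choose l : ℤ) * c (i + j)| := Finset.abs_sum_le_sum_abs _ _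
    _ ≤ ∑ l : Fin s, (H * (2 * C) ^ (i + N + 1) : ℤ) := ?_
    _ = _ := by simp
  refine Finset.sum_le_sum fun l _ => ?_
  have hH : 0 ≤ H := (abs_nonneg _).trans (hq j l)
  rw [abs_mul, abs_mul, mul_pow, mul_assoc]
  refine mul_le_mul (hq j l) (mul_le_mul ?_ ?_ (abs_nonneg _) (by positivity)) (by positivity) hH
  · rw [abs_of_nonneg (by positivity)]
    have : (i + j).choose l ≤ 2 ^ (i + N + 1) :=
      (Nat.choose_le_two_pow _ _).trans (Nat.pow_le_pow_right two_pos (by omega))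
    exact_mod_cast this
  · exact (hc _).trans (pow_le_pow_right₀ hC' (by omega))

lemma fwdDiff_iter_diffOp {N s : ℕ} (c : ℕ → ℤ) (q : Fin N → Fin s → ℤ) (h K n : ℕ) :
    (Δ_[h])^[K] (diffOp c q) n
      = ∑ j : Fin N, (Δ_[h])^[K] (fun n => binomEval (q j) n * c n) (n + j) := by
  simp only [fwdDiff_iter_eq_sum_shift, diffOp, Finset.smul_sum]
  rw [Finset.sum_comm]
  refine Finset.sum_congr rfl fun j _ => Finset.sum_congr rfl fun k _ => ?_
  rw [add_right_comm]

/-- If all earlier values in the progression vanish, an iterated difference is the last value. -/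
lemma fwdDiff_iter_eq_last {f : ℕ → ℤ} {h K n : ℕ} (hh : 0 < h)
    (hf : ∀ i < n + K * h, f i = 0) : (Δ_[h])^[K] f n = f (n + K * h) := by
  rw [fwdDiff_iter_eq_sum_shift, Finset.sum_range_succ, Finset.sum_eq_zero]
  · simp
  · intro k hk
    rw [hf, smul_zero]
    have := (Nat.mul_lt_mul_right hh).2 (Finset.mem_range.1 hk)
    simpa using this

/-- Pigeonhole construction of an operator with small coefficients. -/
lemma exists_small_diffOp {c : ℕ → ℤ} {C : ℕ} (hc : ∀ n, |c n| ≤ (C : ℤ) ^ (n + 1))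
    (hC : 1 ≤ C) (P : Finset ℕ) (e d : ℕ → ℕ)
    (hP : ∀ p ∈ P, ∀ s T : ℕ, ∃ (α : Type) (_ : Fintype α) (Φ : (Fin s → ℤ) → α),
      Fintype.card α ≤ p ^ (T * d p) ∧ ∀ q q', Φ q = Φ q' → ∀ n K : ℕ,
        (p : ℤ) ^ min (K / 2) T ∣
          p ^ (s + e p) * (Δ_[p - 1])^[K] (fun n => binomEval (q - q') n * c n) n)
    (N s A : ℕ) (hN : 0 < N) (hs : 0 < s) :
    ∃ q : Fin (2 * N) → Fin s → ℤ, q ≠ 0 ∧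
      (∀ j l, |q j l| ≤ 2 * (2 * N * (s * (2 * C) ^ (N * s + 2 * N + 1)))
        * ((∏ p ∈ P, p ^ d p : ℕ) : ℤ) ^ (2 * A)) ∧
      (∀ i < N * s, diffOp c q i = 0) ∧
      ∀ p ∈ P, ∀ n K : ℕ, (p : ℤ) ^ min (K / 2) (A * s) ∣
          p ^ (s + e p) * (Δ_[p - 1])^[K] (diffOp c q) n := by
  classical
  set E := ∏ p ∈ P, p ^ d p
  set V := 2 * N * (s * (2 * C) ^ (N * s + 2 * N + 1)) with hV
  set H := 2 * V * E ^ (2 * A) with hH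
  have hV0 : 0 < V := by positivity
  choose α hα Φ hcard hΦ using fun p : P => hP p p.2 s (A * s)
  have hb : ∀ (q : Fin (2 * N) → Fin s → Fin (H + 1)) (i : Fin (N * s)),
      diffOp c (fun j l => ((q j l : ℕ) : ℤ)) i ∈ Finset.Icc (-(H * V : ℤ)) (H * V) := by
    intro q i
    rw [Finset.mem_Icc, ← abs_le]
    refine (abs_diffOp_le hc hC (H := H) (fun j l => ?_) _).trans ?_
    · rw [abs_of_nonneg (by positivity)]
      exact_mod_cast Nat.lt_succ_iff.1 (q j l).2
    · rw [hV]
      push_cast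
      have : ((2 * C : ℤ)) ^ ((i : ℕ) + 2 * N + 1) ≤ (2 * C) ^ (N * s + 2 * N + 1) :=
        pow_le_pow_right₀ (by have : (1 : ℤ) ≤ C := by exact_mod_cast hC
                              linarith) (by have := i.2; omega)
      calc _ ≤ (2 * N : ℤ) * (s * (H * (2 * C) ^ (N * s + 2 * N + 1))) := by gcongr
        _ = _ := by ring
  let Ψ : (Fin (2 * N) → Fin s → Fin (H + 1)) →
      (Fin (N * s) → Finset.Icc (-(H * V : ℤ)) (H * V)) × ((p : P) → Fin (2 * N) → α p) :=
    fun q => (fun i => ⟨_, hb q i⟩, fun p j => Φ p fun l => ((q j l : ℕ) : ℤ))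
  have hlt : Fintype.card ((Fin (N * s) → Finset.Icc (-(H * V : ℤ)) (H * V)) ×
      ((p : P) → Fin (2 * N) → α p)) < Fintype.card (Fin (2 * N) → Fin s → Fin (H + 1)) := by
    have h1 : Fintype.card (Finset.Icc (-(H * V : ℤ)) (H * V)) = 2 * H * V + 1 := by
      rw [Fintype.card_coe, Int.card_Icc]
      have : (H * V : ℤ) + 1 - -(H * V) = ((2 * H * V + 1 : ℕ) : ℤ) := by push_cast; ring
      rw [this, Int.toNat_natCast]
    have h2 : ∏ p : P, Fintype.card (α p) ^ (2 * N) ≤ (E ^ (2 * A)) ^ (N * s) := by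
      calc _ ≤ ∏ p : P, ((p : ℕ) ^ (A * s * d p)) ^ (2 * N) :=
            Finset.prod_le_prod' fun p _ => Nat.pow_le_pow_left (hcard p) _
        _ = ∏ p : P, ((p : ℕ) ^ d p) ^ (2 * A * (N * s)) :=
            Finset.prod_congr rfl fun p _ => by rw [← pow_mul, ← pow_mul]; ring_nf
        _ = _ := by
          rw [Finset.prod_pow, ← pow_mul, Finset.prod_coe_sort P fun p => p ^ d p]
    simp only [Fintype.card_prod, Fintype.card_pi, Finset.prod_const, Finset.card_univ,
      Fintype.card_fin, h1]
    calc _ ≤ (2 * H * V + 1) ^ (N * s) * (E ^ (2 * A)) ^ (N * s) := Nat.mul_le_mul_left _ h2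
      _ ≤ (2 * V * (H + 1)) ^ (N * s) * (E ^ (2 * A)) ^ (N * s) := by
          gcongr
          nlinarith
      _ = (H * (H + 1)) ^ (N * s) := by rw [← mul_pow, hH]; ring
      _ < ((H + 1) * (H + 1)) ^ (N * s) :=
          Nat.pow_lt_pow_left (Nat.mul_lt_mul_of_pos_right (by omega) (by omega)) (by positivity)
      _ = _ := by rw [← pow_two, ← pow_mul, ← pow_mul]; ring_nf
  obtain ⟨q, q', hne, heq⟩ := Fintype.exists_ne_map_eq_of_card_lt Ψ hlt
  refine ⟨(fun j l => ((q j l : ℕ) : ℤ)) - fun j l => ((q' j l : ℕ) : ℤ), ?_, ?_, ?_, ?_⟩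
  · intro h0
    apply hne
    funext j l
    have := congrFun (congrFun h0 j) l
    simp only [Pi.sub_apply, Pi.zero_apply, sub_eq_zero, Nat.cast_inj] at this
    exact Fin.ext this
  · intro j l
    have h1 := (q j l).2
    have h2 := (q' j l).2
    have : |((q j l : ℕ) : ℤ) - ((q' j l : ℕ) : ℤ)| ≤ (H : ℤ) := by rw [abs_le]; omega
    simpa [hH, hV] using this
  · intro i hi
    have := congrArg Subtype.val (congrFun (congrArg Prod.fst heq) ⟨i, hi⟩)
    rw [diffOp_sub, sub_eq_zero]
    exact this
  · intro p hp n K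
    rw [fwdDiff_iter_diffOp, Finset.mul_sum]
    refine Finset.dvd_sum fun j _ => ?_
    exact hΦ ⟨p, hp⟩ _ _ (congrFun (congrFun (congrArg Prod.snd heq) ⟨p, hp⟩) j) _ _

/-- An integer of absolute value `< 2 ^ (L * M)` divisible by `p ^ (M / (4 * p))` for enough
primes `p` is zero. -/
lemma eq_zero_of_forall_prime_pow_dvd {P : Finset ℕ} (hP : ∀ p ∈ P, p.Prime) {L M : ℕ}
    (hPM : P.card ≤ M) (hsum : 4 * (L : ℝ) + 4 ≤ ∑ p ∈ P, 1 / (p : ℝ)) {R : ℤ}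
    (hdvd : ∀ p ∈ P, (p : ℤ) ^ (M / (4 * p)) ∣ R) (hR : |R| < 2 ^ (L * M)) : R = 0 := by
  by_contra h0
  have h1 : (∏ p ∈ P, (p : ℤ) ^ (M / (4 * p))) ∣ R := by
    refine Finset.prod_dvd_of_coprime (fun p hp q hq hpq => ?_) hdvd
    exact (Nat.isCoprime_iff_coprime.2 ((Nat.coprime_primes (hP p hp) (hP q hq)).2 hpq)).pow
  have h2 := Int.le_of_dvd (abs_pos.2 h0) ((dvd_abs _ _).2 h1)
  have h3 : (2 : ℤ) ^ (∑ p ∈ P, M / (4 * p)) ≤ ∏ p ∈ P, (p : ℤ) ^ (M / (4 * p)) := by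
    rw [← Finset.prod_pow_eq_pow_sum]
    refine Finset.prod_le_prod (fun _ _ => by positivity) fun p hp => ?_
    have : (2 : ℤ) ≤ p := by exact_mod_cast (hP p hp).two_le
    gcongr
  have h4 : L * M ≤ ∑ p ∈ P, M / (4 * p) := by
    have h5 : (M : ℝ) / 4 * (∑ p ∈ P, 1 / (p : ℝ)) ≤ ∑ p ∈ P, (((M / (4 * p) : ℕ) : ℝ) + 1) := by
      rw [Finset.mul_sum]
      refine Finset.sum_le_sum fun p hp => ?_
      have hp0 := (hP p hp).pos
      have h6 : M < 4 * p * (M / (4 * p) + 1) := Nat.lt_mul_div_succ _ (by omega)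
      have h7 : (M : ℝ) ≤ 4 * p * (((M / (4 * p) : ℕ) : ℝ) + 1) := by exact_mod_cast h6.le
      have hp1 : (0 : ℝ) < p := by exact_mod_cast hp0
      rw [div_mul_div_comm, mul_one, div_le_iff₀ (by positivity)]
      linarith
    rw [Finset.sum_add_distrib] at h5
    simp only [Finset.sum_const, nsmul_eq_mul, mul_one] at h5
    have h8 : (P.card : ℝ) ≤ M := by exact_mod_cast hPM
    have h9 := mul_le_mul_of_nonneg_left hsum (by positivity : (0 : ℝ) ≤ (M : ℝ) / 4)
    have : (L * M : ℝ) ≤ ((∑ p ∈ P, M / (4 * p) : ℕ) : ℝ) := by push_cast; nlinarith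
    exact_mod_cast this
  exact absurd (((pow_le_pow_right₀ one_le_two h4).trans h3).trans h2) hR.not_ge

/-- An integer sequence of at most exponential growth with divisible differences for a set of
primes with large reciprocal sum is annihilated to high order by operators with polynomial
coefficients. -/
theorem exists_diffOp_eq_zero {c : ℕ → ℤ} {C : ℕ} (hc : ∀ n, |c n| ≤ (C : ℤ) ^ (n + 1))
    (hC : 1 ≤ C) (hP : ∀ x : ℝ, ∃ P : Finset ℕ,
      (∀ p ∈ P, p.Prime ∧ HasDivisibleDifferences p c) ∧ x ≤ ∑ p ∈ P, 1 / (p : ℝ)) :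
    ∃ N, ∀ A s₀ : ℕ, ∃ s ≥ s₀, ∃ q : Fin N → Fin s → ℤ, q ≠ 0 ∧
      ∀ i < A * s, diffOp c q i = 0 := by
  classical
  set L := 256 * C ^ 2 with hL
  have hLpow : 256 * C ^ 2 ≤ 2 ^ L := Nat.lt_two_pow_self.le
  obtain ⟨P, hPg, hPs⟩ := hP (4 * (L : ℝ) + 4)
  have : ∀ p : ℕ, ∃ e d : ℕ, p ∈ P → ∀ s T : ℕ, ∃ (α : Type) (_ : Fintype α)
      (Φ : (Fin s → ℤ) → α), Fintype.card α ≤ p ^ (T * d) ∧ ∀ q q', Φ q = Φ q' → ∀ n K : ℕ,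
        (p : ℤ) ^ min (K / 2) T ∣
          p ^ (s + e) * (Δ_[p - 1])^[K] (fun n => binomEval (q - q') n * c n) n := by
    intro p
    by_cases hp : p ∈ P
    · obtain ⟨e, d, h⟩ := (hPg p hp).2
      exact ⟨e, d, fun _ => h⟩
    · exact ⟨0, 0, fun h => absurd h hp⟩
  choose e d hed using this
  set N := 8 * (P.sup id + 1) with hN
  refine ⟨2 * N, fun A s₀ => ?_⟩
  set Z := (2 * C) ^ (4 * N + 2) * (∏ p ∈ P, p ^ d p) ^ (2 * A) with hZ
  set s := s₀ + P.sup e + 1 + Z with hs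
  obtain ⟨q, hq0, hqH, hqM, hqd⟩ := exists_small_diffOp hc hC P e d hed N s A (by omega) (by omega)
  refine ⟨s, by omega, q, hq0, fun M => ?_⟩
  induction M using Nat.strong_induction_on with
  | _ M ih =>
  intro hMA
  by_cases hM : M < N * s
  · exact hqM M hM
  push Not at hM
  have hsM : s ≤ M := (Nat.le_mul_of_pos_left s (by omega)).trans hM
  refine eq_zero_of_forall_prime_pow_dvd (fun p hp => (hPg p hp).1) (L := L) (M := M) ?_ hPs ?_ ?_
  · have : P.card ≤ P.sup id + 1 := by
      refine (Finset.card_le_card fun p hp => ?_).trans_eq (Finset.card_range _)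
      exact Finset.mem_range.2 (Nat.lt_succ_iff.2 (Finset.le_sup (f := id) hp))
    have : N * 1 ≤ N * s := Nat.mul_le_mul_left _ (by omega)
    omega
  · intro p hp
    have hp2 := (hPg p hp).1.two_le
    have hpN : p ≤ P.sup id := Finset.le_sup (f := id) hp
    have hep : e p ≤ P.sup e := Finset.le_sup hp
    have hK : M / p * (p - 1) ≤ M :=
      (Nat.mul_le_mul_left _ (Nat.sub_le p 1)).trans (Nat.div_mul_le_self M p)
    have h1 := hqd p hp (M - M / p * (p - 1)) (M / p)
    rw [fwdDiff_iter_eq_last (by omega), Nat.sub_add_cancel hK] at h1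
    swap
    · intro i hi
      exact ih i (by omega) (by omega)
    have h2 : M / p / 2 ≤ A * s :=
      ((Nat.div_le_self _ _).trans (Nat.div_le_self _ _)).trans hMA.le
    rw [min_eq_left h2] at h1
    have h3 : s + e p + M / (4 * p) ≤ M / p / 2 := by
      have h4 : 2 * s ≤ M / (4 * p) := by
        rw [Nat.le_div_iff_mul_le (by omega)]
        refine le_trans ?_ hM
        rw [hN]
        nlinarith
      have h5 : 2 * (M / (4 * p)) ≤ M / p / 2 := by
        rw [Nat.div_div_eq_div_mul, Nat.le_div_iff_mul_le (by omega)]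
        have := Nat.div_mul_le_self M (4 * p)
        calc _ = M / (4 * p) * (4 * p) := by ring
          _ ≤ M := this
      omega
    have h6 := (pow_dvd_pow (p : ℤ) h3).trans h1
    rw [pow_add] at h6
    exact Int.dvd_of_mul_dvd_mul_left (by positivity) h6
  · set V : ℤ := 2 * N * (s * (2 * C) ^ (N * s + 2 * N + 1)) with hV
    set E : ℤ := ((∏ p ∈ P, p ^ d p : ℕ) : ℤ)
    have hC' : (1 : ℤ) ≤ C := by exact_mod_cast hC
    have hNs : (N * s : ℤ) ≤ M := by exact_mod_cast hM
    have hZs : (2 * C : ℤ) ^ (4 * N + 2) * E ^ (2 * A) < 2 ^ M := by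
      have : Z < 2 ^ M := (show Z < s by omega).trans_le (hsM.trans Nat.lt_two_pow_self.le)
      have : (Z : ℤ) < 2 ^ M := by exact_mod_cast this
      simpa only [hZ, Nat.cast_mul, Nat.cast_pow, Nat.cast_ofNat] using this
    have hM2 : (M : ℤ) ≤ 2 ^ M := by exact_mod_cast Nat.lt_two_pow_self.le
    have hM0 : 0 < M := by omega
    have h2C : (2 * C : ℤ) ^ (N * s) ≤ (2 * C) ^ M := pow_le_pow_right₀ (by linarith) hM
    have h8 : (8 : ℤ) ≤ 8 ^ M := le_self_pow₀ (by norm_num) hM0.ne'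
    calc |diffOp c q M|
        ≤ ((2 * N : ℕ) : ℤ) * (s * (2 * V * E ^ (2 * A) * (2 * C) ^ (M + 2 * N + 1))) :=
          abs_diffOp_le hc hC hqH M
      _ = 8 * (N * s) ^ 2 * ((2 * C) ^ (N * s) * (2 * C) ^ M)
            * ((2 * C : ℤ) ^ (4 * N + 2) * E ^ (2 * A)) := by rw [hV]; push_cast; ring
      _ ≤ 8 * M ^ 2 * ((2 * C) ^ M * (2 * C) ^ M)
            * ((2 * C : ℤ) ^ (4 * N + 2) * E ^ (2 * A)) := by gcongr
      _ < 8 * M ^ 2 * ((2 * C) ^ M * (2 * C) ^ M) * 2 ^ M := by gcongr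
      _ ≤ 8 ^ M * (2 ^ M) ^ 2 * ((2 * C) ^ M * (2 * C) ^ M) * 2 ^ M := by gcongr
      _ = (256 * C ^ 2) ^ M := by
          simp only [← pow_mul, mul_comm M 2]
          simp only [pow_mul, ← mul_pow]
          ring_nf
      _ ≤ (2 ^ L) ^ M := by
          have : (256 * C ^ 2 : ℤ) ≤ 2 ^ L := by exact_mod_cast hLpow
          gcongr
      _ = _ := by rw [← pow_mul]

end Extrapolation

/-! ### From vanishing operators to monomial denominators -/

section Relation

variable {F : Type*} [Field F]

/-- The polynomial with coordinates `q` in the binomial basis. -/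
noncomputable def binomPoly (F : Type*) [Field F] {s : ℕ} (q : Fin s → ℤ) : F[X] :=
  ∑ l : Fin s, C ((q l : F) / ((l : ℕ).factorial : F)) * descPochhammer F l

lemma eval_binomPoly [CharZero F] {s : ℕ} (q : Fin s → ℤ) (n : ℕ) :
    (binomPoly F q).eval (n : F) = (binomEval q n : F) := by
  simp only [binomPoly, binomEval, eval_finsetSum, eval_mul, eval_C, Int.cast_sum, Int.cast_mul,
    Int.cast_natCast, Nat.cast_choose_eq_descPochhammer_div]
  refine Finset.sum_congr rfl fun l _ => ?_
  ring

lemma degree_binomPoly_lt {s : ℕ} (q : Fin s → ℤ) : (binomPoly F q).degree < s := by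
  refine (degree_sum_le _ _).trans_lt ((Finset.sup_lt_iff (WithBot.bot_lt_coe s)).2 fun l _ => ?_)
  refine degree_le_natDegree.trans_lt (Nat.cast_lt.2 ((natDegree_C_mul_le _ _).trans_lt ?_))
  rw [descPochhammer_natDegree]
  exact l.2

lemma binomPoly_ne_zero [CharZero F] {s : ℕ} {q : Fin s → ℤ} (hq : q ≠ 0) :
    binomPoly F q ≠ 0 := by
  intro h0
  have hv : ∀ n, binomEval q n = 0 := fun n => by
    have := eval_binomPoly (F := F) q n
    rw [h0, eval_zero] at this
    exact_mod_cast this.symm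
  have hz : ∀ n, ∀ hn : n < s, q ⟨n, hn⟩ = 0 := by
    intro n
    induction n using Nat.strong_induction_on with
    | _ n ih =>
    intro hn
    have := hv n
    rw [binomEval, Finset.sum_eq_single ⟨n, hn⟩] at this
    · simpa using this
    · intro l _ hl
      rcases lt_or_gt_of_ne (fun h => hl (Fin.ext h) : (l : ℕ) ≠ n) with h | h
      · rw [ih l h l.2, zero_mul]
      · rw [Nat.choose_eq_zero_of_lt h, Nat.cast_zero, mul_zero]
    · simp
  exact hq (funext fun l => hz l l.2)

variable {ι : Type*} [Fintype ι]

/-- A sequence `c = A / B` annihilated to high order by operators with polynomial coefficients has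
a denominator `B` which is a monomial. -/
theorem exists_monomial_of_diffOp_eq_zero [CharZero F] {γ : ι → F} (hγ : MulIndep γ)
    {A B : MvPolynomial ι F[X]} (hAB : IsRelPrime A B) (hB : B ≠ 0) {c : ℕ → ℤ}
    (hc : ∀ n, evalAt γ n B * c n = evalAt γ n A) {N : ℕ}
    (hN : ∀ M s₀ : ℕ, ∃ s ≥ s₀, ∃ q : Fin N → Fin s → ℤ, q ≠ 0 ∧ ∀ i < M * s, diffOp c q i = 0) :
    ∃ (μ : ι →₀ ℕ) (H : F[X]), B = MvPolynomial.monomial μ H := by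
  classical
  let G : ℕ → MvPolynomial ι F[X] := fun j =>
    translate γ j A * ∏ k ∈ (Finset.range N).erase j, translate γ k B
  let S := (Finset.range N).biUnion fun j => (G j).support
  let D := (Finset.range N).sup fun j => S.sup fun μ => ((G j).coeff μ).natDegree
  obtain ⟨s, hs, q, hq0, hq⟩ := hN (S.card * (1 + D)) 1
  let Q : ℕ → F[X] := fun j =>
    if h : j < N then (binomPoly F (q ⟨j, h⟩)).comp (X + C (j : F)) else 0
  have hQd : ∀ j, (Q j).degree < s := by
    intro j
    simp only [Q]
    split_ifs with h
    · rw [degree_lt_iff_coeff_zero]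
      intro m hm
      refine coeff_eq_zero_of_degree_lt (lt_of_lt_of_le ?_ (Nat.cast_le.2 hm))
      by_cases h0 : binomPoly F (q ⟨j, h⟩) = 0
      · rw [h0, zero_comp, degree_zero]; exact WithBot.bot_lt_coe s
      refine degree_le_natDegree.trans_lt ?_
      rw [natDegree_comp, natDegree_X_add_C, mul_one]
      have := degree_binomPoly_lt (F := F) (q ⟨j, h⟩)
      rwa [degree_eq_natDegree h0] at this
    · rw [degree_zero]; exact WithBot.bot_lt_coe s
  let f : MvPolynomial ι F[X] := ∑ j ∈ Finset.range N, MvPolynomial.C (Q j) * G j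
  have hcoeff : ∀ μ, f.coeff μ = ∑ j ∈ Finset.range N, Q j * (G j).coeff μ := by
    intro μ
    simp only [f, MvPolynomial.coeff_sum, MvPolynomial.coeff_C_mul]
  have hS : f.support ⊆ S := by
    intro μ hμ
    rw [MvPolynomial.mem_support_iff, hcoeff] at hμ
    obtain ⟨j, hj, hne⟩ := Finset.exists_ne_zero_of_sum_ne_zero hμ
    exact Finset.mem_biUnion.2 ⟨j, hj, MvPolynomial.mem_support_iff.2 (right_ne_zero_of_mul hne)⟩
  have hdeg : ∀ μ, (f.coeff μ).degree < (s + D : ℕ) := by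
    intro μ
    rw [hcoeff]
    refine (degree_sum_le _ _).trans_lt
      ((Finset.sup_lt_iff (WithBot.bot_lt_coe _)).2 fun j hj => ?_)
    by_cases h0 : (G j).coeff μ = 0
    · rw [h0, mul_zero, degree_zero]; exact WithBot.bot_lt_coe _
    by_cases hQ0 : Q j = 0
    · rw [hQ0, zero_mul, degree_zero]; exact WithBot.bot_lt_coe _
    have h1 := hQd j
    rw [degree_eq_natDegree hQ0, Nat.cast_lt] at h1
    rw [degree_mul, degree_eq_natDegree hQ0, degree_eq_natDegree h0, ← Nat.cast_add, Nat.cast_lt]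
    have h2 : μ ∈ S := Finset.mem_biUnion.2 ⟨j, hj, MvPolynomial.mem_support_iff.2 h0⟩
    have h3 : ((G j).coeff μ).natDegree ≤ S.sup fun μ => ((G j).coeff μ).natDegree :=
      Finset.le_sup (f := fun μ => ((G j).coeff μ).natDegree) h2
    have h4 : (S.sup fun μ => ((G j).coeff μ).natDegree) ≤ D :=
      Finset.le_sup (f := fun j => S.sup fun μ => ((G j).coeff μ).natDegree) hj
    omega
  have hval : ∀ n, evalAt γ n f
      = (diffOp c q n : F) * ∏ k ∈ Finset.range N, evalAt γ (n + k) B := by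
    intro n
    have htr : ∀ (k : ℕ) (g : MvPolynomial ι F[X]),
        evalAt γ n (translate γ k g) = evalAt γ (n + k) g :=
      fun k g => evalAt_translate hγ.1 k n (n + k) (by push_cast; rfl) g
    simp only [f, G, map_sum, map_mul, map_prod, htr, evalAt_C, diffOp, Int.cast_sum,
      Finset.sum_mul, Finset.sum_range]
    refine Finset.sum_congr rfl fun j _ => ?_
    rw [← hc, ← Finset.mul_prod_erase _ _ (Finset.mem_range.2 j.2)]
    simp only [Q, j.2, dite_true, eval_comp, eval_add, eval_X, eval_C, Fin.eta]
    rw [← Nat.cast_add, eval_binomPoly]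
    push_cast
    ring
  have hf0 : f = 0 := by
    refine eq_zero_of_evalAt_eq_zero hγ f S hS (s + D) hdeg 0 one_ne_zero fun z hz => ?_
    rw [zero_add, one_mul, hval, hq z ?_, Int.cast_zero, zero_mul]
    refine hz.trans_le ?_
    rw [mul_assoc]
    refine Nat.mul_le_mul_left _ ?_
    nlinarith
  refine exists_monomial_of_isElementary hB fun π hπ hπB =>
    isElementary_of_relation hγ hAB hB (N := N) (q := Q) ?_ ?_ hπ hπB
  · obtain ⟨j, hj⟩ := Function.ne_iff.1 hq0
    refine ⟨j, j.2, ?_⟩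
    simp only [Q, j.2, dite_true, Fin.eta]
    intro h0
    have := binomPoly_ne_zero (F := F) hj
    rcases comp_eq_zero_iff.1 h0 with h | ⟨-, h⟩
    · exact this h
    · have := congrArg natDegree h
      rw [natDegree_X_add_C, natDegree_C] at this
      omega
  · simpa only [f, G, mul_assoc] using hf0

end Relation

/-! ### Evaluation of `p`-adic power series -/

section PadicEvaluation

open scoped PowerSeries.WithPiTopology

variable {p : ℕ} [Fact p.Prime]

instance isLinearTopology_padicInt : IsLinearTopology ℤ_[p] ℤ_[p] := by
  refine IsLinearTopology.mk_of_hasBasis ℤ_[p] (p := fun _ : ℕ => True)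
    (s := fun n : ℕ => (Ideal.span {(p : ℤ_[p]) ^ n} : Ideal ℤ_[p])) ?_
  have hp : (1 : ℝ) < p := by exact_mod_cast (Fact.out : p.Prime).one_lt
  have h := Metric.nhds_basis_closedBall_pow (x := (0 : ℤ_[p])) (r := (p : ℝ)⁻¹)
    (by positivity) (inv_lt_one_of_one_lt₀ hp)
  refine h.congr (fun _ => Iff.rfl) fun n _ => ?_
  ext x
  rw [mem_closedBall_zero_iff, SetLike.mem_coe, ← PadicInt.norm_le_pow_iff_mem_span_pow, zpow_neg,
    zpow_natCast, inv_pow]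

lemma hasEval_p_mul (y : ℤ_[p]) : PowerSeries.HasEval ((p : ℤ_[p]) * y) := by
  refine tendsto_pow_atTop_nhds_zero_of_norm_lt_one ?_
  rw [norm_mul]
  refine mul_lt_one_of_nonneg_of_lt_one_left (norm_nonneg _) ?_ (PadicInt.norm_le_one y)
  rw [PadicInt.norm_p]
  exact inv_lt_one_of_one_lt₀ (by exact_mod_cast (Fact.out : p.Prime).one_lt)

/-- Evaluation of a power series over `ℤ_[p]` at `p * y`. -/
noncomputable def evalP (y : ℤ_[p]) : PowerSeries ℤ_[p] →+* ℤ_[p] :=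
  (PowerSeries.aeval (R := ℤ_[p]) (hasEval_p_mul y)).toRingHom

lemma evalP_coe (y : ℤ_[p]) (P : ℤ_[p][X]) : evalP y P = P.eval (p * y) := by
  rw [evalP, AlgHom.toRingHom_eq_coe, RingHom.coe_coe, PowerSeries.aeval_coe,
    Polynomial.coe_aeval_eq_eval]

lemma evalP_X (y : ℤ_[p]) : evalP y PowerSeries.X = p * y := by
  rw [← Polynomial.coe_X, evalP_coe, eval_X]

lemma evalP_C (y a : ℤ_[p]) : evalP y (PowerSeries.C a) = a := by
  rw [← Polynomial.coe_C, evalP_coe, eval_C]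

lemma hasSum_evalP {α : Type*} (y : ℤ_[p]) {f : α → PowerSeries ℤ_[p]} {g : PowerSeries ℤ_[p]}
    (h : HasSum f g) : HasSum (fun i => evalP y (f i)) (evalP y g) :=
  h.map (evalP y) (PowerSeries.continuous_aeval (hasEval_p_mul y))

variable (p) in
/-- Functions of the form `V₀(p z²) + p z V₁(p z²)` with `V₀, V₁` power series over `ℤ_[p]`. -/
noncomputable def analyticSubring : Subring (ℕ → ℤ_[p]) where
  carrier := {f | ∃ V₀ V₁ : PowerSeries ℤ_[p], ∀ z : ℕ,
    f z = evalP ((z : ℤ_[p]) ^ 2) V₀ + p * z * evalP ((z : ℤ_[p]) ^ 2) V₁}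
  mul_mem' := by
    rintro f g ⟨V₀, V₁, hf⟩ ⟨U₀, U₁, hg⟩
    refine ⟨V₀ * U₀ + PowerSeries.C (p : ℤ_[p]) * PowerSeries.X * (V₁ * U₁),
      V₀ * U₁ + V₁ * U₀, fun z => ?_⟩
    simp only [Pi.mul_apply, hf, hg, map_add, map_mul, evalP_X, evalP_C]
    ring
  one_mem' := ⟨1, 0, fun z => by simp⟩
  add_mem' := by
    rintro f g ⟨V₀, V₁, hf⟩ ⟨U₀, U₁, hg⟩
    refine ⟨V₀ + U₀, V₁ + U₁, fun z => ?_⟩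
    simp only [Pi.add_apply, hf, hg, map_add]
    ring
  zero_mem' := ⟨0, 0, fun z => by simp⟩
  neg_mem' := by
    rintro f ⟨V₀, V₁, hf⟩
    refine ⟨-V₀, -V₁, fun z => ?_⟩
    simp only [Pi.neg_apply, hf, map_neg]
    ring

/-- A polynomial function multiplied by a power of `p` at least half the degree is a polynomial in
`p z²` plus `p z` times a polynomial in `p z²`. -/
lemma exists_even_odd_decomposition (F : ℤ_[p][X]) {e : ℕ} (he : F.natDegree ≤ 2 * e) :
    ∃ u₀ u₁ : ℤ_[p][X], ∀ z : ℕ, (p : ℤ_[p]) ^ e * F.eval (z : ℤ_[p])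
      = u₀.eval (p * (z : ℤ_[p]) ^ 2) + p * z * u₁.eval (p * (z : ℤ_[p]) ^ 2) := by
  have h : ∀ i, ∃ u₀ u₁ : ℤ_[p][X], i ≤ 2 * e → ∀ z : ℕ,
      (p : ℤ_[p]) ^ e * (F.coeff i * (z : ℤ_[p]) ^ i)
        = u₀.eval (p * (z : ℤ_[p]) ^ 2) + p * z * u₁.eval (p * (z : ℤ_[p]) ^ 2) := by
    intro i
    rcases Nat.even_or_odd' i with ⟨k, rfl | rfl⟩
    · refine ⟨C (p ^ (e - k) * F.coeff (2 * k)) * X ^ k, 0, fun hi z => ?_⟩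
      simp only [eval_mul, eval_C, eval_pow, eval_X, eval_zero, mul_zero, add_zero]
      obtain ⟨m, rfl⟩ := Nat.exists_eq_add_of_le (show k ≤ e by omega)
      rw [Nat.add_sub_cancel_left]
      ring
    · refine ⟨0, C (p ^ (e - k - 1) * F.coeff (2 * k + 1)) * X ^ k, fun hi z => ?_⟩
      simp only [eval_mul, eval_C, eval_pow, eval_X, eval_zero, zero_add]
      obtain ⟨m, rfl⟩ := Nat.exists_eq_add_of_le (show k + 1 ≤ e by omega)
      rw [show k + 1 + m - k - 1 = m by omega]
      ring
  choose u₀ u₁ hu using h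
  refine ⟨∑ i ∈ Finset.range (2 * e + 1), u₀ i, ∑ i ∈ Finset.range (2 * e + 1), u₁ i,
    fun z => ?_⟩
  rw [eval_eq_sum_range' (Nat.lt_succ_of_le he), Finset.mul_sum, eval_finsetSum, eval_finsetSum,
    Finset.mul_sum, ← Finset.sum_add_distrib]
  exact Finset.sum_congr rfl fun i hi => hu i (Nat.lt_succ_iff.1 (Finset.mem_range.1 hi)) z

lemma factorial_dvd_pow (hp : 5 ≤ p) (m : ℕ) :
    ((m.factorial : ℕ) : ℤ_[p]) ∣ (p : ℤ_[p]) ^ (m / 4) := by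
  have h := sub_one_mul_padicValNat_factorial (p := p) m
  have hv : padicValNat p m.factorial ≤ m / 4 := by
    rw [Nat.le_div_iff_mul_le (by norm_num)]
    calc _ ≤ padicValNat p m.factorial * (p - 1) := Nat.mul_le_mul_left _ (by omega)
      _ = (p - 1) * padicValNat p m.factorial := mul_comm _ _
      _ ≤ m := by rw [h]; exact Nat.sub_le _ _
  have hne : ((m.factorial : ℕ) : ℤ_[p]) ≠ 0 := by exact_mod_cast m.factorial_ne_zero
  have h1 := PadicInt.unitCoeff_spec hne
  rw [h1]
  refine (Units.mul_left_dvd).2 (pow_dvd_pow _ (le_trans (le_of_eq ?_) hv))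
  rw [← Nat.cast_inj (R := ℤ), ← PadicInt.valuation_coe, PadicInt.coe_natCast,
    Padic.valuation_natCast]

lemma cast_choose_mul_factorial {R : Type*} [CommRing R] (n m : ℕ) :
    (n.choose m : R) * (m.factorial : R) = (descPochhammer R m).eval (n : R) := by
  rw [descPochhammer_eval_eq_descFactorial, Nat.descFactorial_eq_factorial_mul_choose, mul_comm]
  push_cast
  rfl

/-- Binomial coefficients along an arithmetic progression. -/
lemma exists_choose_decomposition (hp : 5 ≤ p) (r k m : ℕ) :
    ∃ u₀ u₁ : ℤ_[p][X], ∀ z : ℕ,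
      (p : ℤ_[p]) ^ (m / 4 + (m + 1) / 2) * ((r + k * z).choose m : ℤ_[p])
      = u₀.eval (p * (z : ℤ_[p]) ^ 2) + p * z * u₁.eval (p * (z : ℤ_[p]) ^ 2) := by
  obtain ⟨κ, hκ⟩ := factorial_dvd_pow hp m
  obtain ⟨u₀, u₁, hu⟩ := exists_even_odd_decomposition
    (C κ * (descPochhammer ℤ_[p] m).comp (C (r : ℤ_[p]) + C (k : ℤ_[p]) * X)) (e := (m + 1) / 2) (by
      refine (natDegree_C_mul_le _ _).trans (natDegree_comp_le.trans ?_)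
      rw [descPochhammer_natDegree]
      have : (C (r : ℤ_[p]) + C (k : ℤ_[p]) * X).natDegree ≤ 1 := by compute_degree
      calc _ ≤ m * 1 := Nat.mul_le_mul_left _ this
        _ ≤ _ := by omega)
  refine ⟨u₀, u₁, fun z => ?_⟩
  rw [← hu, eval_mul, eval_C, eval_comp, eval_add, eval_mul, eval_X, eval_C, eval_C]
  have := cast_choose_mul_factorial (R := ℤ_[p]) (r + k * z) m
  push_cast at this
  rw [← this, pow_add, hκ]
  ring

lemma one_add_p_mul_pow_mem_analyticSubring (hp : 5 ≤ p) (τ : ℤ_[p]) :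
    (fun z : ℕ => (1 + p * τ) ^ z) ∈ analyticSubring p := by
  choose u₀ u₁ hu using exists_choose_decomposition hp 0 1
  let δ : ℕ → ℕ := fun m => m - m / 4 - (m + 1) / 2
  have hδ : Tendsto δ atTop atTop :=
    tendsto_atTop_atTop.2 fun b => ⟨4 * b + 4, fun a ha => by simp only [δ]; omega⟩
  have hp1 : (p : ℝ)⁻¹ < 1 :=
    inv_lt_one_of_one_lt₀ (by exact_mod_cast (Fact.out : p.Prime).one_lt)
  have hsum : ∀ u : ℕ → ℤ_[p][X], Summable fun m =>
      (PowerSeries.C (τ ^ m * p ^ δ m) * (u m : PowerSeries ℤ_[p]) : PowerSeries ℤ_[p]) := by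
    intro u
    rw [PowerSeries.WithPiTopology.summable_iff_summable_coeff]
    intro d
    refine NonarchimedeanAddGroup.summable_of_tendsto_cofinite_zero ?_
    rw [Nat.cofinite_eq_atTop]
    refine squeeze_zero_norm (a := fun m => ((p : ℝ)⁻¹) ^ δ m) (fun m => ?_)
      ((tendsto_pow_atTop_nhds_zero_of_lt_one (by positivity) hp1).comp hδ)
    rw [PowerSeries.coeff_C_mul, norm_mul, norm_mul, norm_pow, norm_pow, PadicInt.norm_p]
    calc ‖τ‖ ^ m * (p : ℝ)⁻¹ ^ δ m * ‖_‖ ≤ 1 * (p : ℝ)⁻¹ ^ δ m * 1 := by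
          gcongr
          · exact pow_le_one₀ (norm_nonneg _) (PadicInt.norm_le_one τ)
          · exact PadicInt.norm_le_one _
      _ = _ := by ring
  obtain ⟨V₀, hV₀⟩ := hsum u₀
  obtain ⟨V₁, hV₁⟩ := hsum u₁
  refine ⟨V₀, V₁, fun z => ?_⟩
  have h1 := (hasSum_evalP ((z : ℤ_[p]) ^ 2) hV₀).add
    ((hasSum_evalP ((z : ℤ_[p]) ^ 2) hV₁).mul_left ((p : ℤ_[p]) * z))
  have hterm : ∀ m, evalP ((z : ℤ_[p]) ^ 2)
      (PowerSeries.C (τ ^ m * p ^ δ m) * (u₀ m : PowerSeries ℤ_[p]))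
      + p * z * evalP ((z : ℤ_[p]) ^ 2) (PowerSeries.C (τ ^ m * p ^ δ m) *
        (u₁ m : PowerSeries ℤ_[p]))
      = (p * τ) ^ m * (z.choose m : ℤ_[p]) := by
    intro m
    have h2 := hu m z
    rw [zero_add, one_mul] at h2
    rw [map_mul (evalP _), map_mul (evalP _), evalP_C, evalP_coe, evalP_coe, mul_left_comm,
      ← mul_add, ← h2, mul_pow]
    have h3 : m = δ m + (m / 4 + (m + 1) / 2) := by simp only [δ]; omega
    have h4 : (p : ℤ_[p]) ^ m = p ^ δ m * p ^ (m / 4 + (m + 1) / 2) := by rw [← pow_add, ← h3]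
    rw [h4]
    ring
  simp only [hterm] at h1
  have h5 : HasSum (fun m => (p * τ) ^ m * (z.choose m : ℤ_[p]))
      (∑ m ∈ Finset.range (z + 1), (p * τ) ^ m * (z.choose m : ℤ_[p])) := by
    refine hasSum_sum_of_ne_finset_zero fun m hm => ?_
    rw [Nat.choose_eq_zero_of_lt (by simpa using hm), Nat.cast_zero, mul_zero]
  rw [h1.unique h5]
  simp only [add_comm (1 : ℤ_[p])]
  rw [add_pow]
  simp

open fwdDiff in
lemma pow_dvd_fwdDiff_iter {f : ℕ → ℤ_[p]} (hf : f ∈ analyticSubring p) (K n : ℕ) :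
    (p : ℤ_[p]) ^ (K / 2) ∣ (Δ_[1])^[K] f n := by
  obtain ⟨V₀, V₁, hf⟩ := hf
  rcases Nat.eq_zero_or_pos (K / 2) with h0 | h0
  · rw [h0, pow_zero]; exact one_dvd _
  obtain ⟨k, hk⟩ := Nat.exists_eq_add_of_le' h0
  let P : ℤ_[p][X] := (PowerSeries.trunc (k + 1) V₀).comp (C (p : ℤ_[p]) * X ^ 2)
    + C (p : ℤ_[p]) * X * (PowerSeries.trunc (k + 1) V₁).comp (C (p : ℤ_[p]) * X ^ 2)
  have hdeg : ∀ V : PowerSeries ℤ_[p],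
      ((PowerSeries.trunc (k + 1) V).comp (C (p : ℤ_[p]) * X ^ 2)).natDegree ≤ k * 2 := by
    intro V
    refine natDegree_comp_le.trans (Nat.mul_le_mul ?_ (natDegree_C_mul_X_pow_le _ _))
    exact Nat.lt_succ_iff.1 (PowerSeries.natDegree_trunc_lt V k)
  have hP : P.natDegree < K := by
    refine (natDegree_add_le_of_degree_le (n := 2 * k + 1) ((hdeg V₀).trans (by omega)) ?_).trans_lt
      (by omega)
    refine natDegree_mul_le.trans ?_
    have := hdeg V₁
    have : (C (p : ℤ_[p]) * X).natDegree ≤ 1 := by compute_degree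
    omega
  have hmod : ∀ z : ℕ, (p : ℤ_[p]) ^ (K / 2) ∣ f z - P.eval (z : ℤ_[p]) := by
    intro z
    have hV : ∀ V : PowerSeries ℤ_[p], (p : ℤ_[p]) ^ (K / 2) ∣ evalP ((z : ℤ_[p]) ^ 2) V
        - (PowerSeries.trunc (k + 1) V).eval (p * (z : ℤ_[p]) ^ 2) := by
      intro V
      conv_rhs => rw [PowerSeries.eq_X_pow_mul_shift_add_trunc (k + 1) V]
      rw [map_add, map_mul, map_pow, evalP_X, evalP_coe]
      rw [← PowerSeries.eq_X_pow_mul_shift_add_trunc (k + 1) V, add_sub_cancel_right, hk, mul_pow,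
        mul_assoc]
      exact dvd_mul_right _ _
    have : f z - P.eval (z : ℤ_[p]) = (evalP ((z : ℤ_[p]) ^ 2) V₀
        - (PowerSeries.trunc (k + 1) V₀).eval (p * (z : ℤ_[p]) ^ 2))
        + p * z * (evalP ((z : ℤ_[p]) ^ 2) V₁
        - (PowerSeries.trunc (k + 1) V₁).eval (p * (z : ℤ_[p]) ^ 2)) := by
      simp only [hf, P, eval_add, eval_mul, eval_comp, eval_C, eval_pow, eval_X]
      ring
    rw [this]
    exact dvd_add (hV V₀) ((hV V₁).mul_left _)
  have h1 := congrFun (Polynomial.fwdDiff_iter_eq_zero_of_degree_lt hP) (n : ℤ_[p])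
  rw [fwdDiff_iter_eq_sum_shift] at h1 ⊢
  rw [← sub_zero (Finset.sum _ _), ← Pi.zero_apply (M := fun _ => ℤ_[p]) (n : ℤ_[p]), ← h1,
    ← Finset.sum_sub_distrib]
  refine Finset.dvd_sum fun i _ => ?_
  rw [← smul_sub, zsmul_eq_mul]
  refine Dvd.dvd.mul_left ?_ _
  simpa using hmod (n + i • 1)

end PadicEvaluation

/-! ### Weierstrass preparation -/

section Weierstrass

variable {p : ℕ} [Fact p.Prime]

lemma evalP_mem_analyticSubring (V : PowerSeries ℤ_[p]) :
    (fun z : ℕ => evalP ((z : ℤ_[p]) ^ 2) V) ∈ analyticSubring p :=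
  ⟨V, 0, fun z => by simp⟩

lemma p_mul_mem_analyticSubring : (fun z : ℕ => (p : ℤ_[p]) * z) ∈ analyticSubring p :=
  ⟨0, 1, fun z => by simp⟩

lemma const_mem_analyticSubring (a : ℤ_[p]) : (fun _ : ℕ => a) ∈ analyticSubring p :=
  ⟨PowerSeries.C a, 0, fun z => by simp [evalP_C]⟩

lemma sq_sub_p_mul_X_mul_sq_ne_zero {V₀ V₁ : PowerSeries ℤ_[p]} (h : V₀ ≠ 0 ∨ V₁ ≠ 0) :
    V₀ ^ 2 - PowerSeries.C (p : ℤ_[p]) * PowerSeries.X * V₁ ^ 2 ≠ 0 := by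
  intro h0
  rw [sub_eq_zero] at h0
  have hpX : PowerSeries.C (p : ℤ_[p]) * PowerSeries.X ≠ 0 :=
    mul_ne_zero ((map_ne_zero_iff _ PowerSeries.C_injective).2
      (by exact_mod_cast (Fact.out : p.Prime).ne_zero)) PowerSeries.X_ne_zero
  have h1 : V₁ ≠ 0 := by
    rintro rfl
    rw [zero_pow two_ne_zero, mul_zero, sq_eq_zero_iff] at h0
    simp [h0] at h
  have h2 : V₀ ≠ 0 := by
    rintro rfl
    rw [zero_pow two_ne_zero, eq_comm, mul_eq_zero, sq_eq_zero_iff] at h0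
    exact h0.elim hpX h1
  have h3 := congrArg PowerSeries.order h0
  have hC : (PowerSeries.C (p : ℤ_[p])).order = 0 :=
    PowerSeries.order_eq_nat.2 ⟨by simpa using (Fact.out : p.Prime).ne_zero, by simp⟩
  rw [PowerSeries.order_pow, PowerSeries.order_mul, PowerSeries.order_mul, hC,
    PowerSeries.order_X, PowerSeries.order_pow] at h3
  obtain ⟨a, ha⟩ := ENat.ne_top_iff_exists.1 (PowerSeries.order_eq_top.not.2 h2)
  obtain ⟨b, hb⟩ := ENat.ne_top_iff_exists.1 (PowerSeries.order_eq_top.not.2 h1)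
  rw [← ha, ← hb] at h3
  have h4 : 2 * a = 1 + 2 * b := by
    simp only [nsmul_eq_mul, zero_add] at h3
    exact_mod_cast h3
  omega

lemma exists_eq_C_pow_mul {V : PowerSeries ℤ_[p]} (hV : V ≠ 0) :
    ∃ (e : ℕ) (G : PowerSeries ℤ_[p]), V = PowerSeries.C ((p : ℤ_[p]) ^ e) * G ∧
      G.map (IsLocalRing.residue ℤ_[p]) ≠ 0 := by
  classical
  have hex : ∃ e i, V.coeff i ≠ 0 ∧ (V.coeff i).valuation = e := by
    obtain ⟨i, hi⟩ := (PowerSeries.exists_coeff_ne_zero_iff_ne_zero).2 hV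
    exact ⟨_, i, hi, rfl⟩
  obtain ⟨i, hi, hie⟩ := Nat.find_spec hex
  have hdvd : ∀ j, (p : ℤ_[p]) ^ Nat.find hex ∣ V.coeff j := by
    intro j
    by_cases hj : V.coeff j = 0
    · rw [hj]; exact dvd_zero _
    rw [← Ideal.mem_span_singleton, PadicInt.mem_span_pow_iff_le_valuation _ hj]
    exact Nat.find_min' hex ⟨j, hj, rfl⟩
  choose g hg using hdvd
  refine ⟨Nat.find hex, PowerSeries.mk g, ?_, fun h0 => ?_⟩
  · ext j
    rw [PowerSeries.coeff_C_mul, PowerSeries.coeff_mk, ← hg]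
  · have h1 := congrArg (PowerSeries.coeff i) h0
    rw [PowerSeries.coeff_map, PowerSeries.coeff_mk, map_zero, IsLocalRing.residue_eq_zero_iff,
      PadicInt.maximalIdeal_eq_span_p, Ideal.mem_span_singleton] at h1
    obtain ⟨y, hy⟩ := h1
    have h2 := hg i
    rw [hy, ← mul_assoc, ← pow_succ] at h2
    have h3 : V.coeff i ∈ Ideal.span {(p : ℤ_[p]) ^ (Nat.find hex + 1)} :=
      Ideal.mem_span_singleton.2 ⟨y, h2⟩
    rw [PadicInt.mem_span_pow_iff_le_valuation _ hi] at h3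
    omega

/-- Up to a power of `p`, a nonzero function in `analyticSubring p` divides a monic polynomial in
`p z²`. -/
lemma exists_monic_eval_eq_mul {f : ℕ → ℤ_[p]} (hf : f ∈ analyticSubring p)
    (hf0 : ∃ z, f z ≠ 0) : ∃ (e : ℕ) (W : ℤ_[p][X]), W.Monic ∧ ∃ k ∈ analyticSubring p,
      ∀ z : ℕ, (p : ℤ_[p]) ^ e * W.eval (p * (z : ℤ_[p]) ^ 2) = k z * f z := by
  obtain ⟨V₀, V₁, hf⟩ := hf
  have hV : V₀ ≠ 0 ∨ V₁ ≠ 0 := by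
    by_contra! h
    obtain ⟨z, hz⟩ := hf0
    exact hz (by simp [hf, h.1, h.2])
  obtain ⟨e, G, hG, hres⟩ := exists_eq_C_pow_mul (sq_sub_p_mul_X_mul_sq_ne_zero hV)
  obtain ⟨W, U, hfac⟩ := PowerSeries.exists_isWeierstrassFactorization hres
  have hWU := hfac.eq_mul
  obtain ⟨U', hU'⟩ := hfac.isUnit.exists_right_inv
  refine ⟨e, W, hfac.isDistinguishedAt.monic, (fun z : ℕ => evalP ((z : ℤ_[p]) ^ 2) (U' * V₀))
    - (fun z : ℕ => (p : ℤ_[p]) * z) * fun z : ℕ => evalP ((z : ℤ_[p]) ^ 2) (U' * V₁),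
    sub_mem (evalP_mem_analyticSubring _)
      (mul_mem p_mul_mem_analyticSubring (evalP_mem_analyticSubring _)), fun z => ?_⟩
  have h1 : PowerSeries.C ((p : ℤ_[p]) ^ e) * (W : PowerSeries ℤ_[p])
      = U' * (V₀ ^ 2 - PowerSeries.C (p : ℤ_[p]) * PowerSeries.X * V₁ ^ 2) := by
    rw [hG, hWU]
    linear_combination (-PowerSeries.C ((p : ℤ_[p]) ^ e) * (W : PowerSeries ℤ_[p])) * hU'
  have h2 := congrArg (evalP ((z : ℤ_[p]) ^ 2)) h1
  rw [map_mul, map_mul, map_sub, map_mul, map_mul, map_pow (evalP _), map_pow (evalP _), evalP_C,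
    evalP_C, evalP_X, evalP_coe] at h2
  rw [h2]
  simp only [Pi.sub_apply, Pi.mul_apply, map_mul (evalP _), hf]
  ring

variable (p) in
/-- Functions a multiple of which by a power of `p` belongs to `analyticSubring p`. -/
noncomputable def analyticSubringPadic : Subring (ℕ → ℚ_[p]) where
  carrier := {f | ∃ e : ℕ, ∃ g ∈ analyticSubring p, ∀ z, (p : ℚ_[p]) ^ e * f z = (g z : ℚ_[p])}
  mul_mem' := by
    rintro f f' ⟨e, g, hg, h⟩ ⟨e', g', hg', h'⟩
    refine ⟨e + e', g * g', mul_mem hg hg', fun z => ?_⟩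
    simp only [Pi.mul_apply, PadicInt.coe_mul, ← h, ← h']
    ring
  one_mem' := ⟨0, 1, one_mem _, fun z => by simp⟩
  add_mem' := by
    rintro f f' ⟨e, g, hg, h⟩ ⟨e', g', hg', h'⟩
    refine ⟨e + e', (fun _ => (p : ℤ_[p]) ^ e') * g + (fun _ => (p : ℤ_[p]) ^ e) * g',
      add_mem (mul_mem (const_mem_analyticSubring _) hg)
        (mul_mem (const_mem_analyticSubring _) hg'), fun z => ?_⟩
    simp only [Pi.mul_apply, Pi.add_apply, PadicInt.coe_mul, PadicInt.coe_add, PadicInt.coe_pow,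
      PadicInt.coe_natCast, ← h, ← h']
    ring
  zero_mem' := ⟨0, 0, zero_mem _, fun z => by simp⟩
  neg_mem' := by
    rintro f ⟨e, g, hg, h⟩
    exact ⟨e, -g, neg_mem hg, fun z => by simp [← h]⟩

lemma const_mem_analyticSubringPadic (a : ℚ_[p]) :
    (fun _ : ℕ => a) ∈ analyticSubringPadic p := by
  by_cases ha : a = 0
  · subst ha; exact zero_mem _
  have hp0 : (p : ℚ_[p]) ≠ 0 := by exact_mod_cast (Fact.out : p.Prime).ne_zero
  have hn : ‖(p : ℚ_[p]) ^ (-a.valuation).toNat * a‖ ≤ 1 := by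
    have hp1 : (1 : ℝ) < p := by exact_mod_cast (Fact.out : p.Prime).one_lt
    rw [norm_mul, norm_pow, Padic.norm_p, Padic.norm_eq_zpow_neg_valuation ha, inv_pow,
      ← zpow_natCast, ← zpow_neg, ← zpow_add₀ (by positivity)]
    exact zpow_le_one_of_nonpos₀ hp1.le (by omega)
  exact ⟨_, _, const_mem_analyticSubring ⟨_, hn⟩, fun z => rfl⟩

lemma natCast_mem_analyticSubringPadic :
    (fun z : ℕ => (z : ℚ_[p])) ∈ analyticSubringPadic p :=
  ⟨1, _, p_mul_mem_analyticSubring, fun z => by simp⟩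

lemma pow_mem_analyticSubringPadic (hp : 5 ≤ p) {x : ℚ_[p]} (hx : ‖x‖ = 1) (r : ℕ) :
    (fun z : ℕ => x ^ (r + (p - 1) * z)) ∈ analyticSubringPadic p := by
  obtain ⟨x, rfl⟩ : ∃ y : ℤ_[p], (y : ℚ_[p]) = x := ⟨⟨x, hx.le⟩, rfl⟩
  have hx' : IsUnit x := PadicInt.isUnit_iff.2 hx
  have h1 : (p : ℤ_[p]) ∣ x ^ (p - 1) - 1 := by
    rw [← Ideal.mem_span_singleton, ← PadicInt.maximalIdeal_eq_span_p, ← PadicInt.ker_toZMod,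
      RingHom.mem_ker, map_sub, map_pow, map_one, sub_eq_zero]
    exact ZMod.pow_card_sub_one_eq_one (hx'.map _).ne_zero
  obtain ⟨τ, hτ⟩ := h1
  refine ⟨0, _, mul_mem (const_mem_analyticSubring (x ^ r))
    (one_add_p_mul_pow_mem_analyticSubring hp τ), fun z => ?_⟩
  rw [← hτ, add_sub_cancel]
  simp [pow_add, pow_mul]

lemma evalAt_mem_analyticSubringPadic (hp : 5 ≤ p) {F ι : Type*} [Field F] (φ : F →+* ℚ_[p])
    {γ : ι → F} (hγ : ∀ i, ‖φ (γ i)‖ = 1) (r : ℕ) (f : MvPolynomial ι F[X]) :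
    (fun z : ℕ => φ (evalAt γ (r + (p - 1) * z) f)) ∈ analyticSubringPadic p := by
  induction f using MvPolynomial.induction_on with
  | C P =>
    simp only [evalAt_C]
    induction P using Polynomial.induction_on' with
    | add P Q hP hQ =>
      simp only [eval_add, map_add]
      exact add_mem hP hQ
    | monomial n a =>
      have h1 : (fun z : ℕ => ((r : ℚ_[p]) + (p - 1 : ℕ) * z)) ∈ analyticSubringPadic p :=
        add_mem (const_mem_analyticSubringPadic (r : ℚ_[p]))
          (mul_mem (const_mem_analyticSubringPadic ((p - 1 : ℕ) : ℚ_[p]))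
            natCast_mem_analyticSubringPadic)
      convert mul_mem (const_mem_analyticSubringPadic (φ a)) (pow_mem h1 n) using 1
      funext z
      simp
  | add f g hf hg =>
    simp only [map_add]
    exact add_mem hf hg
  | mul_X f i hf =>
    simp only [map_mul, evalAt_X, map_pow]
    exact mul_mem hf (pow_mem_analyticSubringPadic hp (hγ i) r)

end Weierstrass

/-! ### Divisibility of finite differences -/

section DivisibleDifferences

open fwdDiff

lemma cast_fwdDiff_iter_progression {R : Type*} [Ring R] (F : ℕ → ℤ) (h r K z : ℕ) :
    (((Δ_[h])^[K] F (r + h * z) : ℤ) : R) = (Δ_[1])^[K] (fun z => (F (r + h * z) : R)) z := by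
  induction K generalizing z with
  | zero => rfl
  | succ K ih =>
    rw [Function.iterate_succ_apply', Function.iterate_succ_apply', fwdDiff, fwdDiff, ← ih, ← ih,
      Int.cast_sub, mul_add, mul_one, add_assoc]

variable {p : ℕ} [Fact p.Prime]

lemma pow_dvd_fwdDiff_iter_add {f g R : ℕ → ℤ_[p]} (hg : g ∈ analyticSubring p) (T : ℕ)
    (hf : ∀ z, f z = g z + p ^ T * R z) (K n : ℕ) :
    (p : ℤ_[p]) ^ min (K / 2) T ∣ (Δ_[1])^[K] f n := by
  have hf' : f = g + (p ^ T : ℤ_[p]) • R := funext hf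
  rw [hf', fwdDiff_iter_add, fwdDiff_iter_const_smul]
  exact dvd_add ((pow_dvd_pow _ (min_le_left _ _)).trans (pow_dvd_fwdDiff_iter hg K n))
    ((pow_dvd_pow _ (min_le_right _ _)).trans (Dvd.intro _ rfl))

lemma polynomial_mem_analyticSubring (U : ℤ_[p][X]) :
    (fun z : ℕ => U.eval (p * (z : ℤ_[p]) ^ 2)) ∈ analyticSubring p := by
  simpa only [evalP_coe] using evalP_mem_analyticSubring (U : PowerSeries ℤ_[p])

lemma C_pow_dvd_sub_modByMonic {W U U' : ℤ_[p][X]} (hW : W.Monic) {D T : ℕ} (hD : W.natDegree ≤ D)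
    (h : ∀ k < D, PadicInt.toZModPow T ((U %ₘ W).coeff k)
      = PadicInt.toZModPow T ((U' %ₘ W).coeff k)) :
    C ((p : ℤ_[p]) ^ T) ∣ (U - U') %ₘ W := by
  rw [C_dvd_iff_dvd_coeff]
  intro k
  rcases lt_or_ge k D with hk | hk
  · have h1 := h k hk
    rw [← sub_eq_zero, ← map_sub, ← RingHom.mem_ker, PadicInt.ker_toZModPow,
      Ideal.mem_span_singleton] at h1
    rwa [sub_modByMonic, coeff_sub]
  · rw [coeff_eq_zero_of_degree_lt]
    · exact dvd_zero _
    · exact (degree_modByMonic_lt _ hW).trans_le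
        (degree_le_natDegree.trans (by exact_mod_cast hD.trans hk))

/-- A sequence is `p`-adically interpolated if on each residue class modulo `p - 1` it is a
quotient of an element of `analyticSubring p` by a monic polynomial in `p z²`. -/
lemma hasDivisibleDifferences_of_monic_mul_eq (hp : 5 ≤ p) {c : ℕ → ℤ}
    (H : ∀ r : ℕ, ∃ (e : ℕ) (W : ℤ_[p][X]), W.Monic ∧ ∃ h ∈ analyticSubring p,
      ∀ z : ℕ, (p : ℤ_[p]) ^ e * W.eval (p * (z : ℤ_[p]) ^ 2) * (c (r + (p - 1) * z) : ℤ_[p])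
        = h z) :
    HasDivisibleDifferences p c := by
  choose e W hW h hh hmain using H
  choose u₀ u₁ hu using exists_choose_decomposition hp
  let E := (Finset.range (p - 1)).sup e
  let D := (Finset.range (p - 1)).sup fun r => (W r).natDegree
  refine ⟨E, D * (2 * (p - 1)), fun s T => ?_⟩
  let ε : ℕ → ℕ := fun l => s - (l / 4 + (l + 1) / 2)
  let U₀ : ℕ → (Fin s → ℤ) → ℤ_[p][X] := fun r q =>
    ∑ l : Fin s, C ((q l : ℤ_[p]) * (p : ℤ_[p]) ^ ε l) * u₀ r (p - 1) l
  let U₁ : ℕ → (Fin s → ℤ) → ℤ_[p][X] := fun r q =>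
    ∑ l : Fin s, C ((q l : ℤ_[p]) * (p : ℤ_[p]) ^ ε l) * u₁ r (p - 1) l
  have hU₀ : ∀ r q q', U₀ r (q - q') = U₀ r q - U₀ r q' := fun r q q' => by
    simp only [U₀, Pi.sub_apply, Int.cast_sub, sub_mul, map_sub, Finset.sum_sub_distrib]
  have hU₁ : ∀ r q q', U₁ r (q - q') = U₁ r q - U₁ r q' := fun r q q' => by
    simp only [U₁, Pi.sub_apply, Int.cast_sub, sub_mul, map_sub, Finset.sum_sub_distrib]
  have hU : ∀ r q (z : ℕ), (p : ℤ_[p]) ^ s * (binomEval q (r + (p - 1) * z) : ℤ_[p])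
      = (U₀ r q).eval (p * (z : ℤ_[p]) ^ 2) + p * z * (U₁ r q).eval (p * (z : ℤ_[p]) ^ 2) := by
    intro r q z
    simp only [U₀, U₁, binomEval, eval_finsetSum, Int.cast_sum, Finset.mul_sum,
      ← Finset.sum_add_distrib]
    refine Finset.sum_congr rfl fun l _ => ?_
    have h1 := hu r (p - 1) l z
    have h2 : (p : ℤ_[p]) ^ s = p ^ ε l * p ^ ((l : ℕ) / 4 + ((l : ℕ) + 1) / 2) := by
      rw [← pow_add]
      congr 1
      simp only [ε]
      have := l.2
      omega
    rw [h2, eval_mul, eval_mul, eval_C]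
    push_cast
    linear_combination ((q l : ℤ_[p]) * p ^ ε l) * h1
  have : NeZero (p ^ T) := ⟨pow_ne_zero _ (Fact.out : p.Prime).ne_zero⟩
  refine ⟨Fin (p - 1) → Fin D → ZMod (p ^ T) × ZMod (p ^ T), inferInstance, fun q r k =>
    (PadicInt.toZModPow T ((U₀ r q %ₘ W r).coeff k),
      PadicInt.toZModPow T ((U₁ r q %ₘ W r).coeff k)), ?_, fun q q' hq n K => ?_⟩
  · simp only [Fintype.card_pi, Fintype.card_prod, ZMod.card, Finset.prod_const, Finset.card_univ,
      Fintype.card_fin]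
    rw [← pow_two, ← pow_mul, ← pow_mul, ← pow_mul]
    exact le_of_eq (congrArg _ (by ring))
  obtain ⟨r, z, hr, rfl⟩ : ∃ r z, r < p - 1 ∧ n = r + (p - 1) * z :=
    ⟨n % (p - 1), n / (p - 1), Nat.mod_lt _ (by omega), (Nat.mod_add_div _ _).symm⟩
  have hq' : ∀ k : ℕ, ∀ hk : k < D, _ := fun k hk =>
    Prod.mk.inj (congrFun (congrFun hq ⟨r, hr⟩) ⟨k, hk⟩)
  have hrD : (W r).natDegree ≤ D :=
    Finset.le_sup (f := fun r => (W r).natDegree) (Finset.mem_range.2 hr)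
  obtain ⟨R₀, hR₀⟩ := C_pow_dvd_sub_modByMonic (hW r) hrD fun k hk => (hq' k hk).1
  obtain ⟨R₁, hR₁⟩ := C_pow_dvd_sub_modByMonic (hW r) hrD fun k hk => (hq' k hk).2
  rw [← hU₀] at hR₀
  rw [← hU₁] at hR₁
  have hE : (p : ℤ_[p]) ^ E = p ^ (E - e r) * p ^ e r := by
    rw [← pow_add, Nat.sub_add_cancel (Finset.le_sup (Finset.mem_range.2 hr))]
  rw [← PadicInt.pow_p_dvd_int_iff]
  push_cast
  rw [cast_fwdDiff_iter_progression, ← smul_eq_mul, ← Pi.smul_apply, ← fwdDiff_iter_const_smul]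
  refine pow_dvd_fwdDiff_iter_add (g := ((fun z : ℕ => (U₀ r (q - q') /ₘ W r).eval
      (p * (z : ℤ_[p]) ^ 2)) + (fun z : ℕ => (p : ℤ_[p]) * z) * (fun z : ℕ =>
      (U₁ r (q - q') /ₘ W r).eval (p * (z : ℤ_[p]) ^ 2))) * ((fun _ => (p : ℤ_[p]) ^ (E - e r)) *
      h r)) (R := fun z : ℕ => (R₀.eval (p * (z : ℤ_[p]) ^ 2) + (p : ℤ_[p]) * (z : ℤ_[p]) * R₁.eval
      (p * (z : ℤ_[p]) ^ 2)) * ((p : ℤ_[p]) ^ E * (c (r + (p - 1) * z) : ℤ_[p])))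
    (mul_mem (add_mem (polynomial_mem_analyticSubring _) (mul_mem p_mul_mem_analyticSubring
      (polynomial_mem_analyticSubring _))) (mul_mem (const_mem_analyticSubring _) (hh r)))
    T (fun z => ?_) K z
  have h0 := congrArg (eval ((p : ℤ_[p]) * (z : ℤ_[p]) ^ 2))
    (modByMonic_add_div (U₀ r (q - q')) (W r))
  have h1 := congrArg (eval ((p : ℤ_[p]) * (z : ℤ_[p]) ^ 2))
    (modByMonic_add_div (U₁ r (q - q')) (W r))
  rw [hR₀, eval_add, eval_mul, eval_mul, eval_C] at h0
  rw [hR₁, eval_add, eval_mul, eval_mul, eval_C] at h1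
  have h2 := hU r (q - q') z
  rw [← h0, ← h1] at h2
  simp only [Pi.smul_apply, smul_eq_mul, Pi.add_apply, Pi.mul_apply, ← hmain]
  rw [pow_add, hE]
  push_cast
  linear_combination (p ^ (E - e r) * p ^ e r * (c (r + (p - 1) * z) : ℤ_[p])) * h2

variable {F ι : Type*} [Field F] [CharZero F] [Fintype ι] {γ : ι → F} {A B : MvPolynomial ι F[X]}
  {c : ℕ → ℤ}

lemma exists_monic_mul_eq_of_evalAt (hp : 5 ≤ p) (φ : F →+* ℚ_[p]) (hφ : ∀ i, ‖φ (γ i)‖ = 1)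
    (hγ : MulIndep γ) (hB : B ≠ 0) (hc : ∀ n, evalAt γ n B * c n = evalAt γ n A) (r : ℕ) :
    ∃ (e : ℕ) (W : ℤ_[p][X]), W.Monic ∧
      (∀ z : ℕ, evalAt γ (r + (p - 1) * z) B = 0 → W.eval (p * (z : ℤ_[p]) ^ 2) = 0) ∧
      ∃ h ∈ analyticSubring p, ∀ z : ℕ, (p : ℤ_[p]) ^ e * W.eval (p * (z : ℤ_[p]) ^ 2) *
        (c (r + (p - 1) * z) : ℤ_[p]) = h z := by
  have hp0 : (p : ℤ_[p]) ≠ 0 := by exact_mod_cast (Fact.out : p.Prime).ne_zero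
  have hp0' : (p : ℚ_[p]) ≠ 0 := by exact_mod_cast (Fact.out : p.Prime).ne_zero
  obtain ⟨eA, f, hf, hA⟩ := evalAt_mem_analyticSubringPadic hp φ hφ r A
  obtain ⟨eB, g, hg, hgB⟩ := evalAt_mem_analyticSubringPadic hp φ hφ r B
  obtain ⟨z₀, hz₀⟩ := exists_evalAt_ne_zero hγ hB r (show p - 1 ≠ 0 by omega)
  obtain ⟨e, W, hW, k, hk, hWk⟩ := exists_monic_eval_eq_mul hg ⟨z₀, fun h0 => by
    have h1 := hgB z₀
    rw [h0, PadicInt.coe_zero, mul_eq_zero, map_eq_zero] at h1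
    exact h1.elim (pow_ne_zero _ hp0') hz₀⟩
  refine ⟨e + eA, W, hW, fun z hz => ?_, (fun _ => (p : ℤ_[p]) ^ eB) * (k * f),
    mul_mem (const_mem_analyticSubring _) (mul_mem hk hf), fun z => ?_⟩
  · have h1 : _ * φ _ = _ := hgB z
    rw [hz, map_zero, mul_zero, eq_comm, PadicInt.coe_eq_zero] at h1
    have h2 := hWk z
    rw [h1, mul_zero, mul_eq_zero] at h2
    exact h2.resolve_left (pow_ne_zero _ hp0)
  · have h1 : g z * c (r + (p - 1) * z) * p ^ eA = p ^ eB * f z := by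
      apply Subtype.coe_injective
      push_cast
      rw [← hgB, ← hA]
      simp only [← hc, map_mul, map_intCast]
      ring
    simp only [Pi.mul_apply]
    rw [pow_add]
    linear_combination (p ^ eA * (c (r + (p - 1) * z) : ℤ_[p])) * hWk z + k z * h1

lemma hasDivisibleDifferences_of_evalAt (hp : 5 ≤ p) (φ : F →+* ℚ_[p])
    (hφ : ∀ i, ‖φ (γ i)‖ = 1) (hγ : MulIndep γ) (hB : B ≠ 0)
    (hc : ∀ n, evalAt γ n B * c n = evalAt γ n A) : HasDivisibleDifferences p c :=
  hasDivisibleDifferences_of_monic_mul_eq hp fun r => by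
    obtain ⟨e, W, hW, -, h⟩ := exists_monic_mul_eq_of_evalAt hp φ hφ hγ hB hc r
    exact ⟨e, W, hW, h⟩

/-- The theorem of Skolem, Mahler and Lech for multiplicatively independent `γ`. -/
lemma eventually_evalAt_ne_zero (hp : 5 ≤ p) (φ : F →+* ℚ_[p])
    (hφ : ∀ i, ‖φ (γ i)‖ = 1) (hγ : MulIndep γ) (hB : B ≠ 0) :
    ∀ᶠ n in atTop, evalAt γ n B ≠ 0 := by
  classical
  have key : ∀ r, {z : ℕ | evalAt γ (r + (p - 1) * z) B = 0}.Finite := by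
    intro r
    obtain ⟨-, W, hW, h, -⟩ := exists_monic_mul_eq_of_evalAt (A := 0) (c := 0) hp φ hφ hγ hB
      (by simp) r
    refine Set.Finite.subset (Set.Finite.preimage (f := fun z : ℕ => (p : ℤ_[p]) * (z : ℤ_[p]) ^ 2)
      (s := (W.roots.toFinset : Set ℤ_[p])) ?_ (Finset.finite_toSet _)) fun z hz => ?_
    · intro x _ y _ hxy
      have hp0 : (p : ℤ_[p]) ≠ 0 := by exact_mod_cast (Fact.out : p.Prime).ne_zero
      have h1 : x ^ 2 = y ^ 2 := by exact_mod_cast mul_left_cancel₀ hp0 hxy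
      exact Nat.pow_left_injective two_ne_zero h1
    · simpa [hW.ne_zero] using h z hz
  rw [← Nat.cofinite_eq_atTop, eventually_cofinite]
  refine Set.Finite.subset (Set.Finite.biUnion (Finset.range (p - 1)).finite_toSet fun r _ =>
    (key r).image fun z => r + (p - 1) * z) fun n hn => ?_
  simp only [not_not, Set.mem_ofPred_eq] at hn
  simp only [Set.mem_iUnion]
  refine ⟨n % (p - 1), by simpa using Nat.mod_lt _ (by omega), n / (p - 1), ?_,
    Nat.mod_add_div _ _⟩
  simpa [Nat.mod_add_div] using hn

end DivisibleDifferences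

/-! ### Divergence of the sum of reciprocal norms of prime ideals -/

section PrimeIdeals

open NumberField IsDedekindDomain UniqueFactorizationMonoid Ideal

variable (K : Type*) [Field K] [NumberField K]

lemma finite_nonzero_ideals_absNorm_le (m : ℕ) :
    {I : Ideal (𝓞 K) | I ≠ 0 ∧ absNorm I ≤ m}.Finite :=
  (finite_setOfPred_absNorm_le m).subset fun _ h => h.2

/-- The nonzero ideals of norm at most `m`. -/
noncomputable def idealsUpTo (m : ℕ) : Finset (Ideal (𝓞 K)) :=
  (finite_nonzero_ideals_absNorm_le K m).toFinset

variable {K} in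
lemma mem_idealsUpTo {m : ℕ} {I : Ideal (𝓞 K)} :
    I ∈ idealsUpTo K m ↔ I ≠ 0 ∧ absNorm I ≤ m := by
  simp [idealsUpTo]

variable {K} in
lemma absNorm_pos {I : Ideal (𝓞 K)} (hI : I ≠ 0) : 0 < absNorm I :=
  Nat.pos_of_ne_zero (absNorm_eq_zero_iff.not.2 hI)

lemma tendsto_card_idealsUpTo_div :
    Tendsto (fun m : ℕ => ((idealsUpTo K m).card : ℝ) / m) atTop
      (nhds (dedekindZeta_residue K)) := by
  refine ((NumberField.Ideal.tendsto_norm_le_div_atTop₀ K).comp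
    tendsto_natCast_atTop_atTop).congr fun m => ?_
  simp only [Function.comp_apply, Nat.cast_le]
  rw [← Nat.subtype_card (idealsUpTo K m) fun I => by
      rw [mem_idealsUpTo, ← mem_nonZeroDivisors_iff_ne_zero],
    Nat.card_congr (Equiv.subtypeSubtypeEquivSubtypeInter
      (fun I => I ∈ nonZeroDivisors (Ideal (𝓞 K))) (fun I => absNorm I ≤ m))]

lemma exists_card_idealsUpTo_le :
    ∃ C : ℝ, 0 < C ∧ ∀ m : ℕ, ((idealsUpTo K m).card : ℝ) ≤ C * m := by
  obtain ⟨C, hC⟩ := (tendsto_card_idealsUpTo_div K).bddAbove_range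
  refine ⟨max C 1, by positivity, fun m => ?_⟩
  rcases Nat.eq_zero_or_pos m with rfl | hm
  · have : idealsUpTo K 0 = ∅ := Finset.eq_empty_of_forall_notMem fun I hI =>
      (absNorm_pos (mem_idealsUpTo.1 hI).1).ne' (Nat.le_zero.1 (mem_idealsUpTo.1 hI).2)
    simp [this]
  · rw [← div_le_iff₀ (by positivity)]
    exact (hC ⟨m, rfl⟩).trans (le_max_left _ _)

open scoped Classical in
lemma card_filter_dvd_idealsUpTo_le {J : Ideal (𝓞 K)} (hJ : J ≠ 0) (m : ℕ) :
    ((idealsUpTo K m).filter (J ∣ ·)).card ≤ (idealsUpTo K (m / absNorm J)).card := by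
  refine (Finset.card_le_card fun I hI => ?_).trans
    (Finset.card_image_le (f := fun I => J * I) (s := idealsUpTo K (m / absNorm J)))
  obtain ⟨hI, I', rfl⟩ := Finset.mem_filter.1 hI
  rw [mem_idealsUpTo, map_mul] at hI
  refine Finset.mem_image.2 ⟨I', mem_idealsUpTo.2 ⟨right_ne_zero_of_mul hI.1, ?_⟩, rfl⟩
  rw [Nat.le_div_iff_mul_le (absNorm_pos hJ), mul_comm]
  exact hI.2

variable {K} in
lemma two_le_absNorm (v : HeightOneSpectrum (𝓞 K)) : 2 ≤ absNorm v.asIdeal := by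
  have h0 := absNorm_pos v.ne_bot
  have h1 := absNorm_eq_one_iff.not.2 v.isPrime.ne_top
  omega

open scoped Classical in
lemma card_filter_smooth_idealsUpTo_le (T : Finset (HeightOneSpectrum (𝓞 K))) (m : ℕ) :
    ((idealsUpTo K m).filter fun I => ∀ v : HeightOneSpectrum (𝓞 K), v.asIdeal ∣ I → v ∈ T).card
      ≤ (Nat.log 2 m + 1) ^ T.card := by
  have hcard : (Fintype.piFinset fun _ : T => Finset.range (Nat.log 2 m + 1)).card
      = (Nat.log 2 m + 1) ^ T.card := by simp
  rw [← hcard]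
  refine Finset.card_le_card_of_injOn
    (fun I v => (normalizedFactors I).count v.1.asIdeal) (fun I hI => ?_) fun I hI J hJ hIJ => ?_
  · obtain ⟨hI, -⟩ := Finset.mem_filter.1 hI
    rw [mem_idealsUpTo] at hI
    refine Fintype.mem_piFinset.2 fun v => Finset.mem_range_succ_iff.2 ?_
    refine Nat.le_log_of_pow_le one_lt_two (le_trans ?_ hI.2)
    have h1 : v.1.asIdeal ^ (normalizedFactors I).count v.1.asIdeal ∣ I := by
      conv_rhs => rw [← Ideal.prod_normalizedFactors_eq_self hI.1]
      rw [← Multiset.prod_replicate]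
      exact Multiset.prod_dvd_prod_of_le (Multiset.le_count_iff_replicate_le.1 le_rfl)
    have h2 := Nat.le_of_dvd (absNorm_pos hI.1) (map_dvd absNorm h1)
    rw [map_pow] at h2
    exact (Nat.pow_le_pow_left (two_le_absNorm _) _).trans h2
  · obtain ⟨hI, hIT⟩ := Finset.mem_filter.1 hI
    obtain ⟨hJ, hJT⟩ := Finset.mem_filter.1 hJ
    rw [mem_idealsUpTo] at hI hJ
    rw [← Ideal.prod_normalizedFactors_eq_self hI.1, ← Ideal.prod_normalizedFactors_eq_self hJ.1]
    congr 1
    have key : ∀ {I P : Ideal (𝓞 K)},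
        (∀ v : HeightOneSpectrum (𝓞 K), v.asIdeal ∣ I → v ∈ T) →
        P ∈ normalizedFactors I → ∃ v ∈ T, v.asIdeal = P := by
      intro I P hI hP
      have hP' := prime_of_normalized_factor P hP
      exact ⟨⟨P, isPrime_of_prime hP', hP'.ne_zero⟩, hI _ (dvd_of_mem_normalizedFactors hP), rfl⟩
    ext P
    by_cases hP : ∃ v ∈ T, v.asIdeal = P
    · obtain ⟨v, hv, rfl⟩ := hP
      exact congrFun hIJ ⟨v, hv⟩
    · rw [Multiset.count_eq_zero.2 fun h => hP (key hIT h),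
        Multiset.count_eq_zero.2 fun h => hP (key hJT h)]

variable {K} in
lemma finite_heightOneSpectrum_absNorm_le (m : ℕ) :
    {v : HeightOneSpectrum (𝓞 K) | absNorm v.asIdeal ≤ m}.Finite :=
  (finite_setOfPred_absNorm_le (S := 𝓞 K) m).preimage fun _ _ _ _ h => HeightOneSpectrum.ext h

/-- The sum of the inverses of the norms of the prime ideals of a number field diverges. -/
theorem not_summable_one_div_absNorm :
    ¬ Summable fun v : HeightOneSpectrum (𝓞 K) => 1 / (absNorm v.asIdeal : ℝ) := by
  classical
  intro hsum
  obtain ⟨C, hC0, hC⟩ := exists_card_idealsUpTo_le K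
  have hκ := dedekindZeta_residue_pos K
  set κ := dedekindZeta_residue K with hκdef
  obtain ⟨T, hT⟩ := summable_iff_vanishing_norm.1 hsum (κ / (4 * C)) (by positivity)
  have hlarge : ∀ᶠ ℓ : ℕ in atTop, κ / 2 < ((idealsUpTo K (2 ^ ℓ)).card : ℝ) / (2 ^ ℓ : ℕ) :=
    ((tendsto_card_idealsUpTo_div K).comp (tendsto_pow_atTop_atTop_of_one_lt one_lt_two))
      |>.eventually_const_lt (half_lt_self hκ)
  have hlog : ∀ᶠ ℓ : ℕ in atTop, ((ℓ + 1 : ℕ) : ℝ) ^ T.card / 2 ^ (ℓ + 1) < κ / 8 :=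
    ((tendsto_pow_const_div_const_pow_of_one_lt T.card one_lt_two).comp
      (tendsto_add_atTop_nat 1)).eventually_lt_const (by positivity)
  obtain ⟨ℓ, hℓ₁, hℓ₂⟩ := (hlarge.and hlog).exists
  set m := 2 ^ ℓ with hm
  have hm0 : (0 : ℝ) < m := by positivity
  let Q := (finite_heightOneSpectrum_absNorm_le (K := K) m).toFinset \ T
  have hsub : idealsUpTo K m ⊆
      ((idealsUpTo K m).filter fun I => ∀ v : HeightOneSpectrum (𝓞 K), v.asIdeal ∣ I → v ∈ T) ∪
      Q.biUnion fun v => (idealsUpTo K m).filter (v.asIdeal ∣ ·) := by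
    intro I hI
    rw [Finset.mem_union, Finset.mem_filter, Finset.mem_biUnion]
    by_cases h : ∀ v : HeightOneSpectrum (𝓞 K), v.asIdeal ∣ I → v ∈ T
    · exact Or.inl ⟨hI, h⟩
    · push Not at h
      obtain ⟨v, hv, hvT⟩ := h
      have hI' := mem_idealsUpTo.1 hI
      refine Or.inr ⟨v, Finset.mem_sdiff.2 ⟨?_, hvT⟩, Finset.mem_filter.2 ⟨hI, hv⟩⟩
      simpa using (Nat.le_of_dvd (absNorm_pos hI'.1) (map_dvd absNorm hv)).trans hI'.2
  have hbig : ((Q.biUnion fun v => (idealsUpTo K m).filter (v.asIdeal ∣ ·)).card : ℝ)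
      ≤ κ / 4 * m := by
    calc ((Q.biUnion fun v => (idealsUpTo K m).filter (v.asIdeal ∣ ·)).card : ℝ)
        ≤ ∑ v ∈ Q, (((idealsUpTo K m).filter (v.asIdeal ∣ ·)).card : ℝ) := by
          exact_mod_cast Finset.card_biUnion_le
      _ ≤ ∑ v ∈ Q, C * m * (1 / (absNorm v.asIdeal : ℝ)) := by
          refine Finset.sum_le_sum fun v _ => ?_
          calc (((idealsUpTo K m).filter (v.asIdeal ∣ ·)).card : ℝ)
              ≤ (idealsUpTo K (m / absNorm v.asIdeal)).card := by
                exact_mod_cast card_filter_dvd_idealsUpTo_le K v.ne_bot m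
            _ ≤ C * (m / absNorm v.asIdeal : ℕ) := hC _
            _ ≤ C * (m / absNorm v.asIdeal) := by gcongr; exact Nat.cast_div_le
            _ = _ := by ring
      _ = C * m * ∑ v ∈ Q, 1 / (absNorm v.asIdeal : ℝ) := by rw [Finset.mul_sum]
      _ ≤ C * m * (κ / (4 * C)) := by
          gcongr
          exact (le_abs_self _).trans (hT Q Finset.sdiff_disjoint).le
      _ = κ / 4 * m := by field_simp
  have hsmooth := card_filter_smooth_idealsUpTo_le K T m
  rw [hm, Nat.log_pow one_lt_two, ← hm] at hsmooth
  have hle := (Finset.card_le_card hsub).trans (Finset.card_union_le _ _)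
  have hle' : ((idealsUpTo K m).card : ℝ) ≤ ((ℓ + 1 : ℕ) : ℝ) ^ T.card + κ / 4 * m := by
    have h1 := (Nat.cast_le (α := ℝ)).2 hle
    have h2 := (Nat.cast_le (α := ℝ)).2 hsmooth
    push_cast at h1 h2 ⊢
    linarith
  rw [lt_div_iff₀ hm0] at hℓ₁
  rw [div_lt_iff₀ (by positivity)] at hℓ₂
  have hm2 : (2 : ℝ) ^ (ℓ + 1) = 2 * m := by rw [hm]; push_cast; ring
  rw [hm2] at hℓ₂
  linarith

end PrimeIdeals

/-! ### Prime ideals of degree one -/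

section DegreeOnePrimes

open NumberField IsDedekindDomain Ideal

variable {K : Type*} [Field K] [NumberField K]

lemma exists_prime_mem (v : HeightOneSpectrum (𝓞 K)) : ∃ p : ℕ, p.Prime ∧ (p : 𝓞 K) ∈ v.asIdeal ∧
    p ∣ absNorm v.asIdeal := by
  have h1 : ((absNorm v.asIdeal : ℕ) : 𝓞 K) ∈ v.asIdeal := absNorm_mem _
  obtain ⟨p, hp, hpv⟩ : ∃ p ∈ (absNorm v.asIdeal).primeFactorsList, (p : 𝓞 K) ∈ v.asIdeal := by
    have hprod := Nat.prod_primeFactorsList (absNorm_pos v.ne_bot).ne'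
    rw [← hprod, Nat.cast_list_prod] at h1
    obtain ⟨y, hy, hyv⟩ := (Ideal.IsPrime.multiset_prod_mem_iff_exists_mem v.isPrime
      ((absNorm v.asIdeal).primeFactorsList.map (Nat.cast : ℕ → 𝓞 K) : Multiset (𝓞 K))).1
        (by simpa using h1)
    obtain ⟨p, hp, rfl⟩ := List.mem_map.1 (Multiset.mem_coe.1 hy)
    exact ⟨p, hp, hyv⟩
  exact ⟨p, Nat.prime_of_mem_primeFactorsList hp, hpv, Nat.dvd_of_mem_primeFactorsList hp⟩

/-- The rational prime contained in a prime ideal. -/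
noncomputable def residueChar (v : HeightOneSpectrum (𝓞 K)) : ℕ := (exists_prime_mem v).choose

lemma residueChar_prime (v : HeightOneSpectrum (𝓞 K)) : (residueChar v).Prime :=
  (exists_prime_mem v).choose_spec.1

lemma residueChar_mem (v : HeightOneSpectrum (𝓞 K)) : (residueChar v : 𝓞 K) ∈ v.asIdeal :=
  (exists_prime_mem v).choose_spec.2.1

lemma absNorm_eq_residueChar_or_sq_le (v : HeightOneSpectrum (𝓞 K)) :
    absNorm v.asIdeal = residueChar v ∨ residueChar v ^ 2 ≤ absNorm v.asIdeal := by
  have h1 : absNorm v.asIdeal ∣ residueChar v ^ Module.finrank ℤ (𝓞 K) := by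
    rw [← absNorm_span_natCast]
    exact map_dvd absNorm (dvd_span_singleton.2 (residueChar_mem v))
  obtain ⟨f, -, hf⟩ := (Nat.dvd_prime_pow (residueChar_prime v)).1 h1
  have h2 := two_le_absNorm v
  rw [hf] at h2 ⊢
  match f with
  | 0 => simp at h2
  | 1 => exact Or.inl (pow_one _)
  | f + 2 => exact Or.inr (Nat.pow_le_pow_right (residueChar_prime v).pos (by omega))

lemma card_filter_residueChar_le (u : Finset (HeightOneSpectrum (𝓞 K))) (p : ℕ) :
    (u.filter fun v => residueChar v = p).card ≤ Module.finrank ℤ (𝓞 K) := by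
  classical
  set w := u.filter fun v => residueChar v = p with hw
  rcases w.eq_empty_or_nonempty with h | ⟨v₀, hv₀⟩
  · simp [h]
  have hp : p.Prime := by
    have := (Finset.mem_filter.1 hv₀).2
    exact this ▸ residueChar_prime v₀
  have hinj : Function.Injective fun v : HeightOneSpectrum (𝓞 K) => v.asIdeal :=
    fun _ _ h => HeightOneSpectrum.ext h
  have h1 : ∏ I ∈ w.image fun v => v.asIdeal, I ∣ span {(p : 𝓞 K)} := by
    refine Finset.prod_primes_dvd _ (fun I hI => ?_) fun I hI => ?_
    · obtain ⟨v, -, rfl⟩ := Finset.mem_image.1 hI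
      exact v.prime
    · obtain ⟨v, hv, rfl⟩ := Finset.mem_image.1 hI
      rw [dvd_span_singleton, ← (Finset.mem_filter.1 hv).2]
      exact residueChar_mem v
  have h2 := map_dvd absNorm h1
  rw [absNorm_span_natCast, map_prod, Finset.prod_image hinj.injOn] at h2
  have h3 : p ^ w.card ≤ ∏ v ∈ w, absNorm v.asIdeal := by
    rw [← Finset.prod_const]
    refine Finset.prod_le_prod' fun v hv => ?_
    rw [← (Finset.mem_filter.1 hv).2]
    have := (residueChar_prime v).pos
    rcases absNorm_eq_residueChar_or_sq_le v with h | h <;> nlinarith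
  exact (Nat.pow_le_pow_iff_right hp.one_lt).1
    (h3.trans (Nat.le_of_dvd (pow_pos hp.pos _) h2))

variable (K) in
/-- The sum of the inverses of the rational primes that are norms of ideals diverges. -/
theorem exists_primes_eq_absNorm (N : ℕ) (x : ℝ) : ∃ P : Finset ℕ,
    (∀ p ∈ P, p.Prime ∧ N < p ∧ ∃ I : Ideal (𝓞 K), absNorm I = p) ∧ x ≤ ∑ p ∈ P, 1 / (p : ℝ) := by
  classical
  by_contra! hcon
  let good : ℕ → Prop := fun p => p.Prime ∧ N < p ∧ ∃ I : Ideal (𝓞 K), absNorm I = p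
  let w : ℕ → ℝ := fun p => (if good p then 1 / (p : ℝ) else 0) + 1 / (p : ℝ) ^ 2
    + if p ∈ Finset.range (N + 1) then 1 else 0
  have hw : ∀ p, 0 ≤ w p := fun p => by
    simp only [w]
    split_ifs <;> positivity
  have hwv : ∀ v : HeightOneSpectrum (𝓞 K), 1 / (absNorm v.asIdeal : ℝ) ≤ w (residueChar v) := by
    intro v
    have hp := (residueChar_prime v).pos
    rcases absNorm_eq_residueChar_or_sq_le v with h | h
    · rw [h]
      simp only [w, good]
      by_cases hN : N < residueChar v
      · rw [if_pos ⟨residueChar_prime v, hN, _, h⟩]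
        have : (0 : ℝ) ≤ 1 / (residueChar v : ℝ) ^ 2 := by positivity
        split_ifs <;> linarith
      · rw [if_pos (Finset.mem_range.2 (by omega))]
        have : 1 / (residueChar v : ℝ) ≤ 1 :=
          (div_le_one (by positivity)).2 (by exact_mod_cast hp)
        have : (0 : ℝ) ≤ 1 / (residueChar v : ℝ) ^ 2 := by positivity
        split_ifs <;> linarith
    · have h1 : 1 / (absNorm v.asIdeal : ℝ) ≤ 1 / (residueChar v : ℝ) ^ 2 :=
        one_div_le_one_div_of_le (by positivity) (by exact_mod_cast h)
      have h2 : (0 : ℝ) ≤ 1 / (residueChar v : ℝ) := by positivity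
      simp only [w]
      split_ifs <;> linarith
  have hsq : Summable fun n : ℕ => 1 / (n : ℝ) ^ 2 := Real.summable_one_div_nat_pow.2 one_lt_two
  have hP : ∀ P : Finset ℕ, ∑ p ∈ P, w p ≤ x + (∑' n : ℕ, 1 / (n : ℝ) ^ 2) + (N + 1 : ℕ) := by
    intro P
    simp only [w, Finset.sum_add_distrib]
    refine add_le_add (add_le_add ?_ (hsq.sum_le_tsum _ fun _ _ => by positivity)) ?_
    · rw [← Finset.sum_filter]
      exact (hcon _ fun p hp => (Finset.mem_filter.1 hp).2).le
    · rw [← Finset.sum_filter, Finset.sum_const, nsmul_one, Nat.cast_le]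
      refine (Finset.card_le_card fun p hp => (Finset.mem_filter.1 hp).2).trans ?_
      rw [Finset.card_range]
  refine not_summable_one_div_absNorm K (summable_of_sum_le (fun v => by positivity)
    (c := Module.finrank ℤ (𝓞 K) * (x + (∑' n : ℕ, 1 / (n : ℝ) ^ 2) + (N + 1 : ℕ))) fun u => ?_)
  calc ∑ v ∈ u, 1 / (absNorm v.asIdeal : ℝ) ≤ ∑ v ∈ u, w (residueChar v) :=
        Finset.sum_le_sum fun v _ => hwv v
    _ = ∑ p ∈ u.image residueChar, (u.filter fun v => residueChar v = p).card • w p :=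
        Finset.sum_comp w residueChar
    _ ≤ ∑ p ∈ u.image residueChar, Module.finrank ℤ (𝓞 K) * w p := by
        refine Finset.sum_le_sum fun p _ => ?_
        rw [nsmul_eq_mul]
        exact mul_le_mul_of_nonneg_right (by exact_mod_cast card_filter_residueChar_le u p) (hw p)
    _ ≤ _ := by
        rw [← Finset.mul_sum]
        exact mul_le_mul_of_nonneg_left (hP _) (by positivity)

end DegreeOnePrimes

/-! ### Embeddings of number fields into `ℚ_[p]` -/

section PadicEmbeddings

open NumberField

variable {K : Type*} [Field K] [NumberField K]

lemma exists_isIntegral_mul (x : K) : ∃ d : ℤ, d ≠ 0 ∧ IsIntegral ℤ ((d : K) * x) := by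
  obtain ⟨m, hm⟩ := IsIntegral.exists_multiple_integral_of_isLocalization (nonZeroDivisors ℤ)
    (Rₘ := ℚ) x (Algebra.IsIntegral.isIntegral x)
  refine ⟨m, nonZeroDivisors.coe_ne_zero m, ?_⟩
  rwa [Submonoid.smul_def, zsmul_eq_mul] at hm

lemma norm_le_one_of_isIntegral {p : ℕ} [Fact p.Prime] {x : ℚ_[p]} (hx : IsIntegral ℤ x) :
    ‖x‖ ≤ 1 := by
  obtain ⟨y, rfl⟩ := IsIntegrallyClosed.isIntegral_iff.1 (hx.tower_top (A := ℤ_[p]))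
  exact y.2

lemma norm_intCast_eq_one_of_lt {p : ℕ} [Fact p.Prime] {d : ℤ} (hd : d ≠ 0) (h : d.natAbs < p) :
    ‖(d : ℚ_[p])‖ = 1 := by
  rw [Padic.norm_intCast_eq_one_iff, isCoprime_comm,
    (Nat.prime_iff_prime_int.1 Fact.out).coprime_iff_not_dvd]
  intro h1
  have := Nat.le_of_dvd (Int.natAbs_pos.2 hd) (Int.natCast_dvd.1 h1)
  omega

lemma exists_forall_norm_le_one (x : K) : ∃ N : ℕ, ∀ p : ℕ, ∀ [Fact p.Prime], N < p →
    ∀ φ : K →+* ℚ_[p], ‖φ x‖ ≤ 1 := by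
  obtain ⟨d, hd, hx⟩ := exists_isIntegral_mul x
  refine ⟨d.natAbs, fun p _ hp φ => ?_⟩
  have h1 := norm_le_one_of_isIntegral (hx.map (φ.toIntAlgHom))
  simpa [norm_intCast_eq_one_of_lt hd hp] using h1

lemma exists_forall_norm_eq_one {x : K} (hx : x ≠ 0) : ∃ N : ℕ, ∀ p : ℕ, ∀ [Fact p.Prime], N < p →
    ∀ φ : K →+* ℚ_[p], ‖φ x‖ = 1 := by
  obtain ⟨N, hN⟩ := exists_forall_norm_le_one x
  obtain ⟨N', hN'⟩ := exists_forall_norm_le_one x⁻¹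
  refine ⟨max N N', fun p _ hp φ => le_antisymm (hN p (by omega) φ) ?_⟩
  have h1 := hN' p (by omega) φ
  rw [map_inv₀, norm_inv] at h1
  exact (inv_le_one₀ (norm_pos_iff.2 ((map_ne_zero φ).2 hx))).1 h1

lemma exists_bezout_derivative {f : ℤ[X]} (hf : (f.map (algebraMap ℤ ℚ)).Separable) :
    ∃ (N : ℤ) (u v : ℤ[X]), N ≠ 0 ∧ u * f + v * derivative f = C N := by
  obtain ⟨a, b, hab⟩ := hf
  obtain ⟨m, hm, hm'⟩ := IsLocalization.integerNormalization_spec (nonZeroDivisors ℤ) a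
  obtain ⟨n, hn, hn'⟩ := IsLocalization.integerNormalization_spec (nonZeroDivisors ℤ) b
  refine ⟨m * n, C n * IsLocalization.integerNormalization (nonZeroDivisors ℤ) a,
    C m * IsLocalization.integerNormalization (nonZeroDivisors ℤ) b,
    mul_ne_zero (nonZeroDivisors.ne_zero hm) (nonZeroDivisors.ne_zero hn), ?_⟩
  apply Polynomial.map_injective (algebraMap ℤ ℚ) (algebraMap ℤ ℚ).injective_int
  rw [Polynomial.map_add, Polynomial.map_mul, Polynomial.map_mul, Polynomial.map_mul,
    Polynomial.map_mul, hm', hn', ← derivative_map, map_C, map_C, map_C]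
  rw [zsmul_eq_mul, zsmul_eq_mul]
  simp only [algebraMap_int_eq, eq_intCast, map_intCast, Int.cast_mul]
  rw [derivative_map] at hab ⊢
  have hC : (C ((m : ℚ) * n) : ℚ[X]) = (m : ℚ[X]) * n := by simp
  rw [hC]
  linear_combination ((m : ℚ[X]) * n) * hab

lemma dvd_of_intCast_mem {I : Ideal (𝓞 K)} {p : ℕ} (hp : p.Prime) (hI : Ideal.absNorm I = p) {a : ℤ}
    (ha : (a : 𝓞 K) ∈ I) : (p : ℤ) ∣ a := by
  by_contra h
  obtain ⟨u, v, huv⟩ := ((Nat.prime_iff_prime_int.1 hp).coprime_iff_not_dvd).2 h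
  have h1 : (1 : 𝓞 K) ∈ I := by
    have h2 := congrArg (Int.cast : ℤ → 𝓞 K) huv
    push_cast at h2
    rw [← h2]
    exact add_mem (Ideal.mul_mem_left _ _ (hI ▸ Ideal.absNorm_mem I)) (Ideal.mul_mem_left _ _ ha)
  rw [(Ideal.eq_top_iff_one I).2 h1, Ideal.absNorm_top] at hI
  exact hp.one_lt.ne hI

lemma exists_intCast_sub_mem {I : Ideal (𝓞 K)} {p : ℕ} (hp : p.Prime) (hI : Ideal.absNorm I = p)
    (x : 𝓞 K) : ∃ a : ℤ, x - a ∈ I := by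
  rw [Ideal.absNorm_apply, Submodule.cardQuot_apply] at hI
  have : Finite (𝓞 K ⧸ I) := Nat.finite_of_card_ne_zero (hI.trans_ne hp.ne_zero)
  have := Fintype.ofFinite (𝓞 K ⧸ I)
  rw [Nat.card_eq_fintype_card] at hI
  have : NeZero p := ⟨hp.ne_zero⟩
  obtain ⟨b, hb⟩ := (ZMod.ringEquivOfPrime (𝓞 K ⧸ I) hp hI).surjective (Ideal.Quotient.mk I x)
  obtain ⟨a, rfl⟩ := ZMod.intCast_surjective b
  refine ⟨a, ?_⟩
  rw [← Ideal.Quotient.eq_zero_iff_mem, map_sub, ← hb]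
  simp

variable (K) in
/-- A number field embeds into `ℚ_[p]` for all large primes `p` that are norms of ideals. -/
theorem exists_forall_nonempty_ringHom_padic : ∃ N : ℕ, ∀ p : ℕ, ∀ [Fact p.Prime], N < p →
    (∃ I : Ideal (𝓞 K), Ideal.absNorm I = p) → Nonempty (K →+* ℚ_[p]) := by
  let pb := Field.powerBasisOfFiniteOfSeparable ℚ K
  obtain ⟨d, hd, hx⟩ := exists_isIntegral_mul pb.gen
  let x : 𝓞 K := ⟨d * pb.gen, hx⟩
  let f := minpoly ℤ ((d : K) * pb.gen)
  have hf : minpoly ℚ ((d : K) * pb.gen) = f.map (algebraMap ℤ ℚ) :=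
    minpoly.isIntegrallyClosed_eq_field_fractions' ℚ hx
  obtain ⟨N, u, v, hN, huv⟩ := exists_bezout_derivative (f := f)
    (hf ▸ (minpoly.irreducible (Algebra.IsIntegral.isIntegral _)).separable)
  refine ⟨N.natAbs, fun p _ hp ⟨I, hI⟩ => ?_⟩
  have hprime : p.Prime := Fact.out
  obtain ⟨a, ha⟩ := exists_intCast_sub_mem hprime hI x
  have hfx : aeval x f = 0 := by
    apply RingOfIntegers.coe_injective
    rw [map_zero, ← aeval_algebraMap_apply]
    exact minpoly.aeval ℤ ((d : K) * pb.gen)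
  have hfa : (p : ℤ) ∣ f.eval a := by
    refine dvd_of_intCast_mem hprime hI ?_
    have h1 : x - a ∣ aeval x f - aeval (a : 𝓞 K) f := by
      simpa only [aeval_def, eval₂_eq_eval_map] using
        sub_dvd_eval_sub x (a : 𝓞 K) (f.map (algebraMap ℤ (𝓞 K)))
    have h2 := Ideal.mem_of_dvd I h1 ha
    rw [hfx, zero_sub, neg_mem_iff] at h2
    convert h2
    simpa using (aeval_algebraMap_apply_eq_algebraMap_eval a f (A := 𝓞 K)).symm
  have hfa' : ¬ (p : ℤ) ∣ (derivative f).eval a := by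
    intro h
    have h1 : (p : ℤ) ∣ N := by
      have h2 := congrArg (eval a) huv
      rw [eval_add, eval_mul, eval_mul, eval_C] at h2
      rw [← h2]
      exact dvd_add (hfa.mul_left _) (h.mul_left _)
    have := Nat.le_of_dvd (Int.natAbs_pos.2 hN) (Int.natCast_dvd.1 h1)
    omega
  have hev : ∀ g : ℤ[X], aeval (a : ℤ_[p]) g = ((g.eval a : ℤ) : ℤ_[p]) := fun g => by
    simpa using aeval_algebraMap_apply_eq_algebraMap_eval (A := ℤ_[p]) a g
  obtain ⟨z, hz, -⟩ := hensels_lemma (p := p) (F := f) (a := (a : ℤ_[p])) (by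
    rw [hev, hev]
    have h1 : ‖(((derivative f).eval a : ℤ) : ℤ_[p])‖ = 1 :=
      le_antisymm (PadicInt.norm_le_one _)
        (not_lt.1 fun h => hfa' ((PadicInt.norm_int_lt_one_iff_dvd _).1 h))
    rw [h1, one_pow]
    exact (PadicInt.norm_int_lt_one_iff_dvd _).2 hfa)
  have hd' : (d : ℚ_[p]) ≠ 0 := by exact_mod_cast hd
  have hz' : aeval (z : ℚ_[p]) (minpoly ℚ ((d : K) * pb.gen)) = 0 := by
    rw [hf, aeval_map_algebraMap]
    have h1 := aeval_algebraMap_apply ℚ_[p] z f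
    rw [hz, map_zero] at h1
    exact h1
  have hdvd : minpoly ℚ ((d : K) * pb.gen) ∣ (minpoly ℚ pb.gen).comp (C (d : ℚ)⁻¹ * X) := by
    refine minpoly.dvd _ _ ?_
    rw [aeval_comp]
    have hd'' : (d : K) ≠ 0 := by exact_mod_cast hd
    convert minpoly.aeval ℚ pb.gen using 2
    simp [hd'']
  refine ⟨(pb.lift ((d : ℚ_[p])⁻¹ * z) ?_).toRingHom⟩
  have h1 := aeval_eq_zero_of_dvd_aeval_eq_zero hdvd hz'
  rw [aeval_comp] at h1
  convert h1 using 2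
  simp

variable (K) in
theorem exists_primes_ringHom_padic (N : ℕ) (x : ℝ) : ∃ P : Finset ℕ,
    (∀ p ∈ P, N < p ∧ ∃ _ : Fact p.Prime, Nonempty (K →+* ℚ_[p])) ∧
      x ≤ ∑ p ∈ P, 1 / (p : ℝ) := by
  obtain ⟨N', hN'⟩ := exists_forall_nonempty_ringHom_padic K
  obtain ⟨P, hP, hx⟩ := exists_primes_eq_absNorm K (max N N') x
  refine ⟨P, fun p hp => ⟨by have := (hP p hp).2.1; omega, ⟨(hP p hp).1⟩, ?_⟩, hx⟩
  have : Fact p.Prime := ⟨(hP p hp).1⟩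
  exact hN' p (by have := (hP p hp).2.1; omega) (hP p hp).2.2

end PadicEmbeddings

/-! ### Cancelling polynomial factors -/

section LinearFactors

variable {K : Type*} [Field K]

variable (K) in
lemma exists_prime_ringHom_padic [NumberField K] (N : ℕ) :
    ∃ p : ℕ, N < p ∧ ∃ _ : Fact p.Prime, Nonempty (K →+* ℚ_[p]) := by
  obtain ⟨P, hP, hx⟩ := exists_primes_ringHom_padic K N 1
  obtain ⟨p, hp⟩ : P.Nonempty := by
    by_contra h
    rw [Finset.not_nonempty_iff_eq_empty.1 h] at hx
    norm_num at hx
  exact ⟨p, hP p hp⟩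

/-- The terms of `y` are `p`-integral at all embeddings into `ℚ_[p]` for all large `p`. -/
def IsAlmostIntegral (y : ℕ → K) : Prop :=
  ∃ N : ℕ, ∀ p : ℕ, ∀ [Fact p.Prime], N < p → ∀ φ : K →+* ℚ_[p], ∀ n, ‖φ (y n)‖ ≤ 1

lemma isAlmostIntegral_const [NumberField K] (x : K) : IsAlmostIntegral fun _ => x := by
  obtain ⟨N, hN⟩ := exists_forall_norm_le_one x
  exact ⟨N, fun p _ hp φ _ => hN p hp φ⟩

lemma isAlmostIntegral_intCast (c : ℕ → ℤ) : IsAlmostIntegral fun n => (c n : K) :=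
  ⟨0, fun p _ _ φ n => by simpa using Padic.norm_int_le_one (c n)⟩

lemma IsAlmostIntegral.mul {y z : ℕ → K} (hy : IsAlmostIntegral y) (hz : IsAlmostIntegral z) :
    IsAlmostIntegral fun n => y n * z n := by
  obtain ⟨N, hN⟩ := hy
  obtain ⟨N', hN'⟩ := hz
  refine ⟨max N N', fun p _ hp φ n => ?_⟩
  rw [map_mul, norm_mul]
  exact mul_le_one₀ (hN p (by omega) φ n) (norm_nonneg _) (hN' p (by omega) φ n)

lemma IsAlmostIntegral.add {y z : ℕ → K} (hy : IsAlmostIntegral y) (hz : IsAlmostIntegral z) :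
    IsAlmostIntegral fun n => y n + z n := by
  obtain ⟨N, hN⟩ := hy
  obtain ⟨N', hN'⟩ := hz
  refine ⟨max N N', fun p _ hp φ n => ?_⟩
  rw [map_add]
  exact (Padic.nonarchimedean _ _).trans
    (max_le (hN p (by omega) φ n) (hN' p (by omega) φ n))

lemma isAlmostIntegral_eval [NumberField K] (P : K[X]) :
    IsAlmostIntegral fun n => P.eval (n : K) := by
  induction P using Polynomial.induction_on with
  | C a => simpa using isAlmostIntegral_const a
  | add p q hp hq => simpa using hp.add hq
  | monomial n a h =>
    have := h.mul (isAlmostIntegral_intCast (K := K) fun n => (n : ℤ))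
    simpa [pow_succ, mul_assoc] using this

lemma exists_forall_mem_finset {ι : Type*} (s : Finset ι) {Q : ι → ℕ → Prop}
    (h : ∀ i ∈ s, ∃ N, ∀ p, N < p → Q i p) : ∃ N, ∀ p, N < p → ∀ i ∈ s, Q i p := by
  choose! N hN using h
  exact ⟨s.sup N, fun p hp i hi => hN i hi p ((Finset.le_sup hi).trans_lt hp)⟩

lemma exists_nat_zmod_eq {p : ℕ} [Fact p.Prime] (r m : ℕ) (z : ZMod p) :
    ∃ n ≥ m, (n : ZMod p) = z ∧ ∀ x : ZMod p, x ≠ 0 → x ^ n = x ^ r := by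
  have hp : p.Prime := Fact.out
  have hcop : Nat.Coprime (p - 1) p := by
    rw [Nat.coprime_self_sub_left hp.one_lt.le]
    exact Nat.coprime_one_left p
  obtain ⟨k, hk1, hk2⟩ := Nat.chineseRemainder hcop r z.val
  refine ⟨k + (p - 1) * (p * (m + r)), ?_, ?_, fun x hx => ?_⟩
  · have : 1 ≤ (p - 1) * p := Nat.mul_pos (Nat.sub_pos_of_lt hp.one_lt) hp.pos
    nlinarith
  · have := (ZMod.natCast_eq_natCast_iff _ _ _).2 hk2
    simpa using this
  · have h1 : r ≤ k + (p - 1) * (p * (m + r)) := by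
      have : 1 ≤ (p - 1) * p := Nat.mul_pos (Nat.sub_pos_of_lt hp.one_lt) hp.pos
      nlinarith
    have h2 : r ≡ k + (p - 1) * (p * (m + r)) [MOD (p - 1)] := by
      simpa [Nat.ModEq] using hk1.symm
    obtain ⟨d, hd⟩ := (Nat.modEq_iff_dvd' h1).1 h2
    rw [← Nat.add_sub_cancel' h1, hd, pow_add, pow_mul, ZMod.pow_card_sub_one_eq_one hx, one_pow,
      mul_one]

/-- A linear factor can be cancelled from a generalized power sum with almost integral
quotient. -/
lemma exists_eventually_eq_of_sub_mul_eq [NumberField K] {ι : Type*} {s : Finset ι} {β : ι → K}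
    (hβ : ∀ i ∈ s, β i ≠ 0) {P : ι → K[X]} {y : ℕ → K} (hy : IsAlmostIntegral y) {ξ : K}
    (h : ∀ᶠ n : ℕ in atTop, ((n : K) - ξ) * y n = ∑ i ∈ s, (P i).eval (n : K) * β i ^ n) :
    ∃ Q : ι → K[X], ∀ᶠ n : ℕ in atTop, y n = ∑ i ∈ s, (Q i).eval (n : K) * β i ^ n := by
  let Q : ι → K[X] := fun i => P i /ₘ (X - C ξ)
  have hQ : ∀ i (n : ℕ), (P i).eval (n : K) =
      ((n : K) - ξ) * (Q i).eval (n : K) + (P i).eval ξ := fun i n => by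
    conv_lhs => rw [← modByMonic_add_div (P i) (X - C ξ), modByMonic_X_sub_C_eq_C_eval]
    simp [Q, add_comm]
  have key : ∀ r : ℕ, ∑ i ∈ s, (P i).eval ξ * β i ^ r = 0 := by
    intro r
    by_contra hr
    obtain ⟨N₁, h₁⟩ := exists_forall_norm_eq_one hr
    obtain ⟨N₂, h₂⟩ := hy
    obtain ⟨N₃, h₃⟩ := exists_forall_mem_finset s
      (Q := fun i p => ∀ [Fact p.Prime], ∀ φ : K →+* ℚ_[p], ‖φ (β i)‖ = 1) (fun i hi => by
        obtain ⟨N, hN⟩ := exists_forall_norm_eq_one (hβ i hi)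
        exact ⟨N, fun p hp _ => hN p hp⟩)
    obtain ⟨N₄, h₄⟩ := exists_forall_mem_finset s
      (Q := fun i p => ∀ [Fact p.Prime], ∀ φ : K →+* ℚ_[p], ‖φ ((P i).eval ξ)‖ ≤ 1) (fun i _ => by
        obtain ⟨N, hN⟩ := exists_forall_norm_le_one ((P i).eval ξ)
        exact ⟨N, fun p hp _ => hN p hp⟩)
    obtain ⟨N₅, h₅⟩ := exists_forall_mem_finset s
      (Q := fun i p => ∀ [Fact p.Prime], ∀ φ : K →+* ℚ_[p], ∀ n : ℕ, ‖φ ((Q i).eval (n : K))‖ ≤ 1)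
      (fun i _ => by
        obtain ⟨N, hN⟩ := isAlmostIntegral_eval (Q i)
        exact ⟨N, fun p hp _ => hN p hp⟩)
    obtain ⟨N₆, h₆⟩ := exists_forall_norm_le_one ξ
    obtain ⟨p, hp, hprime, ⟨φ⟩⟩ := exists_prime_ringHom_padic K (N₁ + N₂ + N₃ + N₄ + N₅ + N₆)
    obtain ⟨m, hm⟩ := eventually_atTop.1 h
    obtain ⟨n, hnm, hn, hpow⟩ := exists_nat_zmod_eq (p := p) r m
      (PadicInt.toZMod ⟨φ ξ, h₆ p (by omega) φ⟩)
    let y' : ℤ_[p] := ⟨φ (y n), h₂ p (by omega) φ n⟩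
    let β' : s → ℤ_[p] := fun i => ⟨φ (β i), (h₃ p (by omega) i i.2 φ).le⟩
    let e' : s → ℤ_[p] := fun i => ⟨φ ((P i).eval ξ), h₄ p (by omega) i i.2 φ⟩
    let w' : s → ℤ_[p] := fun i => ⟨φ ((Q i).eval (n : K)), h₅ p (by omega) i i.2 φ n⟩
    let ξ' : ℤ_[p] := ⟨φ ξ, h₆ p (by omega) φ⟩
    have heq : ((n : ℤ_[p]) - ξ') * y' =
        ∑ i ∈ s.attach, (((n : ℤ_[p]) - ξ') * w' i + e' i) * β' i ^ n := by
      apply Subtype.coe_injective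
      have h1 := congrArg φ (hm n hnm)
      simp only [map_mul, map_sub, map_natCast, map_sum, map_pow, hQ, map_add] at h1
      rw [← Finset.sum_attach] at h1
      beta_reduce
      rw [PadicInt.coe_sum]
      push_cast
      exact h1
    have hβ' : ∀ i, PadicInt.toZMod (β' i) ≠ 0 := fun i hi => by
      have h1 : β' i ∈ RingHom.ker (PadicInt.toZMod (p := p)) := hi
      rw [PadicInt.ker_toZMod, IsLocalRing.mem_maximalIdeal, mem_nonunits_iff,
        PadicInt.isUnit_iff] at h1
      exact h1 (h₃ p (by omega) i i.2 φ)
    have hz : PadicInt.toZMod (∑ i ∈ s.attach, e' i * β' i ^ r) = 0 := by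
      have h1 := congrArg PadicInt.toZMod heq
      simp only [map_mul, map_sub, map_natCast, map_sum, map_pow, map_add] at h1 ⊢
      rw [hn, sub_self, zero_mul] at h1
      rw [h1]
      exact Finset.sum_congr rfl fun i _ => by rw [zero_mul, zero_add, hpow _ (hβ' i)]
    have h7 : (∑ i ∈ s.attach, e' i * β' i ^ r) ∈ RingHom.ker (PadicInt.toZMod (p := p)) := hz
    rw [PadicInt.ker_toZMod, IsLocalRing.mem_maximalIdeal, mem_nonunits_iff,
      PadicInt.isUnit_iff] at h7
    apply h7
    rw [← h₁ p (by omega) φ, PadicInt.norm_def]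
    congr 1
    simp only [map_mul, map_sum, map_pow]
    rw [PadicInt.coe_sum, ← Finset.sum_attach s]
    push_cast
    rfl
  refine ⟨Q, ?_⟩
  have hne : ∀ᶠ n : ℕ in atTop, (n : K) ≠ ξ := by
    by_cases hξ : ∃ k : ℕ, (k : K) = ξ
    · obtain ⟨k, rfl⟩ := hξ
      filter_upwards [eventually_gt_atTop k] with n hn
      exact_mod_cast hn.ne'
    · exact Eventually.of_forall fun n hn => hξ ⟨n, hn⟩
  filter_upwards [h, hne] with n hn hne
  apply mul_left_cancel₀ (sub_ne_zero.2 hne)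
  rw [hn, Finset.mul_sum, ← sub_eq_zero, ← Finset.sum_sub_distrib, ← key n]
  exact Finset.sum_congr rfl fun i _ => by rw [hQ]; ring

lemma exists_eventually_eq_of_prod_mul_eq [NumberField K] {ι : Type*} {s : Finset ι} {β : ι → K}
    (hβ : ∀ i ∈ s, β i ≠ 0) (S : Multiset K) {P : ι → K[X]} {y : ℕ → K}
    (hy : IsAlmostIntegral y)
    (h : ∀ᶠ n : ℕ in atTop, (S.map fun ξ => X - C ξ).prod.eval (n : K) * y n =
      ∑ i ∈ s, (P i).eval (n : K) * β i ^ n) :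
    ∃ Q : ι → K[X], ∀ᶠ n : ℕ in atTop, y n = ∑ i ∈ s, (Q i).eval (n : K) * β i ^ n := by
  induction S using Multiset.induction_on generalizing P with
  | empty => exact ⟨P, by simpa using h⟩
  | cons ξ S ih =>
    obtain ⟨Q, hQ⟩ := exists_eventually_eq_of_sub_mul_eq hβ
      (y := fun n => (S.map fun ξ => X - C ξ).prod.eval (n : K) * y n)
      ((isAlmostIntegral_eval _).mul hy) (ξ := ξ) (P := P) (by
        filter_upwards [h] with n hn
        rw [← hn, Multiset.map_cons, Multiset.prod_cons, eval_mul]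
        simp [mul_assoc])
    exact ih hQ

/-- An integer sequence `c` such that `H(n) c(n)` is a generalized power sum is recurrent. -/
theorem isRecurrent_of_eval_mul_eq [NumberField K] {ι : Type*} {s : Finset ι} {β : ι → K}
    (hβ : ∀ i ∈ s, β i ≠ 0) {H : K[X]} (hH : H ≠ 0) {P : ι → K[X]} {c : ℕ → ℤ}
    (h : ∀ n : ℕ, H.eval (n : K) * c n = ∑ i ∈ s, (P i).eval (n : K) * β i ^ n) :
    IsRecurrent fun n => (c n : ℂ) := by
  let L := H.SplittingField
  let j := algebraMap K L
  have : NumberField L := NumberField.of_module_finite K L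
  have hsplit := (SplittingField.splits H).eq_prod_roots
  have hlead : j H.leadingCoeff ≠ 0 := by simpa using hH
  obtain ⟨Q, hQ⟩ := exists_eventually_eq_of_prod_mul_eq (K := L) (s := s) (β := fun i => j (β i))
    (fun i hi => by simpa using hβ i hi) (H.map j).roots
    (P := fun i => C (j H.leadingCoeff)⁻¹ * (P i).map j) (y := fun n => (c n : L))
    (isAlmostIntegral_intCast c) (Eventually.of_forall fun n => by
      have h1 := congrArg j (h n)
      have h2 : j (H.eval (n : K)) = (H.map j).eval (n : L) := by simp
      have h3 : ∀ i, j ((P i).eval (n : K)) = ((P i).map j).eval (n : L) := by simp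
      rw [map_mul, h2, hsplit, eval_mul, eval_C, leadingCoeff_map, map_sum] at h1
      apply mul_left_cancel₀ hlead
      rw [← mul_assoc, ← map_intCast j, h1, Finset.mul_sum]
      refine Finset.sum_congr rfl fun i _ => ?_
      rw [eval_mul, eval_C, map_mul, map_pow, h3, ← mul_assoc, ← mul_assoc,
        mul_inv_cancel₀ hlead, one_mul])
  obtain ⟨σ⟩ : Nonempty (L →+* ℂ) := inferInstance
  refine (IsRecurrent.sum s (fun i n => ((Q i).map σ).eval (n : ℂ) * σ (j (β i)) ^ n)
    fun i _ => isRecurrent_eval_mul_pow _ _).congr ?_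
  filter_upwards [hQ] with n hn
  have h1 := congrArg σ hn
  rw [map_intCast, map_sum] at h1
  rw [h1]
  simp

end LinearFactors

/-! ### Quotients over number fields -/

section IntegerQuotients

variable {K ι : Type*} [Field K] [NumberField K] [Fintype ι] {γ : ι → K}
  {A B : MvPolynomial ι K[X]} {c : ℕ → ℤ}

lemma IsRecurrent.of_shift {F : Type*} [Field F] {s : ℕ → F} (m : ℕ)
    (h : IsRecurrent fun n => s (n + m)) : IsRecurrent s := by
  refine IsRecurrent.of_aeval (g := X ^ m) (pow_ne_zero _ X_ne_zero) ?_
  convert h using 1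
  funext n
  rw [map_pow, aeval_X, shift_pow_apply]

lemma evalAt_monomial {F : Type*} [Field F] (γ : ι → F) (n : ℕ) (μ : ι →₀ ℕ) (H : F[X]) :
    evalAt γ n (MvPolynomial.monomial μ H) = H.eval (n : F) * monom γ μ ^ n := by
  rw [evalAt, MvPolynomial.coe_eval₂Hom, MvPolynomial.eval₂_monomial, monom, ← Finset.prod_pow,
    Finsupp.prod_fintype _ _ (by simp)]
  simp only [coe_evalRingHom]
  congr 1
  exact Finset.prod_congr rfl fun i _ => pow_right_comm _ _ _

lemma exists_forall_norm_eq_one_of_mulIndep (hγ : MulIndep γ) :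
    ∃ N : ℕ, ∀ p : ℕ, N < p → ∀ [Fact p.Prime], ∀ φ : K →+* ℚ_[p], ∀ i, ‖φ (γ i)‖ = 1 := by
  obtain ⟨N, hN⟩ := exists_forall_mem_finset Finset.univ
    (Q := fun i p => ∀ [Fact p.Prime], ∀ φ : K →+* ℚ_[p], ‖φ (γ i)‖ = 1) (fun i _ => by
      obtain ⟨N, hN⟩ := exists_forall_norm_eq_one (hγ.1 i)
      exact ⟨N, fun p hp _ => hN p hp⟩)
  exact ⟨N, fun p hp _ φ i => hN p hp i (Finset.mem_univ i) φ⟩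

lemma isRecurrent_of_evalAt_of_isRelPrime (hγ : MulIndep γ) (hAB : IsRelPrime A B) (hB : B ≠ 0)
    (hc : ∀ n, evalAt γ n B * c n = evalAt γ n A) {M : ℕ} (hM : 1 ≤ M)
    (hcM : ∀ n, |c n| ≤ (M : ℤ) ^ (n + 1)) : IsRecurrent fun n => (c n : ℂ) := by
  obtain ⟨N, hN⟩ := exists_forall_norm_eq_one_of_mulIndep hγ
  obtain ⟨k, hk⟩ := exists_diffOp_eq_zero hcM hM fun x => by
    obtain ⟨P, hP, hx⟩ := exists_primes_ringHom_padic K (N + 5) x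
    refine ⟨P, fun p hp => ?_, hx⟩
    obtain ⟨hlt, hprime, ⟨φ⟩⟩ := hP p hp
    exact ⟨hprime.out, hasDivisibleDifferences_of_evalAt (by omega) φ (hN p (by omega) φ) hγ hB hc⟩
  obtain ⟨μ, H, rfl⟩ := exists_monomial_of_diffOp_eq_zero hγ hAB hB hc hk
  refine isRecurrent_of_eval_mul_eq (K := K) (s := A.support) (H := H)
    (β := fun ν => monom γ ν / monom γ μ)
    (fun ν _ => div_ne_zero (monom_ne_zero hγ.1 ν) (monom_ne_zero hγ.1 μ))
    (by rintro rfl; simp at hB) (P := fun ν => A.coeff ν) fun n => ?_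
  have hμ : monom γ μ ^ n ≠ 0 := pow_ne_zero _ (monom_ne_zero hγ.1 μ)
  apply mul_right_cancel₀ hμ
  have h1 := hc n
  rw [evalAt_monomial, evalAt_eq_sum] at h1
  rw [mul_right_comm, h1, Finset.sum_mul]
  refine Finset.sum_congr rfl fun ν _ => ?_
  rw [div_pow, mul_assoc, div_mul_cancel₀ _ hμ]

/-- An integer sequence that is a quotient of generalized power sums over a number field, with
multiplicatively independent generators and exponential growth, is recurrent. -/
theorem isRecurrent_of_evalAt (hγ : MulIndep γ) (hB : B ≠ 0)
    (hc : ∀ n, evalAt γ n B * c n = evalAt γ n A) {M : ℕ}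
    (hcM : ∀ n, evalAt γ n B ≠ 0 → |c n| ≤ (M : ℤ) ^ (n + 1)) :
    IsRecurrent fun n => (c n : ℂ) := by
  obtain ⟨N, hN⟩ := exists_forall_norm_eq_one_of_mulIndep hγ
  obtain ⟨p, hp, _, ⟨φ⟩⟩ := exists_prime_ringHom_padic K (N + 5)
  obtain ⟨m, hm⟩ := eventually_atTop.1
    (eventually_evalAt_ne_zero (by omega) φ (hN p (by omega) φ) hγ hB)
  have htr : ∀ n f, evalAt γ n (translate γ m f) = evalAt γ (n + m) f := fun n f =>
    evalAt_translate hγ.1 m n (n + m) (by push_cast; rfl) f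
  have hB' : translate γ m B ≠ 0 := fun h => hm (0 + m) (by omega) (by rw [← htr, h, map_zero])
  obtain ⟨A₁, B₁, G, hrel, hA, hB₁⟩ :=
    UniqueFactorizationMonoid.exists_reduced_factors' (translate γ m A) _ hB'
  have hG : ∀ n, evalAt γ n G ≠ 0 := fun n h => hm (n + m) (by omega) (by
    rw [← htr, ← hB₁, map_mul, h, zero_mul])
  refine IsRecurrent.of_shift m (isRecurrent_of_evalAt_of_isRelPrime (c := fun n => c (n + m)) hγ
    hrel (by rintro rfl; simp at hB₁; exact hB' hB₁.symm) (fun n => ?_)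
    (M := (M + 1) ^ (m + 1)) (Nat.one_le_pow _ _ (by omega)) fun n => ?_)
  · apply mul_left_cancel₀ (hG n)
    rw [← mul_assoc, ← map_mul, ← map_mul, hA, hB₁, htr, htr, hc]
  · refine (hcM _ (hm _ (by omega))).trans ?_
    push_cast
    rw [← pow_mul]
    calc (M : ℤ) ^ (n + m + 1) ≤ ((M : ℤ) + 1) ^ (n + m + 1) :=
          pow_le_pow_left₀ (by positivity) (by omega) _
      _ ≤ _ := pow_le_pow_right₀ (by omega) (by nlinarith [Nat.zero_le (m * n)])

end IntegerQuotients

/-! ### Growth and generators -/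

section Growth

variable {f : ℕ → ℚ} {g : ℚ[X]}

lemma apply_add_natDegree_of_aeval_shift (hg : g ≠ 0) (hf : aeval (shift ℚ ℚ) g f = 0) (n : ℕ) :
    f (n + g.natDegree) =
      ∑ i ∈ Finset.range g.natDegree, -(g.coeff i / g.leadingCoeff) * f (n + i) := by
  have h1 := aeval_shift_apply_range le_rfl f n (g := g)
  have hl : g.leadingCoeff ≠ 0 := leadingCoeff_ne_zero.2 hg
  rw [hf, Finset.sum_range_succ, Pi.zero_apply] at h1
  apply mul_left_cancel₀ hl
  rw [Finset.mul_sum]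
  have h2 : ∀ i, g.leadingCoeff * (-(g.coeff i / g.leadingCoeff) * f (n + i)) =
      -(g.coeff i • f (n + i)) := fun i => by rw [smul_eq_mul]; field_simp
  simp only [h2, Finset.sum_neg_distrib]
  rw [eq_neg_iff_add_eq_zero, add_comm]
  exact h1.symm

lemma exists_forall_abs_le_pow (hg : g ≠ 0) (hf : aeval (shift ℚ ℚ) g f = 0) :
    ∃ Q : ℕ, 1 ≤ Q ∧ ∀ n, |f n| ≤ (Q : ℚ) ^ (n + 1) := by
  set d := g.natDegree
  set R : ℚ := ∑ i ∈ Finset.range d, |-(g.coeff i / g.leadingCoeff)|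
  set S : ℚ := ∑ i ∈ Finset.range d, |f i|
  have hR : 0 ≤ R := Finset.sum_nonneg fun _ _ => abs_nonneg _
  have hS : 0 ≤ S := Finset.sum_nonneg fun _ _ => abs_nonneg _
  obtain ⟨Q, hQ⟩ := exists_nat_ge (1 + R + S)
  have hQ1 : (1 : ℚ) ≤ Q := by linarith
  refine ⟨Q, by exact_mod_cast hQ1, fun n => ?_⟩
  induction n using Nat.strong_induction_on with
  | _ n ih =>
  rcases lt_or_ge n d with hn | hn
  · have h1 : |f n| ≤ S :=
      Finset.single_le_sum (f := fun i => |f i|) (fun _ _ => abs_nonneg _) (Finset.mem_range.2 hn)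
    calc |f n| ≤ Q := by linarith
      _ ≤ _ := le_self_pow₀ hQ1 (by omega)
  · obtain ⟨m, rfl⟩ := Nat.exists_eq_add_of_le' hn
    rw [apply_add_natDegree_of_aeval_shift hg hf]
    refine (Finset.abs_sum_le_sum_abs _ _).trans ?_
    calc ∑ i ∈ Finset.range d, |-(g.coeff i / g.leadingCoeff) * f (m + i)|
        ≤ ∑ i ∈ Finset.range d, |-(g.coeff i / g.leadingCoeff)| * (Q : ℚ) ^ (m + d) := by
          refine Finset.sum_le_sum fun i hi => ?_
          have hi := Finset.mem_range.1 hi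
          rw [abs_mul]
          refine mul_le_mul_of_nonneg_left ((ih (m + i) (by omega)).trans ?_) (abs_nonneg _)
          exact pow_le_pow_right₀ hQ1 (by omega)
      _ = R * (Q : ℚ) ^ (m + d) := by rw [← Finset.sum_mul]
      _ ≤ Q * (Q : ℚ) ^ (m + d) := by gcongr; linarith
      _ = _ := by ring

lemma exists_forall_pow_mul_eq_intCast (hg : g ≠ 0) (hf : aeval (shift ℚ ℚ) g f = 0) :
    ∃ Q : ℕ, 1 ≤ Q ∧ ∀ n, ∃ z : ℤ, (Q : ℚ) ^ (n + 1) * f n = z := by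
  set d := g.natDegree
  set r : ℕ → ℚ := fun i => -(g.coeff i / g.leadingCoeff)
  set Q : ℕ := ∏ i ∈ Finset.range d, ((r i).den * (f i).den)
  have hmul : ∀ x : ℚ, x.den ∣ Q → (Q : ℚ) * x ∈ (Int.castRingHom ℚ).range := by
    rintro x ⟨k, hk⟩
    refine ⟨k * x.num, ?_⟩
    rw [hk]
    push_cast
    rw [mul_comm (x.den : ℚ), mul_assoc, Rat.den_mul_eq_num]
    simp
  have hnat : ∀ k : ℕ, (Q : ℚ) ^ k ∈ (Int.castRingHom ℚ).range := fun k => ⟨Q ^ k, by simp⟩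
  have hr : ∀ i < d, (r i).den ∣ Q := fun i hi =>
    (Dvd.intro _ rfl).trans (Finset.dvd_prod_of_mem _ (Finset.mem_range.2 hi))
  have hf' : ∀ i < d, (f i).den ∣ Q := fun i hi =>
    (Dvd.intro_left _ rfl).trans (Finset.dvd_prod_of_mem _ (Finset.mem_range.2 hi))
  suffices h : ∀ n, (Q : ℚ) ^ (n + 1) * f n ∈ (Int.castRingHom ℚ).range by
    refine ⟨Q, Finset.prod_pos fun i _ => Nat.mul_pos (r i).den_pos (f i).den_pos, fun n => ?_⟩
    obtain ⟨z, hz⟩ := h n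
    exact ⟨z, hz.symm⟩
  intro n
  induction n using Nat.strong_induction_on with
  | _ n ih =>
  rcases lt_or_ge n d with hn | hn
  · rw [pow_succ, mul_assoc]
    exact mul_mem (hnat _) (hmul _ (hf' n hn))
  · obtain ⟨m, rfl⟩ := Nat.exists_eq_add_of_le' hn
    rw [apply_add_natDegree_of_aeval_shift hg hf, Finset.mul_sum]
    refine sum_mem fun i hi => ?_
    have hi := Finset.mem_range.1 hi
    have h1 : (Q : ℚ) ^ (m + d + 1) * (r i * f (m + i)) =
        (Q : ℚ) ^ (d - 1 - i) * (Q * r i) * ((Q : ℚ) ^ (m + i + 1) * f (m + i)) := by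
      have : m + d + 1 = (d - 1 - i) + 1 + (m + i + 1) := by omega
      rw [this, pow_add, pow_succ]
      ring
    change (Q : ℚ) ^ (m + d + 1) * (r i * f (m + i)) ∈ _
    rw [h1]
    exact mul_mem (mul_mem (hnat _) (hmul _ (hr i hi))) (ih (m + i) (by omega))

lemma exists_forall_abs_le_pow_of_eq_mul {f' : ℕ → ℚ} {c : ℕ → ℤ} (hg : g ≠ 0)
    (hf : aeval (shift ℚ ℚ) g f = 0) (hf' : aeval (shift ℚ ℚ) g f' = 0)
    (h : ∀ n, f n = c n * f' n) :
    ∃ M : ℕ, 1 ≤ M ∧ ∀ n, f' n ≠ 0 → |c n| ≤ (M : ℤ) ^ (n + 1) := by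
  obtain ⟨Q, hQ, hfQ⟩ := exists_forall_abs_le_pow hg hf
  obtain ⟨Q', hQ', hfQ'⟩ := exists_forall_pow_mul_eq_intCast hg hf'
  refine ⟨Q * Q', Nat.mul_pos hQ hQ', fun n hn => ?_⟩
  obtain ⟨z, hz⟩ := hfQ' n
  have hQ0 : (Q' : ℚ) ^ (n + 1) ≠ 0 := pow_ne_zero _ (by exact_mod_cast (by omega : Q' ≠ 0))
  have hz1 : (1 : ℚ) ≤ |(z : ℚ)| := by
    have : z ≠ 0 := by
      rintro rfl
      simp_all
    exact_mod_cast Int.one_le_abs this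
  have h1 : (|c n| : ℚ) * |(z : ℚ)| = (Q' : ℚ) ^ (n + 1) * |f n| := by
    rw [← hz, h, abs_mul, abs_mul, abs_of_nonneg (by positivity : (0 : ℚ) ≤ (Q' : ℚ) ^ (n + 1))]
    ring
  have h2 : (|c n| : ℚ) ≤ ((Q * Q' : ℕ) : ℚ) ^ (n + 1) := by
    calc (|c n| : ℚ) ≤ |(c n : ℚ)| * |(z : ℚ)| := le_mul_of_one_le_right (abs_nonneg _) hz1
      _ = _ := h1
      _ ≤ (Q' : ℚ) ^ (n + 1) * (Q : ℚ) ^ (n + 1) := by gcongr; exact hfQ n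
      _ = _ := by push_cast; ring
  exact_mod_cast h2

end Growth

section Generators

variable {K : Type*} [Field K]

lemma exists_mulIndep_generators (s : Finset K) (hs : 0 ∉ s) :
    ∃ (D r : ℕ) (γ : Fin r → K), 0 < D ∧ MulIndep γ ∧
      ∀ β ∈ s, ∃ e : Fin r → ℤ, β ^ D = ∏ i, γ i ^ e i := by
  classical
  let T : Set Kˣ := {x | (x : K) ∈ s}
  have hT : T.Finite := s.finite_toSet.preimage Units.val_injective.injOn
  let G := Subgroup.closure T
  have : Group.FG G := (Group.fg_iff_subgroup_fg G).2 ⟨hT.toFinset, by simp [G]⟩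
  obtain ⟨r, ι, _, p, hp, e, ⟨E⟩⟩ :=
    AddCommGroup.equiv_free_prod_directSum_zmod (Additive G)
  let D := ∏ i, p i ^ e i
  let v : Fin r → G := fun i => (E.symm (Finsupp.single i 1, 0)).toMul
  have hv : ∀ x : Fin r →₀ ℤ, E (Additive.ofMul (∏ i, v i ^ x i)) = (x, 0) := by
    intro x
    rw [ofMul_prod, map_sum]
    have h1 : ∀ i, E (Additive.ofMul (v i ^ x i)) = (Finsupp.single i (x i), 0) := fun i => by
      rw [ofMul_zpow, map_zsmul, ofMul_toMul, AddEquiv.apply_symm_apply]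
      simp
    simp only [h1]
    refine Prod.ext ?_ ?_
    · rw [Prod.fst_sum]
      exact Finsupp.univ_sum_single x
    · rw [Prod.snd_sum]
      simp
  have hcoe : ∀ x : Fin r → ℤ, ((∏ i, v i ^ x i : G) : Kˣ) = ∏ i, (v i : Kˣ) ^ x i := by simp
  refine ⟨D, r, fun i => ((v i : Kˣ) : K), Finset.prod_pos fun i _ => pow_pos (hp i).pos _,
    ⟨fun i => Units.ne_zero _, fun x hx => ?_⟩, fun β hβ => ?_⟩
  · have h1 : ∏ i, v i ^ x i = 1 := by
      apply Subtype.coe_injective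
      apply Units.val_injective
      beta_reduce
      rw [hcoe]
      simpa using hx
    have h2 := hv (Finsupp.equivFunOnFinite.symm x)
    simp only [Finsupp.equivFunOnFinite_symm_apply_apply] at h2
    rw [h1, ofMul_one, map_zero] at h2
    have h3 := (Prod.ext_iff.1 h2).1
    funext i
    simpa using (DFunLike.congr_fun h3 i).symm
  · have hβ0 : β ≠ 0 := fun h => hs (h ▸ hβ)
    let b : G := ⟨Units.mk0 β hβ0, Subgroup.subset_closure (by simpa [T] using hβ)⟩
    let x := (E (Additive.ofMul (b ^ D))).1
    have hx : b ^ D = ∏ i, v i ^ x i := by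
      apply Additive.ofMul.injective
      apply E.injective
      rw [hv]
      refine Prod.ext rfl ?_
      rw [ofMul_pow, map_nsmul, Prod.smul_snd]
      ext i
      have h1 : p i ^ e i ∣ D := Finset.dvd_prod_of_mem _ (Finset.mem_univ i)
      obtain ⟨k, hk⟩ := h1
      have h2 : ∀ (m : ℕ) (y : DirectSum ι fun i => ZMod (p i ^ e i)), (m • y) i = m • y i :=
        fun m y => DFinsupp.nsmul_apply m y i
      rw [h2, hk, nsmul_eq_mul, Nat.cast_mul, ZMod.natCast_self, zero_mul, zero_mul]
      rfl
    refine ⟨x, ?_⟩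
    have h1 := congrArg (fun y : G => ((y : Kˣ) : K)) hx
    beta_reduce at h1
    rw [hcoe] at h1
    simpa [b] using h1

/-- Along an arithmetic progression of suitable modulus, generalized power sums are, up to a common
geometric progression, exponential polynomials in independent generators. -/
lemma exists_evalAt_eq (s : Finset K) (hs : 0 ∉ s) :
    ∃ (D r : ℕ) (γ : Fin r → K) (w : K), 0 < D ∧ MulIndep γ ∧ w ≠ 0 ∧
      ∀ (P : K → K[X]) (u : ℕ), ∃ A : MvPolynomial (Fin r) K[X], ∀ v : ℕ,
        evalAt γ v A =
          w ^ v * ∑ β ∈ s, (P β).eval ((u + D * v : ℕ) : K) * β ^ (u + D * v) := by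
  obtain ⟨D, r, γ, hD, hγ, h⟩ := exists_mulIndep_generators s hs
  choose! e he using h
  let M : ℕ := ∑ β ∈ s, ∑ i, (e β i).natAbs
  have hM : ∀ β ∈ s, ∀ i, 0 ≤ e β i + M := fun β hβ i => by
    have h1 : (e β i).natAbs ≤ M :=
      (Finset.single_le_sum (f := fun i => (e β i).natAbs) (fun _ _ => Nat.zero_le _)
        (Finset.mem_univ i)).trans
      (Finset.single_le_sum (f := fun β => ∑ i, (e β i).natAbs) (fun _ _ => Nat.zero_le _) hβ)
    omega
  let E : K → Fin r →₀ ℕ := fun β => Finsupp.equivFunOnFinite.symm fun i => (e β i + M).toNat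
  have hE : ∀ β ∈ s, monom γ (E β) = (∏ i, γ i ^ M) * β ^ D := fun β hβ => by
    rw [he β hβ, monom, ← Finset.prod_mul_distrib]
    refine Finset.prod_congr rfl fun i _ => ?_
    rw [← zpow_natCast, ← zpow_natCast, ← zpow_add₀ (hγ.1 i)]
    congr 1
    simp only [E, Finsupp.equivFunOnFinite_symm_apply_apply]
    rw [Int.toNat_of_nonneg (hM β hβ i), add_comm]
  refine ⟨D, r, γ, ∏ i, γ i ^ M, hD, hγ,
    Finset.prod_ne_zero_iff.2 fun i _ => pow_ne_zero _ (hγ.1 i), fun P u =>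
    ⟨∑ β ∈ s, MvPolynomial.monomial (E β) (C (β ^ u) * (P β).comp (C (u : K) + C (D : K) * X)),
    fun v => ?_⟩⟩
  rw [map_sum, Finset.mul_sum]
  refine Finset.sum_congr rfl fun β hβ => ?_
  rw [evalAt_monomial, hE β hβ, mul_pow, pow_add, pow_mul]
  simp only [eval_mul, eval_C, eval_comp, eval_add, eval_X, Nat.cast_add, Nat.cast_mul]
  ring

end Generators

/-! ### The theorem -/

section Assembly

lemma exists_numberField_sum_eval_mul_pow {χ : ℚ[X]} (hχ : χ.coeff 0 ≠ 0) :
    ∃ (K : Type) (_ : Field K) (_ : NumberField K) (s : Finset K), 0 ∉ s ∧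
      ∀ (t : ℕ) (f : ℕ → ℚ), aeval (shift ℚ ℚ) (χ ^ t) f = 0 →
        ∃ P : K → K[X], ∀ n : ℕ, (f n : K) = ∑ β ∈ s, (P β).eval (n : K) * β ^ n := by
  classical
  let K := χ.SplittingField
  have : NumberField K := NumberField.of_module_finite ℚ K
  have hχ0 : χ ≠ 0 := by rintro rfl; simp at hχ
  let χK := χ.map (algebraMap ℚ K)
  have hχK : χK ≠ 0 := by simpa [χK] using hχ0
  have h0 : (0 : K) ∉ χK.roots.toFinset := by
    rw [Multiset.mem_toFinset, mem_roots hχK, IsRoot.def, ← coeff_zero_eq_eval_zero]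
    simpa [χK] using hχ
  refine ⟨K, inferInstance, this, χK.roots.toFinset, h0, fun t f hf => ?_⟩
  have hdvd : χK ^ t ∣ C (χK.leadingCoeff ^ t) *
      ∏ β ∈ χK.roots.toFinset, (X - C β) ^ (χK.natDegree * t) := by
    have h1 : χK = C χK.leadingCoeff * ∏ β ∈ χK.roots.toFinset, (X - C β) ^ χK.roots.count β := by
      have h2 : χK.Splits := SplittingField.splits χ
      conv_lhs => rw [h2.eq_prod_roots, Finset.prod_multiset_map_count]
    conv_lhs => rw [h1]
    rw [mul_pow, ← C_pow, ← Finset.prod_pow]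
    refine mul_dvd_mul_left _ (Finset.prod_dvd_prod_of_dvd _ _ fun β _ => ?_)
    rw [← pow_mul]
    refine pow_dvd_pow _ (Nat.mul_le_mul_right _ ?_)
    exact (Multiset.count_le_card _ _).trans (card_roots' _)
  have hf' : aeval (shift K K) (χK ^ t) (fun n => (f n : K)) = 0 := by
    funext n
    rw [← Polynomial.map_pow, aeval_shift_map]
    have := aeval_shift_comp (Algebra.linearMap ℚ K) (χ ^ t) f n
    rw [hf] at this
    simpa using this
  refine exists_sum_eval_mul_pow_of_aeval_shift _ h0 (χK.natDegree * t) ?_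
  obtain ⟨k, hk⟩ := hdvd
  have h2 : aeval (shift K K) (C (χK.leadingCoeff ^ t) *
      ∏ β ∈ χK.roots.toFinset, (X - C β) ^ (χK.natDegree * t)) (fun n => (f n : K)) = 0 := by
    rw [hk, mul_comm, map_mul, Module.End.mul_apply, hf', map_zero]
  rw [map_mul, aeval_C, Module.End.mul_apply, Module.algebraMap_end_apply] at h2
  exact (smul_eq_zero.1 h2).resolve_left (pow_ne_zero _ (leadingCoeff_ne_zero.2 hχK))

/-- If `c` is an integer sequence for which, at every index, there is a rational solution
`a' = c b'` of a fixed recurrence (up to multiplicity) with `b'` nonzero at that index, then `c` is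
recurrent. -/
lemma isRecurrent_of_rational_specializations {χ : ℚ[X]} (hχ : χ.coeff 0 ≠ 0) {c : ℕ → ℤ}
    (h : ∀ n, ∃ (t : ℕ) (a b : ℕ → ℚ), (∀ k, a k = c k * b k) ∧ b n ≠ 0 ∧
      aeval (shift ℚ ℚ) (χ ^ t) a = 0 ∧ aeval (shift ℚ ℚ) (χ ^ t) b = 0) :
    IsRecurrent fun n => (c n : ℂ) := by
  obtain ⟨K, _, _, s, hs, hK⟩ := exists_numberField_sum_eval_mul_pow hχ
  obtain ⟨D, r, γ, w, hD, hγ, hw, hA⟩ := exists_evalAt_eq s hs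
  refine IsRecurrent.of_residue_classes hD fun u _ => ?_
  obtain ⟨t, a, b, hab, hbu, ha, hb⟩ := h u
  obtain ⟨Pa, hPa⟩ := hK t a ha
  obtain ⟨Pb, hPb⟩ := hK t b hb
  obtain ⟨A, hA'⟩ := hA Pa u
  obtain ⟨B, hB'⟩ := hA Pb u
  simp only [← hPa, ← hPb] at hA' hB'
  have hχt : χ ^ t ≠ 0 := pow_ne_zero _ (by rintro rfl; simp at hχ)
  obtain ⟨M, hM, hcM⟩ := exists_forall_abs_le_pow_of_eq_mul hχt ha hb hab
  refine isRecurrent_of_evalAt (c := fun v => c (u + D * v)) (A := A) (B := B)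
    (M := M ^ (u + D + 1)) hγ ?_ (fun v => ?_) fun v hv => ?_
  · rintro rfl
    have h0 := hB' 0
    rw [map_zero] at h0
    exact hbu (by simpa using h0.symm)
  · rw [hA', hB', hab]
    push_cast
    ring
  · refine (hcM _ fun h0 => hv (by rw [hB', h0]; simp)).trans ?_
    push_cast
    rw [← pow_mul]
    refine pow_le_pow_right₀ (by exact_mod_cast hM) ?_
    nlinarith [Nat.zero_le (u * v), Nat.zero_le v]

end Assembly

end HadamardQuotient

open HadamardQuotient Filter in
/-- Hadamard quotient theorem (van der Poorten): if `∑ aₙ xⁿ` and `∑ bₙ xⁿ` represent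
rational functions, `bₙ ≠ 0` for all `n`, and every quotient `aₙ / bₙ` is a rational
integer, then `∑ (aₙ / bₙ) xⁿ` also represents a rational function. -/
theorem hadamard_quotient (a b : ℕ → ℂ) (hra : RepresentsRational a)
    (hrb : RepresentsRational b) (hb : ∀ n, b n ≠ 0)
    (hint : ∀ n, ∃ z : ℤ, a n / b n = (z : ℂ)) :
    RepresentsRational (fun n => a n / b n) := by
  choose c hc using hint
  simp only [hc]
  obtain ⟨χa, hχa, hχa0, ha⟩ := hra.exists_monic
  obtain ⟨χb, hχb, hχb0, hb'⟩ := hrb.exists_monic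
  obtain ⟨m, hm⟩ := eventually_atTop.1
    ((aeval_shift_eventually_zero_of_dvd (dvd_mul_right χa χb) ha).and
      (aeval_shift_eventually_zero_of_dvd (dvd_mul_left χb χa) hb'))
  have hshift : ∀ (g : Polynomial ℂ) (f : ℕ → ℂ) (n : ℕ),
      Polynomial.aeval (shift ℂ ℂ) g (fun n => f (n + m)) n =
        Polynomial.aeval (shift ℂ ℂ) g f (n + m) := fun g f n => by
    simp only [aeval_shift_apply, add_right_comm]
  obtain ⟨χ, hχ, h⟩ := exists_rational_specialization (a := fun n => a (n + m))
    (b := fun n => b (n + m)) (c := fun n => c (n + m)) (hχa.mul hχb)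
    (by rw [Polynomial.mul_coeff_zero]; exact mul_ne_zero hχa0 hχb0)
    (by funext n; rw [hshift]; exact (hm _ (by omega)).1)
    (by funext n; rw [hshift]; exact (hm _ (by omega)).2)
    (fun n => by rw [← hc, div_mul_cancel₀ _ (hb _)]) (fun n => hb _)
  exact (IsRecurrent.of_shift m (isRecurrent_of_rational_specializations hχ h)).representsRational
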